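/- arXiv:math/9403213 — 2 statements merged into one kernel-verified Lean document; each statement's English description precedes it below -/
import Mathlib

section
/- Let μ ∈ M(0,1). Then for all sufficiently large n, the quantity 1/κ_n² := ∫ Q_n²(x) r(x) dμ(x) is nonzero, and for such n the polynomials Q_n satisfy the three-term recurrence Q_{n+1}(z) = (z − β_n) Q_n(z) − α_n² Q_{n−1}(z), where β_n = κ_n² ∫ x Q_n²(x) r(x) dμ(x) and α_n² = κ_{n−1}²/κ_n²; moreover lim_{n→∞} β_n = 0 and lim_{n→∞} α_n² = 1/4. -/
open MeasureTheory Polynomial Filter Topology Set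
open scoped Classical

/-- The branch of `√(z²-1)` on `ℂ ∖ [-1,1]` that is positive for `z > 1`. -/
noncomputable def sqrtB (z : ℂ) : ℂ := z * (1 - 1 / z ^ 2) ^ ((1 : ℂ) / 2)

/-- `φ(z) = z + √(z²-1)`, the conformal map of `ℂ ∖ [-1,1]` onto the exterior
of the closed unit disk. -/
noncomputable def phi (z : ℂ) : ℂ := z + sqrtB z

/-- The support of a measure on `ℝ`: points all of whose neighborhoods have
positive measure. -/
def msupp (μ : Measure ℝ) : Set ℝ := {x | ∀ U ∈ nhds x, μ U ≠ 0}

/-- The support `S_μ`, viewed as a subset of `ℂ`. -/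
def msuppC (μ : Measure ℝ) : Set ℂ := Complex.ofReal '' msupp μ

/-- `l` is the sequence of orthonormal polynomials of the measure `μ`:
degree `n`, positive leading coefficient, `∫ l_m l_n dμ = δ_{mn}`. -/
structure IsOrthonormalPolys (μ : Measure ℝ) (l : ℕ → Polynomial ℝ) : Prop where
  natDegree_eq : ∀ n, (l n).natDegree = n
  leadingCoeff_pos : ∀ n, 0 < (l n).leadingCoeff
  orthonormal : ∀ m n, ∫ x, (l m).eval x * (l n).eval x ∂μ = if m = n then 1 else 0

/-- `μ ∈ M(0,1)`: the recurrence coefficients of the orthonormal polynomials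
`l_n` satisfy `a_n → 1/2`, `b_n → 0`, where
`x·l_n = a_{n+1} l_{n+1} + b_n l_n + a_n l_{n-1}`. -/
structure IsM01 (μ : Measure ℝ) (l : ℕ → Polynomial ℝ) (a b : ℕ → ℝ) : Prop where
  onp : IsOrthonormalPolys μ l
  recurrence_zero : X * l 0 = a 1 • l 1 + b 0 • l 0
  recurrence : ∀ n : ℕ,
    X * l (n + 1) = a (n + 2) • l (n + 2) + b (n + 1) • l (n + 1) + a (n + 1) • l n
  tendsto_a : Tendsto a atTop (nhds (1 / 2))
  tendsto_b : Tendsto b atTop (nhds 0)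

/-- The rational function `r = S/T` with
`S(z) = ∏ (z-c_i)^{A_i}`, `T(z) = ∏ (z-d_j)^{B_j}`, evaluated on the real line. -/
noncomputable def ratFn {h ℓ : ℕ} (c : Fin h → ℂ) (d : Fin ℓ → ℂ)
    (A : Fin h → ℕ) (B : Fin ℓ → ℕ) (x : ℝ) : ℂ :=
  (∏ i, ((x : ℂ) - c i) ^ (A i)) / ∏ j, ((x : ℂ) - d j) ^ (B j)

/-- `Q` is the monic polynomial of least degree, not identically zero, with
`∫ p(x) Q(x) r(x) dμ(x) = 0` for every polynomial `p` of degree `≤ n-1`. -/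
def IsQPoly (μ : Measure ℝ) (r : ℝ → ℂ) (n : ℕ) (Q : Polynomial ℂ) : Prop :=
  Q.Monic ∧
  (∀ p : Polynomial ℂ, p.degree < n →
    ∫ x, p.eval (x : ℂ) * Q.eval (x : ℂ) * r x ∂μ = 0) ∧
  (∀ q : Polynomial ℂ, q ≠ 0 →
    (∀ p : Polynomial ℂ, p.degree < n →
      ∫ x, p.eval (x : ℂ) * q.eval (x : ℂ) * r x ∂μ = 0) →
    Q.degree ≤ q.degree)

/-!
In the Hilbert basis `l_n` of `L²(μ)`, multiplication by `x` is the Jacobi matrix, a compact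
perturbation of `(V + V*) / 2` with `V` the unilateral shift. Hence multiplication by `x - c`, for
`c` outside the support, is an invertible Toeplitz-plus-compact operator whose symbol has a
Wiener–Hopf factorization. Since `V*ⁿ K Vⁿ → 0` for compact `K`, the lower right corners
`V*ⁿ Z Vⁿ` of the operator `Z` of multiplication by `1 / r` converge to an invertible limit.

The orthogonality of `Q_n` says that `r Q_n` lies in the range of `Vⁿ`, and the degree of `Q_n` says
that `V*ⁿ Q_n` is a multiple of the vector `e 0 = l_0`. So `V*ⁿ (r Q_n)` solves a linear
system whose matrix is the `n`th corner of `Z` and whose right-hand side is a multiple of `e 0`.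
The norms `∫ Q_n² r dμ` and the two leading coefficients of `Q_n` are read off this solution, and
its convergence gives the limits of the recurrence coefficients.
-/

open scoped InnerProductSpace

section CompactOperators

variable {𝕜 E F G : Type*} [RCLike 𝕜] [NormedAddCommGroup E] [NormedSpace 𝕜 E]
  [NormedAddCommGroup F] [NormedSpace 𝕜 F] [NormedAddCommGroup G] [NormedSpace 𝕜 G]

theorem isCompactOperator_smulRight (f : StrongDual 𝕜 E) (u : F) :
    IsCompactOperator (f.smulRight u) :=
  (isCompactOperator_of_locallyCompactSpace_dom f).clm_comp
    (ContinuousLinearMap.toSpanSingleton 𝕜 u)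

theorem isCompactOperator_sum {ι : Type*} (s : Finset ι) {T : ι → E →L[𝕜] F}
    (hT : ∀ i ∈ s, IsCompactOperator (T i)) : IsCompactOperator (∑ i ∈ s, T i : E →L[𝕜] F) :=
  sum_mem (S := compactOperator (RingHom.id 𝕜) E F) hT

/-- Strong convergence of a bounded sequence is uniform on the relatively compact image of the
unit ball under `K`. -/
theorem tendsto_comp_of_isCompactOperator {T : ℕ → F →L[𝕜] G} {C : ℝ} (hC : ∀ n, ‖T n‖ ≤ C)
    (hT : ∀ y, Tendsto (fun n => T n y) atTop (𝓝 0)) {K : E →L[𝕜] F} (hK : IsCompactOperator K) :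
    Tendsto (fun n => (T n).comp K) atTop (𝓝 0) := by
  have hC0 : 0 ≤ C := (norm_nonneg _).trans (hC 0)
  rw [Metric.tendsto_atTop]
  intro ε hε
  set δ := ε / (2 * (C + 1)) with hδ_def
  have hδ : 0 < δ := by positivity
  have hε' : C * δ + δ < ε := by rw [hδ_def]; field_simp; linarith
  obtain ⟨S, hS, himage⟩ := hK.image_closedBall_subset_compact (f := (K : E →ₗ[𝕜] F)) 1
  obtain ⟨t, -, ht, hcover⟩ := hS.finite_cover_balls hδ
  have hsmall : ∀ᶠ n in atTop, ∀ y ∈ t, ‖T n y‖ < δ :=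
    (Filter.eventually_all_finite ht).2 fun y _ =>
      (tendsto_zero_iff_norm_tendsto_zero.mp (hT y)).eventually_lt_const hδ
  obtain ⟨N, hN⟩ := eventually_atTop.mp hsmall
  refine ⟨N, fun n hn => ?_⟩
  rw [dist_zero_right]
  refine lt_of_le_of_lt
    (ContinuousLinearMap.opNorm_le_of_unit_norm (by positivity) fun x hx => ?_) hε'
  obtain ⟨y, hy, hxy⟩ := Set.mem_iUnion₂.mp (hcover (himage ⟨x, by simp [hx], rfl⟩))
  rw [Metric.mem_ball, dist_eq_norm] at hxy
  calc ‖T n (K x)‖ = ‖T n (K x - y) + T n y‖ := by rw [← map_add, sub_add_cancel]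
    _ ≤ C * δ + δ := (norm_add_le _ _).trans
        (add_le_add ((T n).le_of_opNorm_le_of_le (hC n) hxy.le) (hN n hn y hy).le)

end CompactOperators

section OrthonormalSequences

variable {𝕜 H : Type*} [RCLike 𝕜] [NormedAddCommGroup H] [InnerProductSpace 𝕜 H]

theorem norm_sum_inner_smul_le {ι : Type*} {v : ι → H} (hv : Orthonormal 𝕜 v) (s : Finset ι)
    {c : ι → 𝕜} {C : ℝ} (hC0 : 0 ≤ C) (hC : ∀ i ∈ s, ‖c i‖ ≤ C) (x : H) :
    ‖∑ i ∈ s, ⟪v i, x⟫_𝕜 • c i • v i‖ ≤ C * ‖x‖ := by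
  have hsq : ‖∑ i ∈ s, ⟪v i, x⟫_𝕜 • c i • v i‖ ^ 2 = ∑ i ∈ s, ‖⟪v i, x⟫_𝕜 * c i‖ ^ 2 := by
    simpa [smul_smul] using hv.orthogonalFamily.norm_sum (fun i => ⟪v i, x⟫_𝕜 * c i) s
  refine le_of_sq_le_sq ?_ (by positivity)
  calc ‖∑ i ∈ s, ⟪v i, x⟫_𝕜 • c i • v i‖ ^ 2 = ∑ i ∈ s, ‖⟪v i, x⟫_𝕜 * c i‖ ^ 2 := hsq
    _ ≤ ∑ i ∈ s, C ^ 2 * ‖⟪v i, x⟫_𝕜‖ ^ 2 := by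
        refine Finset.sum_le_sum fun i hi => ?_
        rw [norm_mul, mul_pow, mul_comm]
        gcongr
        exact hC i hi
    _ = C ^ 2 * ∑ i ∈ s, ‖⟪v i, x⟫_𝕜‖ ^ 2 := by rw [Finset.mul_sum]
    _ ≤ (C * ‖x‖) ^ 2 := by
        rw [mul_pow]
        gcongr
        exact hv.sum_inner_products_le x

/-- The partial sums of `∑ c k ⟪v k, ·⟫_𝕜 v k` have finite rank and, by Bessel's inequality, form a
Cauchy sequence in operator norm. -/
theorem exists_isCompactOperator_diagonal [CompleteSpace H] {v : ℕ → H} (hv : Orthonormal 𝕜 v)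
    {c : ℕ → 𝕜} (hc : Tendsto c atTop (𝓝 0)) :
    ∃ D : H →L[𝕜] H, IsCompactOperator D ∧ ∀ k, D (v k) = c k • v k := by
  let S (n : ℕ) : H →L[𝕜] H :=
    ∑ k ∈ Finset.range n, (innerSL 𝕜 (v k)).smulRight (c k • v k)
  have hcauchy : CauchySeq S := by
    refine Metric.cauchySeq_iff'.2 fun ε hε => ?_
    obtain ⟨N, hN⟩ := Metric.tendsto_atTop.mp hc (ε / 2) (half_pos hε)
    refine ⟨N, fun n hn => ?_⟩
    rw [dist_eq_norm, ← Finset.sum_Ico_eq_sub _ hn]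
    refine (ContinuousLinearMap.opNorm_le_bound _ (half_pos hε).le fun x => ?_).trans_lt
      (half_lt_self hε)
    have hc_le : ∀ k ∈ Finset.Ico N n, ‖c k‖ ≤ ε / 2 := fun k hk => by
      simpa using (hN k (Finset.mem_Ico.mp hk).1).le
    simpa using norm_sum_inner_smul_le hv _ (half_pos hε).le hc_le x
  obtain ⟨D, hD⟩ := cauchySeq_tendsto_of_complete hcauchy
  refine ⟨D, isCompactOperator_of_tendsto hD (Eventually.of_forall fun n =>
    isCompactOperator_sum _ fun k _ => isCompactOperator_smulRight _ _), fun k => ?_⟩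
  have hconst : ∀ᶠ n in atTop, S n (v k) = c k • v k := by
    filter_upwards [eventually_gt_atTop k] with n hn
    simp [S, orthonormal_iff_ite.mp hv, hn]
  exact tendsto_nhds_unique ((continuous_eval_const (v k)).continuousAt.tendsto.comp hD)
    (tendsto_const_nhds.congr' (hconst.mono fun n hn => hn.symm))

end OrthonormalSequences

section UnilateralShift

variable {𝕜 H : Type*} [RCLike 𝕜] [NormedAddCommGroup H] [InnerProductSpace 𝕜 H]
  (e : HilbertBasis ℕ 𝕜 H)

theorem ext_inner_hilbertBasis {f g : H} (h : ∀ k, ⟪e k, f⟫_𝕜 = ⟪e k, g⟫_𝕜) : f = g :=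
  e.repr.injective <| lp.ext <| funext fun k => by simpa only [e.repr_apply_apply] using h k

theorem clm_ext_hilbertBasis {S T : H →L[𝕜] H} (h : ∀ k, S (e k) = T (e k)) : S = T :=
  ContinuousLinearMap.ext_on
    (Submodule.dense_iff_topologicalClosure_eq_top.mpr e.dense_span) fun _ ⟨k, hk⟩ => hk ▸ h k

theorem inner_hilbertBasis (i j : ℕ) : ⟪e i, e j⟫_𝕜 = if i = j then 1 else 0 :=
  orthonormal_iff_ite.mp e.orthonormal i j

variable [CompleteSpace H]

/-- The unilateral shift `e k ↦ e (k + 1)` of a Hilbert basis. Its adjoint, the backward shift, is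
written `star (unilateralShift e)`. -/
noncomputable def unilateralShift : H →L[𝕜] H :=
  ((e.orthonormal.comp (· + 1) (add_left_injective 1)).orthogonalFamily.linearIsometry.comp
    e.repr.toLinearIsometry).toContinuousLinearMap

local notation "V" => unilateralShift e

@[simp]
theorem unilateralShift_apply_basis (k : ℕ) : V (e k) = e (k + 1) := by
  simp [unilateralShift, e.repr_self]

theorem norm_unilateralShift_apply (f : H) : ‖V f‖ = ‖f‖ := by
  simp [unilateralShift]

theorem norm_unilateralShift_pow_apply (n : ℕ) (f : H) : ‖(V ^ n) f‖ = ‖f‖ := by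
  induction n with
  | zero => simp
  | succ n ih => rw [pow_succ', mul_apply_eq_comp, norm_unilateralShift_apply, ih]

theorem norm_unilateralShift_pow_le (n : ℕ) : ‖V ^ n‖ ≤ 1 :=
  ContinuousLinearMap.opNorm_le_bound _ zero_le_one fun f => by
    rw [norm_unilateralShift_pow_apply, one_mul]

theorem norm_star_unilateralShift_pow_le (n : ℕ) : ‖star V ^ n‖ ≤ 1 := by
  rw [← star_pow, ContinuousLinearMap.star_eq_adjoint, LinearIsometryEquiv.norm_map]
  exact norm_unilateralShift_pow_le e n

theorem star_unilateralShift_pow_mul (n : ℕ) : star V ^ n * V ^ n = 1 := by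
  rw [← star_pow]
  exact (ContinuousLinearMap.norm_map_iff_adjoint_comp_self _).mp
    (norm_unilateralShift_pow_apply e n)

theorem star_unilateralShift_mul : star V * V = 1 := by
  simpa using star_unilateralShift_pow_mul e 1

theorem inner_star_unilateralShift_pow_left (n : ℕ) (f g : H) :
    ⟪(star V ^ n) f, g⟫_𝕜 = ⟪f, (V ^ n) g⟫_𝕜 := by
  rw [← star_pow]
  exact ContinuousLinearMap.adjoint_inner_left _ _ _

theorem inner_star_unilateralShift_pow_right (n : ℕ) (f g : H) :
    ⟪f, (star V ^ n) g⟫_𝕜 = ⟪(V ^ n) f, g⟫_𝕜 := by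
  rw [← star_pow]
  exact ContinuousLinearMap.adjoint_inner_right _ _ _

@[simp]
theorem unilateralShift_pow_apply_basis (n k : ℕ) : (V ^ n) (e k) = e (n + k) := by
  induction n with
  | zero => simp
  | succ n ih => simp [pow_succ', ih, add_right_comm]

theorem star_unilateralShift_pow_apply_basis (n k : ℕ) :
    (star V ^ n) (e k) = if n ≤ k then e (k - n) else 0 := by
  refine ext_inner_hilbertBasis e fun j => ?_
  rw [inner_star_unilateralShift_pow_right, unilateralShift_pow_apply_basis, inner_hilbertBasis]
  by_cases hnk : n ≤ k
  · rw [if_pos hnk, inner_hilbertBasis]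
    exact if_congr (by omega) rfl rfl
  · rw [if_neg hnk, if_neg (by omega), inner_zero_right]

theorem unilateralShift_pow_star_pow_apply (n : ℕ) (f : H) :
    (V ^ n) ((star V ^ n) f) = f - ∑ k ∈ Finset.range n, ⟪e k, f⟫_𝕜 • e k := by
  refine ext_inner_hilbertBasis e fun j => ?_
  rw [← inner_star_unilateralShift_pow_left, star_unilateralShift_pow_apply_basis, inner_sub_right,
    inner_sum]
  split_ifs with h
  · rw [inner_star_unilateralShift_pow_right, unilateralShift_pow_apply_basis]
    simp [inner_smul_right, inner_hilbertBasis, h.not_gt, Nat.add_sub_cancel' h]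
  · simp [inner_smul_right, inner_hilbertBasis, not_le.mp h]

theorem one_sub_unilateralShift_mul_star :
    1 - V * star V = (innerSL 𝕜 (e 0)).smulRight (e 0) := by
  ext f
  have hrange : V (star V f) = f - ⟪e 0, f⟫_𝕜 • e 0 := by
    simpa using unilateralShift_pow_star_pow_apply e 1 f
  simp [hrange]

theorem tendsto_star_unilateralShift_pow_apply (f : H) :
    Tendsto (fun n => (star V ^ n) f) atTop (𝓝 0) := by
  rw [tendsto_zero_iff_norm_tendsto_zero]
  have htail : Tendsto (fun n => f - ∑ k ∈ Finset.range n, ⟪e k, f⟫_𝕜 • e k) atTop (𝓝 0) := by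
    simpa [e.repr_apply_apply] using (e.hasSum_repr f).tendsto_sum_nat.const_sub f
  simpa only [← unilateralShift_pow_star_pow_apply, norm_unilateralShift_pow_apply, norm_zero]
    using htail.norm

theorem eq_smul_of_star_unilateralShift_eq_zero {f : H} (hf : star V f = 0) :
    f = ⟪e 0, f⟫_𝕜 • e 0 := by
  have hrange := unilateralShift_pow_star_pow_apply e 1 f
  rw [pow_one, pow_one, hf, map_zero] at hrange
  simpa using sub_eq_zero.mp hrange.symm

/-- The truncation of `T` to the span of `e n, e (n + 1), …`, transported back by the shift: its
matrix is that of `T` with the first `n` rows and columns deleted. -/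
noncomputable def compression (n : ℕ) (T : H →L[𝕜] H) : H →L[𝕜] H := star V ^ n * T * V ^ n

theorem compression_add (n : ℕ) (S T : H →L[𝕜] H) :
    compression e n (S + T) = compression e n S + compression e n T := by
  simp only [compression, mul_add, add_mul]

theorem compression_mul_of_commute_right {T F : H →L[𝕜] H} (hF : Commute F V) (n : ℕ) :
    compression e n (T * F) = compression e n T * F := by
  simp only [compression, mul_assoc, (hF.pow_right n).eq]

theorem compression_mul_of_commute_left {G T : H →L[𝕜] H} (hG : Commute G (star V)) (n : ℕ) :
    compression e n (G * T) = G * compression e n T := by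
  simp only [compression, ← mul_assoc, (hG.pow_right n).eq]

theorem compression_of_commute {F : H →L[𝕜] H} (hF : Commute F V) (n : ℕ) :
    compression e n F = F := by
  rw [compression, mul_assoc, (hF.pow_right n).eq, ← mul_assoc, star_unilateralShift_pow_mul,
    one_mul]

theorem tendsto_compression_of_isCompactOperator {K : H →L[𝕜] H} (hK : IsCompactOperator K) :
    Tendsto (fun n => compression e n K) atTop (𝓝 0) := by
  have hstar := tendsto_comp_of_isCompactOperator (norm_star_unilateralShift_pow_le e)
    (tendsto_star_unilateralShift_pow_apply e) hK
  refine squeeze_zero_norm (fun n => ?_) (tendsto_zero_iff_norm_tendsto_zero.mp hstar)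
  exact (norm_mul_le _ _).trans
    (mul_le_of_le_one_right (norm_nonneg _) (norm_unilateralShift_pow_le e n))

end UnilateralShift

section CalkinAlgebra

variable (𝕜 E : Type*) [RCLike 𝕜] [NormedAddCommGroup E] [NormedSpace 𝕜 E]

/-- The compact operators as a two-sided ideal of the algebra of bounded operators. -/
def compactIdeal : TwoSidedIdeal (E →L[𝕜] E) :=
  .mk' {T | IsCompactOperator T} isCompactOperator_zero (fun hS hT => hS.add hT)
    (fun hT => hT.neg) (fun {S _} hT => hT.clm_comp S) (fun {_ S} hT => hT.comp_clm S)

/-- The Calkin algebra: bounded operators modulo compact operators. -/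
abbrev CalkinAlgebra : Type _ := (compactIdeal 𝕜 E).ringCon.Quotient

variable {𝕜 E}

/-- The projection of a bounded operator to the Calkin algebra. -/
def toCalkin : (E →L[𝕜] E) →ₐ[𝕜] CalkinAlgebra 𝕜 E := (compactIdeal 𝕜 E).ringCon.mkₐ 𝕜

theorem toCalkin_eq_iff {S T : E →L[𝕜] E} :
    toCalkin S = toCalkin T ↔ IsCompactOperator (S - T : E →L[𝕜] E) := by
  refine (compactIdeal 𝕜 E).ringCon.eq.trans ?_
  rw [TwoSidedIdeal.rel_iff]
  exact TwoSidedIdeal.mem_mk' ..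

/-- The bicommutant of the image of `T` in the Calkin algebra, a commutative algebra that is
closed under inversion. -/
def essentialBicommutant (T : E →L[𝕜] E) : Subalgebra 𝕜 (CalkinAlgebra 𝕜 E) :=
  .centralizer 𝕜 (Subalgebra.centralizer 𝕜 {toCalkin T} : Set (CalkinAlgebra 𝕜 E))

variable {T : E →L[𝕜] E}

theorem toCalkin_mem_essentialBicommutant : toCalkin T ∈ essentialBicommutant T :=
  (Subalgebra.mem_centralizer_iff 𝕜).mpr fun _ hx =>
    ((Subalgebra.mem_centralizer_iff 𝕜).mp hx _ rfl).symm

theorem commute_of_mem_essentialBicommutant {x y : CalkinAlgebra 𝕜 E}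
    (hx : x ∈ essentialBicommutant T) (hy : y ∈ essentialBicommutant T) : Commute x y :=
  Set.centralizer_centralizer_comm_of_comm (by simp) x hx y hy

theorem inv_mem_essentialBicommutant {u : (CalkinAlgebra 𝕜 E)ˣ}
    (hu : ↑u ∈ essentialBicommutant T) : ↑u⁻¹ ∈ essentialBicommutant T :=
  (Subalgebra.mem_centralizer_iff 𝕜).mpr fun x hx =>
    Commute.units_inv_right ((Subalgebra.mem_centralizer_iff 𝕜).mp hu x hx)

/-- The invertible operators that commute with `S` and belong to the essential bicommutant of
`T`. -/
def commutingUnits (S T : E →L[𝕜] E) : Subgroup (E →L[𝕜] E)ˣ where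
  carrier := {U | Commute (U : E →L[𝕜] E) S ∧ toCalkin (U : E →L[𝕜] E) ∈ essentialBicommutant T}
  one_mem' := ⟨by simp, by simp [one_mem]⟩
  mul_mem' hF hG := ⟨by simpa using hF.1.mul_left hG.1, by simpa using mul_mem hF.2 hG.2⟩
  inv_mem' {U} hU := ⟨hU.1.units_inv_left,
    inv_mem_essentialBicommutant (u := Units.map (toCalkin : _ →ₐ[𝕜] _).toMonoidHom U) hU.2⟩

theorem smul_one_mem_commutingUnits (S T : E →L[𝕜] E) {s : 𝕜} (hs : s ≠ 0) :
    ∃ U ∈ commutingUnits S T, (U : E →L[𝕜] E) = s • 1 :=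
  ⟨Units.mk0 s hs • 1, ⟨(Commute.one_left S).smul_left _, by
    simpa using Subalgebra.smul_mem _ (one_mem _) s⟩, rfl⟩

theorem one_sub_smul_mem_commutingUnits [CompleteSpace E] {S : E →L[𝕜] E} (hS : ‖S‖ ≤ 1)
    (hmem : toCalkin S ∈ essentialBicommutant T) {w : 𝕜} (hw : ‖w‖ < 1) :
    ∃ F ∈ commutingUnits S T, (F : E →L[𝕜] E) = 1 - w • S := by
  have hlt : ‖w • S‖ < 1 := by
    rw [norm_smul]
    exact (mul_le_of_le_one_right (norm_nonneg w) hS).trans_lt hw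
  refine ⟨Units.oneSub _ hlt, ⟨?_, ?_⟩, Units.val_oneSub _ _⟩
  · exact (Commute.one_left S).sub_left ((Commute.refl S).smul_left w)
  · simpa using sub_mem (one_mem _) (Subalgebra.smul_mem _ hmem w)

end CalkinAlgebra

section WienerHopf

variable {𝕜 H : Type*} [RCLike 𝕜] [NormedAddCommGroup H] [InnerProductSpace 𝕜 H]
  [CompleteSpace H] (e : HilbertBasis ℕ 𝕜 H)

local notation "V" => unilateralShift e

theorem toCalkin_unilateralShift_mul_star : toCalkin V * toCalkin (star V) = 1 := by
  rw [← map_mul, eq_comm, ← map_one toCalkin, toCalkin_eq_iff, one_sub_unilateralShift_mul_star]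
  exact isCompactOperator_smulRight _ _

theorem toCalkin_star_mem_essentialBicommutant : toCalkin (star V) ∈ essentialBicommutant V :=
  inv_mem_essentialBicommutant (u := ⟨toCalkin V, toCalkin (star V),
    toCalkin_unilateralShift_mul_star e, by rw [← map_mul, star_unilateralShift_mul, map_one]⟩)
    toCalkin_mem_essentialBicommutant

/-- The invertible operators with a Wiener–Hopf factorization `G * F` modulo compact operators,
where `F` is analytic (commutes with the shift) and `G` is co-analytic. They are closed under
products because analytic and co-analytic factors commute in the Calkin algebra. -/
def wienerHopfUnits : Subgroup (H →L[𝕜] H)ˣ where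
  carrier := {X | ∃ F ∈ commutingUnits V V, ∃ G ∈ commutingUnits (star V) V,
    toCalkin (X : H →L[𝕜] H) = toCalkin (G : H →L[𝕜] H) * toCalkin (F : H →L[𝕜] H)}
  one_mem' := ⟨1, one_mem _, 1, one_mem _, by simp⟩
  mul_mem' := by
    rintro X Y ⟨F, hF, G, hG, hX⟩ ⟨F', hF', G', hG', hY⟩
    refine ⟨F * F', mul_mem hF hF', G * G', mul_mem hG hG', ?_⟩
    simp only [Units.val_mul, map_mul, hX, hY]
    exact (commute_of_mem_essentialBicommutant hF.2 hG'.2).mul_mul_mul_comm _ _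
  inv_mem' := by
    rintro X ⟨F, hF, G, hG, hX⟩
    refine ⟨F⁻¹, inv_mem hF, G⁻¹, inv_mem hG, ?_⟩
    let π := Units.map (toCalkin : (H →L[𝕜] H) →ₐ[𝕜] _).toMonoidHom
    have hπX : π X = π G * π F := Units.ext hX
    have hcomm : Commute (π G)⁻¹ (π F)⁻¹ :=
      Units.ext (commute_of_mem_essentialBicommutant (inv_mem hG).2 (inv_mem hF).2)
    have hinv : π X⁻¹ = π G⁻¹ * π F⁻¹ := by
      rw [map_inv, hπX, mul_inv_rev, map_inv, map_inv, hcomm.eq]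
    exact congrArg Units.val hinv

variable {e}

theorem exists_apply_basis_zero_eq_smul {G : (H →L[𝕜] H)ˣ}
    (hG : Commute (G : H →L[𝕜] H) (star V)) :
    ∃ k : 𝕜, k ≠ 0 ∧ (G : H →L[𝕜] H) (e 0) = k • e 0 := by
  have hker : star V ((G : H →L[𝕜] H) (e 0)) = 0 := by
    have hzero : star V (e 0) = 0 := by simpa using star_unilateralShift_pow_apply_basis e 1 0
    rw [← mul_apply_eq_comp, ← hG.eq, mul_apply_eq_comp, hzero, map_zero]
  have heq := eq_smul_of_star_unilateralShift_eq_zero e hker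
  refine ⟨_, fun hk => e.orthonormal.ne_zero 0 ?_, heq⟩
  rw [hk, zero_smul] at heq
  calc e 0 = (↑G⁻¹ * ↑G : H →L[𝕜] H) (e 0) := by simp
    _ = 0 := by rw [mul_apply_eq_comp, heq, map_zero]

theorem inner_basis_zero_inv_ne_zero {F G : (H →L[𝕜] H)ˣ} (hF : Commute (F : H →L[𝕜] H) V)
    (hG : Commute (G : H →L[𝕜] H) (star V)) :
    ⟪e 0, (↑(G * F)⁻¹ : H →L[𝕜] H) (e 0)⟫_𝕜 ≠ 0 := by
  obtain ⟨k, hk, hGk⟩ := exists_apply_basis_zero_eq_smul hG.units_inv_left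
  obtain ⟨m, hm, hFm⟩ := exists_apply_basis_zero_eq_smul (e := e) (G := star F⁻¹)
    (Commute.star_star hF.units_inv_left)
  rw [mul_inv_rev, Units.val_mul, mul_apply_eq_comp, hGk,
    ← ContinuousLinearMap.adjoint_inner_left, ← ContinuousLinearMap.star_eq_adjoint,
    ← Units.coe_star, hFm, inner_smul_left, inner_smul_right, inner_hilbertBasis]
  simp [hk, hm]

theorem tendsto_compression_of_mem_wienerHopfUnits {X : (H →L[𝕜] H)ˣ}
    (hX : X ∈ wienerHopfUnits e) :
    ∃ Y : (H →L[𝕜] H)ˣ, Tendsto (fun n => compression e n X) atTop (𝓝 (Y : H →L[𝕜] H)) ∧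
      ⟪e 0, (↑Y⁻¹ : H →L[𝕜] H) (e 0)⟫_𝕜 ≠ 0 := by
  obtain ⟨F, hF, G, hG, hX⟩ := hX
  refine ⟨G * F, ?_, inner_basis_zero_inv_ne_zero hF.1 hG.1⟩
  rw [← map_mul, toCalkin_eq_iff] at hX
  have hGF (n : ℕ) : compression e n (G * F) = (G * F : H →L[𝕜] H) := by
    rw [compression_mul_of_commute_left e hG.1, compression_of_commute e hF.1]
  have hsplit (n : ℕ) : compression e n X = compression e n (X - G * F) + G * F := by
    rw [← hGF n, ← compression_add, hGF, sub_add_cancel]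
  simp_rw [hsplit]
  simpa using (tendsto_compression_of_isCompactOperator e hX).add_const (G * F : H →L[𝕜] H)

theorem exists_left_inverse_of_isCompactOperator_mul_sub_one {F P : H →L[𝕜] H}
    (hF : Commute F V) (hPF : IsCompactOperator (P * F - 1 : H →L[𝕜] H)) :
    ∃ Q : H →L[𝕜] H, Q * F = 1 := by
  have hcompr (n : ℕ) : compression e n P * F - 1 = compression e n (P * F - 1) := by
    rw [sub_eq_add_neg (P * F), compression_add, compression_mul_of_commute_right e hF,
      compression_of_commute e (Commute.one_left _).neg_left, ← sub_eq_add_neg]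
  obtain ⟨n, hn⟩ := ((tendsto_zero_iff_norm_tendsto_zero.mp
    (tendsto_compression_of_isCompactOperator e hPF)).eventually_lt_const one_pos).exists
  rw [← hcompr, norm_sub_rev] at hn
  have hunit : IsUnit (compression e n P * F) := by simpa using (Units.oneSub _ hn).isUnit
  exact ⟨↑hunit.unit⁻¹ * compression e n P, by rw [mul_assoc, hunit.val_inv_mul]⟩

/-- For `‖w‖ = 1` the vectors `x N = ∑ k < N, w ^ k • e k` have norm `√N`, whereas
`x N - w • V (x N) = e 0 - w ^ N • e N` stays bounded. -/
theorem norm_ne_one_of_left_inverse {Q : H →L[𝕜] H} {w : 𝕜} (hQ : Q * (1 - w • V) = 1) :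
    ‖w‖ ≠ 1 := by
  intro hw
  let x (N : ℕ) : H := ∑ k ∈ Finset.range N, w ^ k • e k
  have htelescope (N : ℕ) : (1 - w • V) (x N) = e 0 - w ^ N • e N := by
    calc (1 - w • V) (x N) = ∑ k ∈ Finset.range N, (w ^ k • e k - w ^ (k + 1) • e (k + 1)) := by
          simp [x, smul_sub, smul_smul, pow_succ]
      _ = e 0 - w ^ N • e N := by
          rw [Finset.sum_range_sub' fun k => w ^ k • e k, pow_zero, one_smul]
  have hnorm (N : ℕ) : ‖x N‖ ^ 2 = N := by
    simpa [hw] using e.orthonormal.orthogonalFamily.norm_sum (fun k => w ^ k) (Finset.range N)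
  have hbound (N : ℕ) : ‖x N‖ ≤ ‖Q‖ * 2 := by
    have hle : ‖e 0 - w ^ N • e N‖ ≤ 2 := by
      refine (norm_sub_le _ _).trans ?_
      rw [norm_smul, norm_pow, hw, e.orthonormal.1, e.orthonormal.1]
      norm_num
    calc ‖x N‖ = ‖Q (e 0 - w ^ N • e N)‖ := by
          rw [← htelescope, ← mul_apply_eq_comp, hQ, one_apply_eq_self]
      _ ≤ ‖Q‖ * 2 := Q.le_opNorm_of_le hle
  obtain ⟨N, hN⟩ := exists_nat_gt ((‖Q‖ * 2) ^ 2)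
  exact absurd (hnorm N ▸ pow_le_pow_left₀ (norm_nonneg _) (hbound N) 2) hN.not_ge

theorem exists_sq_add_one_eq_two_mul_mul (c : ℂ) :
    ∃ w : ℂ, w ≠ 0 ∧ ‖w‖ ≤ 1 ∧ w ^ 2 + 1 = 2 * c * w := by
  obtain ⟨s, hs⟩ := IsAlgClosed.exists_pow_nat_eq (c ^ 2 - 1) two_pos
  have hprod : (c + s) * (c - s) = 1 := by linear_combination -hs
  rcases le_or_gt ‖c + s‖ 1 with hle | hgt
  · exact ⟨c + s, left_ne_zero_of_mul_eq_one hprod, hle, by linear_combination hs⟩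
  · have hnorm : ‖c + s‖ * ‖c - s‖ = 1 := by rw [← norm_mul, hprod, norm_one]
    refine ⟨c - s, right_ne_zero_of_mul_eq_one hprod, ?_, by linear_combination hs⟩
    nlinarith [norm_nonneg (c - s)]

/-- The Joukowski substitution `c = (w + w⁻¹) / 2` factors the symbol of the free Jacobi matrix. -/
theorem smul_add_star_sub_eq_mul {w c : 𝕜} (hw : w ≠ 0) (hwc : w ^ 2 + 1 = 2 * c * w) :
    (2⁻¹ : 𝕜) • (V + star V) - c • 1 = -(2 * w)⁻¹ • ((1 - w • star V) * (1 - w • V)) := by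
  have hc : c = (2 * w)⁻¹ * (w ^ 2 + 1) := by field_simp; linear_combination -hwc
  have hhalf : (2⁻¹ : 𝕜) = (2 * w)⁻¹ * w := by field_simp
  have hprod : (1 - w • star V) * (1 - w • V) = (w ^ 2 + 1) • 1 - w • (V + star V) := by
    simp only [sub_mul, mul_sub, one_mul, mul_one, smul_mul_smul_comm, star_unilateralShift_mul]
    module
  rw [hprod, hc, hhalf]
  module

theorem norm_lt_one_of_isCompactOperator_sub {J : H →L[𝕜] H}
    (hJ : IsCompactOperator (J - (2⁻¹ : 𝕜) • (V + star V) : H →L[𝕜] H)) {c w : 𝕜}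
    {Y : H →L[𝕜] H} (hY : Y * (J - c • 1) = 1) (hw : w ≠ 0) (hw_le : ‖w‖ ≤ 1)
    (hwc : w ^ 2 + 1 = 2 * c * w) : ‖w‖ < 1 := by
  have hcompact : IsCompactOperator
      ((Y * (-(2 * w)⁻¹ • (1 - w • star V))) * (1 - w • V) - 1 : H →L[𝕜] H) := by
    have hrem : (Y * (-(2 * w)⁻¹ • (1 - w • star V))) * (1 - w • V) - 1 =
        -(Y * (J - (2⁻¹ : 𝕜) • (V + star V))) := by
      have hJY : Y * J = 1 + c • Y := by
        rw [← hY, mul_sub, mul_smul_comm, mul_one, sub_add_cancel]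
      rw [mul_assoc, smul_mul_assoc, ← smul_add_star_sub_eq_mul hw hwc, mul_sub, mul_sub, hJY,
        mul_smul_comm, mul_smul_comm c, mul_one]
      abel
    rw [hrem]
    exact (hJ.clm_comp Y).neg
  have hcomm : Commute (1 - w • V) V :=
    (Commute.one_left V).sub_left ((Commute.refl V).smul_left w)
  obtain ⟨Q, hQ⟩ := exists_left_inverse_of_isCompactOperator_mul_sub_one hcomm hcompact
  exact hw_le.lt_of_ne (norm_ne_one_of_left_inverse hQ)

theorem mem_wienerHopfUnits_of_norm_lt_one {J : H →L[𝕜] H}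
    (hJ : IsCompactOperator (J - (2⁻¹ : 𝕜) • (V + star V) : H →L[𝕜] H)) {c w : 𝕜}
    {X : (H →L[𝕜] H)ˣ} (hX : (X : H →L[𝕜] H) = J - c • 1) (hw : w ≠ 0) (hw_lt : ‖w‖ < 1)
    (hwc : w ^ 2 + 1 = 2 * c * w) : X ∈ wienerHopfUnits e := by
  obtain ⟨F, hF, hF_eq⟩ := one_sub_smul_mem_commutingUnits
    (by simpa using norm_unilateralShift_pow_le e 1) toCalkin_mem_essentialBicommutant hw_lt
  obtain ⟨G, hG, hG_eq⟩ := one_sub_smul_mem_commutingUnits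
    (by simpa using norm_star_unilateralShift_pow_le e 1)
    (toCalkin_star_mem_essentialBicommutant e) hw_lt
  obtain ⟨s, hs, hs_eq⟩ := smul_one_mem_commutingUnits (star V) V
    (s := -(2 * w)⁻¹) (by simpa using hw)
  refine ⟨F, hF, s * G, mul_mem hs hG, ?_⟩
  have hsGF : (s * G : H →L[𝕜] H) * F = (2⁻¹ : 𝕜) • (V + star V) - c • 1 := by
    rw [smul_add_star_sub_eq_mul hw hwc, hs_eq, hG_eq, hF_eq, smul_one_mul, smul_mul_assoc]
  rw [Units.val_mul, ← map_mul, hsGF, toCalkin_eq_iff, hX, sub_sub_sub_cancel_right]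
  exact hJ

end WienerHopf

theorem mem_wienerHopfUnits_of_eq_sub_smul_one {H : Type*} [NormedAddCommGroup H]
    [InnerProductSpace ℂ H] [CompleteSpace H] {e : HilbertBasis ℕ ℂ H} {J : H →L[ℂ] H}
    (hJ : IsCompactOperator
      (J - (2⁻¹ : ℂ) • (unilateralShift e + star (unilateralShift e)) : H →L[ℂ] H))
    {c : ℂ} {X : (H →L[ℂ] H)ˣ} (hX : (X : H →L[ℂ] H) = J - c • 1) : X ∈ wienerHopfUnits e := by
  obtain ⟨w, hw, hw_le, hwc⟩ := exists_sq_add_one_eq_two_mul_mul c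
  have hw_lt := norm_lt_one_of_isCompactOperator_sub hJ (hX ▸ X.inv_mul) hw hw_le hwc
  exact mem_wienerHopfUnits_of_norm_lt_one hJ hX hw hw_lt hwc

section OrthogonalPolynomials

variable {K : Type*} [Field K]

theorem degree_sub_smul_lt {p q : K[X]} {n : ℕ} (hq : q.degree = n)
    (hp : p.degree < (n + 1 : ℕ)) : (p - (p.coeff n / q.coeff n) • q).degree < n := by
  have hq0 : q.coeff n ≠ 0 := coeff_ne_zero_of_eq_degree hq
  rw [degree_lt_iff_coeff_zero] at hp ⊢
  intro m hm
  rcases hm.eq_or_lt with rfl | hm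
  · simp [hq0]
  · simp [hp m hm, coeff_eq_zero_of_degree_lt (hq.trans_lt (Nat.cast_lt.mpr hm))]

/-- The polynomials `q` with `L (p * q) = 0` for all `p` of degree less than `n`. -/
noncomputable def orthogonalBelow (L : K[X] →ₗ[K] K) (n : ℕ) : Submodule K K[X] :=
  (degreeLT K n).orthogonalBilin ((LinearMap.mul K K[X]).compr₂ L)

variable {L : K[X] →ₗ[K] K} {n : ℕ}

theorem mem_orthogonalBelow {q : K[X]} :
    q ∈ orthogonalBelow L n ↔ ∀ p : K[X], p.degree < n → L (p * q) = 0 := by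
  simp [orthogonalBelow, mem_degreeLT]

theorem orthogonalBelow_antitone (L : K[X] →ₗ[K] K) : Antitone (orthogonalBelow L) :=
  fun _ _ hmn => Submodule.orthogonalBilin_le (degreeLT_mono hmn)

theorem X_mul_mem_orthogonalBelow {q : K[X]} (hq : q ∈ orthogonalBelow L (n + 1)) :
    X * q ∈ orthogonalBelow L n := by
  rw [mem_orthogonalBelow] at hq ⊢
  intro p hp
  rw [← mul_assoc]
  refine hq _ ?_
  rw [degree_mul_X, Nat.cast_succ]
  exact WithBot.add_lt_add_right WithBot.one_ne_bot hp

theorem mem_orthogonalBelow_succ {p q : K[X]} (hq : q ∈ orthogonalBelow L n) (hp : p.degree = n)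
    (hpq : L (p * q) = 0) : q ∈ orthogonalBelow L (n + 1) := by
  rw [mem_orthogonalBelow] at hq ⊢
  intro p' hp'
  simpa [sub_mul, hpq] using hq _ (degree_sub_smul_lt hp hp')

theorem apply_mul_eq_of_monic {p p' q : K[X]} (hq : q ∈ orthogonalBelow L n) (hp : p.Monic)
    (hp' : p'.Monic) (hpn : p.degree = n) (hpn' : p'.degree = n) : L (p * q) = L (p' * q) := by
  have hlt : (p - p').degree < n :=
    hpn ▸ degree_sub_lt_left (hpn.trans hpn'.symm) hp.ne_zero (hp.trans hp'.symm)
  simpa [sub_mul, sub_eq_zero] using mem_orthogonalBelow.mp hq _ hlt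

theorem exists_ne_zero_mem_orthogonalBelow (L : K[X] →ₗ[K] K) (n : ℕ) :
    ∃ q ∈ orthogonalBelow L n, q ≠ 0 ∧ q.degree < (n + 1 : ℕ) := by
  let S : degreeLT K (n + 1) →ₗ[K] Module.Dual K (degreeLT K n) :=
    ((LinearMap.mul K K[X]).compr₂ L).domRestrict₁₂ _ _
  have hfinrank (m : ℕ) : Module.finrank K (degreeLT K m) = m := by
    rw [(degreeLTEquiv K m).finrank_eq, Module.finrank_fin_fun]
  have hfinite (m : ℕ) : FiniteDimensional K (degreeLT K m) :=
    Module.Finite.equiv (degreeLTEquiv K m).symm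
  have hker : S.ker ≠ ⊥ := LinearMap.ker_ne_bot_of_finrank_lt <| by
    rw [Subspace.dual_finrank_eq, hfinrank, hfinrank]
    exact n.lt_succ_self
  obtain ⟨⟨q, hq⟩, hqS, hq0⟩ := Submodule.exists_mem_ne_zero_of_ne_bot hker
  refine ⟨q, mem_orthogonalBelow.mpr fun p hp => ?_, by simpa using hq0, mem_degreeLT.mp hq⟩
  rw [mul_comm]
  exact LinearMap.congr_fun hqS ⟨p, mem_degreeLT.mpr hp⟩

/-- `Q` is monic of least degree among the nonzero `q` with `L (p * q) = 0` for all `p` of degree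
less than `n`. -/
structure IsMinimalOrthogonal (L : K[X] →ₗ[K] K) (n : ℕ) (Q : K[X]) : Prop where
  monic : Q.Monic
  mem : Q ∈ orthogonalBelow L n
  degree_le_of_mem : ∀ q ∈ orthogonalBelow L n, q ≠ 0 → Q.degree ≤ q.degree

theorem IsMinimalOrthogonal.degree_lt_succ {Q : K[X]} (hQ : IsMinimalOrthogonal L n Q) :
    Q.degree < (n + 1 : ℕ) :=
  have ⟨q, hq, hq0, hdeg⟩ := exists_ne_zero_mem_orthogonalBelow L n
  (hQ.degree_le_of_mem q hq hq0).trans_lt hdeg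

section ThreeTermRecurrence

variable {Q₀ Q₁ Q₂ : K[X]}

theorem degree_sub_X_sub_C_mul_sub_lt (h₁ : Q₁.Monic) (h₂ : Q₂.Monic) (hdeg₀ : Q₀.degree = n)
    (hdeg₁ : Q₁.degree = (n + 1 : ℕ)) (hdeg₂ : Q₂.degree = (n + 2 : ℕ)) (β γ : K) :
    (Q₂ - ((X - C β) * Q₁ - C γ * Q₀)).degree < ((n + 2 : ℕ) : WithBot ℕ) := by
  have hmul : ((X - C β) * Q₁).degree = ((n + 2 : ℕ) : WithBot ℕ) := by
    rw [h₁.degree_mul, degree_X_sub_C, hdeg₁, ← Nat.cast_one, ← Nat.cast_add]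
    congr 1
    omega
  have hlt : (C γ * Q₀).degree < ((X - C β) * Q₁).degree := by
    rw [hmul, ← smul_eq_C_mul]
    refine (degree_smul_le γ Q₀).trans_lt ?_
    rw [hdeg₀]
    exact Nat.cast_lt.mpr (by omega)
  have hmonic : ((X - C β) * Q₁ - C γ * Q₀).Monic :=
    ((monic_X_sub_C β).mul h₁).sub_of_left hlt
  rw [← hdeg₂]
  refine degree_sub_lt_left ?_ h₂.ne_zero (h₂.trans hmonic.symm)
  rw [hdeg₂, degree_sub_eq_left_of_degree_lt hlt, hmul]

/-- The difference of the two sides is orthogonal to every polynomial of degree at most `n + 1` and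
has itself degree at most `n + 1`, so it vanishes by minimality of `Q₂`. -/
theorem three_term_recurrence_of_isMinimalOrthogonal (h₀ : IsMinimalOrthogonal L n Q₀)
    (h₁ : IsMinimalOrthogonal L (n + 1) Q₁) (h₂ : IsMinimalOrthogonal L (n + 2) Q₂)
    (hdeg₀ : Q₀.degree = n) (hdeg₁ : Q₁.degree = (n + 1 : ℕ)) (hdeg₂ : Q₂.degree = (n + 2 : ℕ))
    (hL₀ : L (Q₀ * Q₀) ≠ 0) (hL₁ : L (Q₁ * Q₁) ≠ 0) :
    Q₂ = (X - C (L (X * (Q₁ * Q₁)) / L (Q₁ * Q₁))) * Q₁ -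
      C (L (Q₁ * Q₁) / L (Q₀ * Q₀)) * Q₀ := by
  set β := L (X * (Q₁ * Q₁)) / L (Q₁ * Q₁)
  set γ := L (Q₁ * Q₁) / L (Q₀ * Q₀)
  set D := Q₂ - ((X - C β) * Q₁ - C γ * Q₀) with hD_def
  have hD : D = Q₂ - X * Q₁ + β • Q₁ + γ • Q₀ := by
    rw [hD_def, smul_eq_C_mul, smul_eq_C_mul]
    ring
  have hLD (p : K[X]) : L (p * D) =
      L (p * Q₂) - L (p * (X * Q₁)) + β * L (p * Q₁) + γ * L (p * Q₀) := by
    simp [hD, mul_add, mul_sub]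
  have hlt₀ : Q₀.degree < (n + 1 : ℕ) := hdeg₀ ▸ Nat.cast_lt.mpr (by omega)
  have hlt₁ : Q₁.degree < (n + 2 : ℕ) := hdeg₁ ▸ Nat.cast_lt.mpr (by omega)
  have hD₀ : D ∈ orthogonalBelow L n := by
    have hQ₁ := orthogonalBelow_antitone L n.le_succ h₁.mem
    have hQ₂ := orthogonalBelow_antitone L (n.le_add_right 2) h₂.mem
    exact hD ▸ add_mem (add_mem (sub_mem hQ₂ (X_mul_mem_orthogonalBelow h₁.mem))
      (Submodule.smul_mem _ β hQ₁)) (Submodule.smul_mem _ γ h₀.mem)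
  have hD₁ : D ∈ orthogonalBelow L (n + 1) := by
    refine mem_orthogonalBelow_succ hD₀ hdeg₀ ?_
    have hX : L (Q₀ * (X * Q₁)) = L (Q₁ * Q₁) := by
      rw [← mul_assoc]
      refine apply_mul_eq_of_monic h₁.mem (h₀.monic.mul monic_X) h₁.monic ?_ hdeg₁
      rw [degree_mul_X, hdeg₀, Nat.cast_succ]
    rw [hLD, mem_orthogonalBelow.mp h₂.mem _ (hlt₀.trans (Nat.cast_lt.mpr (by omega))),
      mem_orthogonalBelow.mp h₁.mem _ hlt₀, hX, div_mul_cancel₀ _ hL₀]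
    ring
  have hD₂ : D ∈ orthogonalBelow L (n + 2) := by
    refine mem_orthogonalBelow_succ hD₁ hdeg₁ ?_
    rw [hLD, mem_orthogonalBelow.mp h₂.mem _ hlt₁, mul_comm Q₁ Q₀,
      mem_orthogonalBelow.mp h₁.mem _ hlt₀, mul_left_comm, div_mul_cancel₀ _ hL₁]
    ring
  by_contra hne
  exact (hdeg₂ ▸ h₂.degree_le_of_mem D hD₂ (sub_ne_zero.mpr hne)).not_gt
    (degree_sub_X_sub_C_mul_sub_lt h₁.monic h₂.monic hdeg₀ hdeg₁ hdeg₂ β γ)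

theorem eq_coeff_sub_coeff_of_recurrence (h₁ : Q₁.Monic) (hdeg₀ : Q₀.degree = n)
    (hdeg₁ : Q₁.degree = (n + 1 : ℕ)) {β γ : K} (h : Q₂ = (X - C β) * Q₁ - C γ * Q₀) :
    β = Q₁.coeff n - Q₂.coeff (n + 1) := by
  have hcoeff₀ : Q₀.coeff (n + 1) = 0 :=
    coeff_eq_zero_of_degree_lt (hdeg₀ ▸ Nat.cast_lt.mpr n.lt_succ_self)
  have hcoeff₁ : Q₁.coeff (n + 1) = 1 := natDegree_eq_of_degree_eq_some hdeg₁ ▸ h₁.coeff_natDegree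
  simp [h, sub_mul, coeff_X_mul, hcoeff₀, hcoeff₁]

end ThreeTermRecurrence

end OrthogonalPolynomials

section CornerSolution

variable {𝕜 H : Type*} [RCLike 𝕜] [NormedAddCommGroup H]

theorem ringInverse_apply_apply [NormedSpace 𝕜 H] {T : H →L[𝕜] H} (hT : IsUnit T) (x : H) :
    Ring.inverse T (T x) = x := by
  rw [← mul_apply_eq_comp, Ring.inverse_mul_cancel T hT, one_apply_eq_self]

theorem tendsto_clm_apply [NormedSpace 𝕜 H] {α : Type*} {l : Filter α} {T : α → H →L[𝕜] H}
    {T₀ : H →L[𝕜] H} {x : α → H} {x₀ : H} (hT : Tendsto T l (𝓝 T₀)) (hx : Tendsto x l (𝓝 x₀)) :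
    Tendsto (fun i => T i (x i)) l (𝓝 (T₀ x₀)) :=
  (isBoundedBilinearMap_apply.continuous.tendsto (T₀, x₀)).comp (hT.prodMk_nhds hx)

variable [InnerProductSpace 𝕜 H] [CompleteSpace H]

/-- The solution `x` of `compression e n Z x = e 0`; it is `0` when the compression is singular. -/
noncomputable def cornerSolution (e : HilbertBasis ℕ 𝕜 H) (Z : H →L[𝕜] H) (n : ℕ) : H :=
  Ring.inverse (compression e n Z) (e 0)

variable {e : HilbertBasis ℕ 𝕜 H} {Z : H →L[𝕜] H} {Y : (H →L[𝕜] H)ˣ}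

theorem eventually_isUnit_compression
    (hY : Tendsto (fun n => compression e n Z) atTop (𝓝 (Y : H →L[𝕜] H))) :
    ∀ᶠ n in atTop, IsUnit (compression e n Z) :=
  hY.eventually (Units.isOpen.mem_nhds Y.isUnit)

theorem tendsto_cornerSolution
    (hY : Tendsto (fun n => compression e n Z) atTop (𝓝 (Y : H →L[𝕜] H))) :
    Tendsto (cornerSolution e Z) atTop (𝓝 ((↑Y⁻¹ : H →L[𝕜] H) (e 0))) := by
  have hinv := (NormedRing.inverse_continuousAt Y).tendsto.comp hY
  rw [Ring.inverse_unit] at hinv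
  exact tendsto_clm_apply hinv tendsto_const_nhds

end CornerSolution

section PolynomialModel

variable {𝕜 H : Type*} [RCLike 𝕜] [NormedAddCommGroup H] [InnerProductSpace 𝕜 H]

/-- `ι` realizes polynomials as vectors so that the sequence `P` becomes the Hilbert basis `e`, and
the bilinear form `(p, q) ↦ L (p * q)` is represented by the invertible operator `R`. -/
structure IsPolynomialModel (e : HilbertBasis ℕ 𝕜 H) (P : Polynomial.Sequence 𝕜)
    (ι : 𝕜[X] →ₗ[𝕜] H) (R : (H →L[𝕜] H)ˣ) (L : 𝕜[X] →ₗ[𝕜] 𝕜) : Prop where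
  map_eq_basis : ∀ n, ι (P n) = e n
  inner_apply : ∀ n q, ⟪e n, (R : H →L[𝕜] H) (ι q)⟫_𝕜 = L (P n * q)

variable {e : HilbertBasis ℕ 𝕜 H} {P : Polynomial.Sequence 𝕜} {ι : 𝕜[X] →ₗ[𝕜] H}
  {R : (H →L[𝕜] H)ˣ} {L : 𝕜[X] →ₗ[𝕜] 𝕜} {n : ℕ}

namespace IsPolynomialModel

section Pairing

variable (h : IsPolynomialModel e P ι R L)
include h

theorem inner_eq_zero {p : 𝕜[X]} (hp : p.degree < n) : ⟪e n, ι p⟫_𝕜 = 0 := by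
  have hspan : p ∈ Submodule.span 𝕜 (P '' Set.Iio n) := by
    rw [P.span_degreeLT fun i _ => (leadingCoeff_ne_zero.mpr (P.ne_zero i)).isUnit]
    exact mem_degreeLT.mpr hp
  suffices Submodule.span 𝕜 (P '' Set.Iio n) ≤ (innerₛₗ 𝕜 (e n) ∘ₗ ι).ker from this hspan
  rw [Submodule.span_le]
  rintro _ ⟨k, hk, rfl⟩
  simpa [h.map_eq_basis, inner_hilbertBasis] using (Set.mem_Iio.mp hk).ne'

theorem inner_eq_div {p : 𝕜[X]} (hp : p.degree < (n + 1 : ℕ)) :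
    ⟪e n, ι p⟫_𝕜 = p.coeff n / (P n).coeff n := by
  have hzero := h.inner_eq_zero (degree_sub_smul_lt (P.degree_eq n) hp)
  rw [map_sub, inner_sub_right, map_smul, inner_smul_right, h.map_eq_basis, inner_hilbertBasis,
    if_pos rfl, mul_one] at hzero
  exact sub_eq_zero.mp hzero

theorem injective : Function.Injective ι := by
  rw [injective_iff_map_eq_zero]
  intro p hp
  by_contra hne
  have hinner := h.inner_eq_div
    (degree_le_natDegree.trans_lt (Nat.cast_lt.mpr p.natDegree.lt_succ_self))
  rw [hp, inner_zero_right, coeff_natDegree] at hinner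
  exact div_ne_zero (leadingCoeff_ne_zero.mpr hne)
    (coeff_ne_zero_of_eq_degree (P.degree_eq _)) hinner.symm

end Pairing

variable [CompleteSpace H]

local notation "V" => unilateralShift e

section Orthogonal

variable (h : IsPolynomialModel e P ι R L)
include h

theorem star_shift_pow_map {p : 𝕜[X]} (hp : p.degree < (n + 1 : ℕ)) :
    (star V ^ n) (ι p) = (p.coeff n / (P n).coeff n) • e 0 := by
  refine ext_inner_hilbertBasis e fun k => ?_
  rw [inner_star_unilateralShift_pow_right, unilateralShift_pow_apply_basis, inner_smul_right,
    inner_hilbertBasis]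
  rcases k with _ | k
  · simp [h.inner_eq_div hp]
  · rw [h.inner_eq_zero (hp.trans_le (Nat.cast_le.mpr (by omega)))]
    simp

theorem shift_pow_star_pow_apply {q : 𝕜[X]} (hq : q ∈ orthogonalBelow L n) :
    (V ^ n) ((star V ^ n) ((R : H →L[𝕜] H) (ι q))) = (R : H →L[𝕜] H) (ι q) := by
  rw [unilateralShift_pow_star_pow_apply, Finset.sum_eq_zero, sub_zero]
  intro k hk
  have hdeg : (P k).degree < n := P.degree_eq k ▸ Nat.cast_lt.mpr (Finset.mem_range.mp hk)
  rw [h.inner_apply, mem_orthogonalBelow.mp hq _ hdeg, zero_smul]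

theorem inv_shift_pow_star_pow_apply {q : 𝕜[X]} (hq : q ∈ orthogonalBelow L n) :
    (↑R⁻¹ : H →L[𝕜] H) ((V ^ n) ((star V ^ n) ((R : H →L[𝕜] H) (ι q)))) = ι q := by
  rw [h.shift_pow_star_pow_apply hq, ← mul_apply_eq_comp, R.inv_mul, one_apply_eq_self]

theorem compression_apply {q : 𝕜[X]} (hq : q ∈ orthogonalBelow L n) :
    compression e n ↑R⁻¹ ((star V ^ n) ((R : H →L[𝕜] H) (ι q))) = (star V ^ n) (ι q) := by
  rw [compression, mul_apply_eq_comp, mul_apply_eq_comp, h.inv_shift_pow_star_pow_apply hq]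

theorem inner_map_eq {Q : 𝕜[X]} (hQ : Q ∈ orthogonalBelow L (n + 1)) :
    ⟪e n, ι Q⟫_𝕜 =
      ⟪e 0, compression e n ↑R⁻¹ (V ((star V ^ (n + 1)) ((R : H →L[𝕜] H) (ι Q))))⟫_𝕜 := by
  nth_rw 1 [← h.inv_shift_pow_star_pow_apply hQ]
  rw [← add_zero n, ← unilateralShift_pow_apply_basis, add_zero,
    ← inner_star_unilateralShift_pow_right, pow_succ V]
  rfl

end Orthogonal

section Minimal

variable {Q : 𝕜[X]} (h : IsPolynomialModel e P ι R L) (hQ : IsMinimalOrthogonal L n Q)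
  (hunit : IsUnit (compression e n ↑R⁻¹))
include h hQ hunit

theorem degree_eq : Q.degree = n := by
  by_contra hne
  have hlt : Q.degree < n := by
    have hlt_succ := hQ.degree_lt_succ
    rw [degree_eq_natDegree hQ.monic.ne_zero, Nat.cast_lt] at hlt_succ ⊢
    rw [degree_eq_natDegree hQ.monic.ne_zero, Nat.cast_inj] at hne
    omega
  have hzero := h.compression_apply hQ.mem
  rw [h.star_shift_pow_map hQ.degree_lt_succ, coeff_eq_zero_of_degree_lt hlt, zero_div,
    zero_smul] at hzero
  have hvec := ringInverse_apply_apply hunit ((star V ^ n) ((R : H →L[𝕜] H) (ι Q)))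
  rw [hzero, map_zero] at hvec
  refine hQ.monic.ne_zero (h.injective ?_)
  rw [← h.inv_shift_pow_star_pow_apply hQ.mem, ← hvec]
  simp only [map_zero]

theorem coeff_eq_one : Q.coeff n = 1 := by
  rw [← natDegree_eq_of_degree_eq_some (h.degree_eq hQ hunit)]
  exact hQ.monic.coeff_natDegree

theorem star_shift_pow_apply :
    (star V ^ n) ((R : H →L[𝕜] H) (ι Q)) = ((P n).coeff n)⁻¹ • cornerSolution e ↑R⁻¹ n := by
  rw [← ringInverse_apply_apply hunit ((star V ^ n) _), h.compression_apply hQ.mem,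
    h.star_shift_pow_map hQ.degree_lt_succ, h.coeff_eq_one hQ hunit, one_div, map_smul,
    cornerSolution]

theorem apply_mul_self :
    L (Q * Q) = ((P n).coeff n ^ 2)⁻¹ * ⟪e 0, cornerSolution e ↑R⁻¹ n⟫_𝕜 := by
  have horth := mem_orthogonalBelow.mp hQ.mem _
    (degree_sub_smul_lt (P.degree_eq n) hQ.degree_lt_succ)
  rw [sub_mul, map_sub, sub_eq_zero, h.coeff_eq_one hQ hunit, smul_mul_assoc, map_smul,
    ← h.inner_apply] at horth
  rw [horth, ← add_zero n, ← unilateralShift_pow_apply_basis, add_zero,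
    ← inner_star_unilateralShift_pow_right, h.star_shift_pow_apply hQ hunit, inner_smul_right,
    smul_eq_mul]
  ring

end Minimal

theorem coeff_eq {Q : 𝕜[X]} (h : IsPolynomialModel e P ι R L)
    (hQ : IsMinimalOrthogonal L (n + 1) Q)
    (hunit : IsUnit (compression e (n + 1) ↑R⁻¹)) :
    Q.coeff n = (P n).coeff n / (P (n + 1)).coeff (n + 1) *
        ⟪e 0, compression e n ↑R⁻¹ (V (cornerSolution e ↑R⁻¹ (n + 1)))⟫_𝕜 +
      (P (n + 1)).coeff n / (P (n + 1)).coeff (n + 1) := by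
  have hdeg := degree_sub_smul_lt (P.degree_eq (n + 1)) hQ.degree_lt_succ
  have hinner := h.inner_eq_div hdeg
  rw [h.coeff_eq_one hQ hunit, map_sub, inner_sub_right, map_smul, h.map_eq_basis, inner_smul_right,
    inner_hilbertBasis, if_neg n.succ_ne_self.symm, mul_zero, sub_zero, h.inner_map_eq hQ.mem,
    h.star_shift_pow_apply hQ hunit, map_smul, map_smul, inner_smul_right, coeff_sub, coeff_smul,
    smul_eq_mul, eq_div_iff (coeff_ne_zero_of_eq_degree (P.degree_eq n))] at hinner
  linear_combination -hinner

end IsPolynomialModel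

end PolynomialModel

section JacobiRecurrence

/-- The polynomials `P n` satisfy the three-term recurrence with Jacobi coefficients `a`, `b`. The
first equation is the second one with `P (-1) = 0`. -/
structure IsJacobiRecurrence {K : Type*} [Semiring K] (P : ℕ → K[X]) (a b : ℕ → K) : Prop where
  zero : X * P 0 = a 1 • P 1 + b 0 • P 0
  succ : ∀ n, X * P (n + 1) = a (n + 2) • P (n + 2) + b (n + 1) • P (n + 1) + a (n + 1) • P n

variable {K : Type*} [Field K] {P : Polynomial.Sequence K} {a b : ℕ → K}

namespace IsJacobiRecurrence

theorem coeff_self_eq (h : IsJacobiRecurrence P a b) (n : ℕ) :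
    (P n).coeff n = a (n + 1) * (P (n + 1)).coeff (n + 1) := by
  have hzero {i j : ℕ} (hij : i < j) : (P i).coeff j = 0 :=
    coeff_eq_zero_of_natDegree_lt ((P.natDegree_eq i).trans_lt hij)
  rcases n with _ | n
  · simpa [hzero] using congrArg (coeff · 1) h.zero
  · simpa [hzero, show n < n + 2 by omega] using congrArg (coeff · (n + 2)) (h.succ n)

theorem coeff_self_div (h : IsJacobiRecurrence P a b) (n : ℕ) :
    (P n).coeff n / (P (n + 1)).coeff (n + 1) = a (n + 1) := by
  rw [h.coeff_self_eq, mul_div_cancel_right₀ _ (coeff_ne_zero_of_eq_degree (P.degree_eq _))]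

theorem coeff_succ_div (h : IsJacobiRecurrence P a b) (n : ℕ) :
    (P (n + 1)).coeff n / (P (n + 1)).coeff (n + 1) =
      (P (n + 2)).coeff (n + 1) / (P (n + 2)).coeff (n + 2) + b (n + 1) := by
  have hzero : (P n).coeff (n + 1) = 0 :=
    coeff_eq_zero_of_natDegree_lt ((P.natDegree_eq n).trans_lt n.lt_succ_self)
  have hcoeff : (P (n + 1)).coeff n =
      a (n + 2) * (P (n + 2)).coeff (n + 1) + b (n + 1) * (P (n + 1)).coeff (n + 1) := by
    simpa [hzero] using congrArg (coeff · (n + 1)) (h.succ n)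
  have hne : (P (n + 1)).coeff (n + 1) ≠ 0 := coeff_ne_zero_of_eq_degree (P.degree_eq _)
  have ha : a (n + 2) ≠ 0 := left_ne_zero_of_mul (h.coeff_self_eq (n + 1) ▸ hne)
  rw [hcoeff, add_div, mul_div_cancel_right₀ _ hne, h.coeff_self_eq (n + 1),
    mul_div_mul_left _ _ ha]

end IsJacobiRecurrence

end JacobiRecurrence

section RecurrenceAsymptotics

variable {𝕜 H : Type*} [RCLike 𝕜] [NormedAddCommGroup H] [InnerProductSpace 𝕜 H]
  [CompleteSpace H] {e : HilbertBasis ℕ 𝕜 H} {P : Polynomial.Sequence 𝕜} {ι : 𝕜[X] →ₗ[𝕜] H}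
  {R : (H →L[𝕜] H)ˣ} {L : 𝕜[X] →ₗ[𝕜] 𝕜} {a b : ℕ → 𝕜}

namespace IsPolynomialModel

section Identities

variable {n : ℕ} {Q₀ Q₁ Q₂ : 𝕜[X]}

theorem apply_mul_self_div (h : IsPolynomialModel e P ι R L) (hP : IsJacobiRecurrence P a b)
    (h₀ : IsMinimalOrthogonal L n Q₀) (h₁ : IsMinimalOrthogonal L (n + 1) Q₁)
    (hunit₀ : IsUnit (compression e n ↑R⁻¹)) (hunit₁ : IsUnit (compression e (n + 1) ↑R⁻¹)) :
    L (Q₁ * Q₁) / L (Q₀ * Q₀) = a (n + 1) ^ 2 *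
      (⟪e 0, cornerSolution e ↑R⁻¹ (n + 1)⟫_𝕜 / ⟪e 0, cornerSolution e ↑R⁻¹ n⟫_𝕜) := by
  have hτ : (P (n + 1)).coeff (n + 1) ≠ 0 := coeff_ne_zero_of_eq_degree (P.degree_eq _)
  have hτ₀ : (P n).coeff n ≠ 0 := coeff_ne_zero_of_eq_degree (P.degree_eq _)
  rw [h.apply_mul_self h₀ hunit₀, h.apply_mul_self h₁ hunit₁, ← hP.coeff_self_div]
  field_simp

theorem coeff_sub_coeff (h : IsPolynomialModel e P ι R L) (hP : IsJacobiRecurrence P a b)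
    (h₁ : IsMinimalOrthogonal L (n + 1) Q₁) (h₂ : IsMinimalOrthogonal L (n + 2) Q₂)
    (hunit₁ : IsUnit (compression e (n + 1) ↑R⁻¹))
    (hunit₂ : IsUnit (compression e (n + 2) ↑R⁻¹)) :
    Q₁.coeff n - Q₂.coeff (n + 1) =
      a (n + 1) * ⟪e 0, compression e n ↑R⁻¹
        (unilateralShift e (cornerSolution e ↑R⁻¹ (n + 1)))⟫_𝕜 -
      a (n + 2) * ⟪e 0, compression e (n + 1) ↑R⁻¹
        (unilateralShift e (cornerSolution e ↑R⁻¹ (n + 2)))⟫_𝕜 + b (n + 1) := by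
  rw [h.coeff_eq h₁ hunit₁, h.coeff_eq h₂ hunit₂, hP.coeff_succ_div n, hP.coeff_self_div,
    hP.coeff_self_div]
  ring

end Identities

variable {Q : ℕ → 𝕜[X]} {Y : (H →L[𝕜] H)ˣ}

section Limits

variable (h : IsPolynomialModel e P ι R L) (hQ : ∀ n, IsMinimalOrthogonal L n (Q n))
  (hY : Tendsto (fun n => compression e n ↑R⁻¹) atTop (𝓝 (Y : H →L[𝕜] H)))
  (hY₀ : ⟪e 0, (↑Y⁻¹ : H →L[𝕜] H) (e 0)⟫_𝕜 ≠ 0)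
include h hQ hY hY₀

theorem eventually_apply_mul_self_ne_zero : ∀ᶠ n in atTop, L (Q n * Q n) ≠ 0 := by
  have hcorner : Tendsto (fun n => ⟪e 0, cornerSolution e ↑R⁻¹ n⟫_𝕜) atTop (𝓝 _) :=
    tendsto_const_nhds.inner (tendsto_cornerSolution hY)
  filter_upwards [eventually_isUnit_compression hY, hcorner.eventually_ne hY₀] with n hunit hne
  rw [h.apply_mul_self (hQ n) hunit]
  exact mul_ne_zero
    (inv_ne_zero (pow_ne_zero 2 (coeff_ne_zero_of_eq_degree (P.degree_eq n)))) hne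

theorem eventually_three_term_recurrence : ∀ᶠ n in atTop, Q (n + 2) =
    (X - C (L (X * (Q (n + 1) * Q (n + 1))) / L (Q (n + 1) * Q (n + 1)))) * Q (n + 1) -
      C (L (Q (n + 1) * Q (n + 1)) / L (Q n * Q n)) * Q n := by
  have hdeg : ∀ᶠ n in atTop, (Q n).degree = n :=
    (eventually_isUnit_compression hY).mono fun n => h.degree_eq (hQ n)
  have hne := h.eventually_apply_mul_self_ne_zero hQ hY hY₀
  filter_upwards [hdeg, (tendsto_add_atTop_nat 1).eventually hdeg,
    (tendsto_add_atTop_nat 2).eventually hdeg, hne, (tendsto_add_atTop_nat 1).eventually hne]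
    with n hdeg₀ hdeg₁ hdeg₂ hne₀ hne₁
  exact three_term_recurrence_of_isMinimalOrthogonal (hQ n) (hQ (n + 1)) (hQ (n + 2)) hdeg₀ hdeg₁
    hdeg₂ hne₀ hne₁

theorem tendsto_apply_mul_self_div (hP : IsJacobiRecurrence P a b) {α : 𝕜}
    (ha : Tendsto a atTop (𝓝 α)) :
    Tendsto (fun n => L (Q (n + 1) * Q (n + 1)) / L (Q n * Q n)) atTop (𝓝 (α ^ 2)) := by
  have hunit := eventually_isUnit_compression hY
  have hcorner : Tendsto (fun n => ⟪e 0, cornerSolution e ↑R⁻¹ n⟫_𝕜) atTop (𝓝 _) :=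
    tendsto_const_nhds.inner (tendsto_cornerSolution hY)
  have hlim := (((tendsto_add_atTop_iff_nat 1).mpr ha).pow 2).mul
    (((tendsto_add_atTop_iff_nat 1).mpr hcorner).div hcorner hY₀)
  rw [div_self hY₀, mul_one] at hlim
  refine hlim.congr' ?_
  filter_upwards [hunit, (tendsto_add_atTop_nat 1).eventually hunit] with n hunit₀ hunit₁
  exact (h.apply_mul_self_div hP (hQ n) (hQ (n + 1)) hunit₀ hunit₁).symm

theorem tendsto_apply_X_mul_div (hP : IsJacobiRecurrence P a b) {α β : 𝕜}
    (ha : Tendsto a atTop (𝓝 α)) (hb : Tendsto b atTop (𝓝 β)) :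
    Tendsto (fun n => L (X * (Q n * Q n)) / L (Q n * Q n)) atTop (𝓝 β) := by
  have hunit := eventually_isUnit_compression hY
  let s (n : ℕ) : 𝕜 :=
    ⟪e 0, compression e n ↑R⁻¹ (unilateralShift e (cornerSolution e ↑R⁻¹ (n + 1)))⟫_𝕜
  have hs : Tendsto s atTop (𝓝 _) := tendsto_const_nhds.inner <| tendsto_clm_apply hY <|
    ((unilateralShift e).continuous.tendsto _).comp
      ((tendsto_add_atTop_iff_nat 1).mpr (tendsto_cornerSolution hY))
  have hlim := ((((tendsto_add_atTop_iff_nat 1).mpr ha).mul hs).sub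
    (((tendsto_add_atTop_iff_nat 2).mpr ha).mul ((tendsto_add_atTop_iff_nat 1).mpr hs))).add
    ((tendsto_add_atTop_iff_nat 1).mpr hb)
  rw [sub_self, zero_add] at hlim
  rw [← tendsto_add_atTop_iff_nat 1]
  refine hlim.congr' ?_
  filter_upwards [hunit, (tendsto_add_atTop_nat 1).eventually hunit,
    (tendsto_add_atTop_nat 2).eventually hunit, h.eventually_three_term_recurrence hQ hY hY₀]
    with n hunit₀ hunit₁ hunit₂ hrec
  rw [eq_coeff_sub_coeff_of_recurrence (hQ (n + 1)).monic (h.degree_eq (hQ n) hunit₀)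
    (h.degree_eq (hQ (n + 1)) hunit₁) hrec,
    h.coeff_sub_coeff hP (hQ (n + 1)) (hQ (n + 2)) hunit₁ hunit₂]

end Limits

end IsPolynomialModel

end RecurrenceAsymptotics

section JacobiOperator

variable {𝕜 H : Type*} [RCLike 𝕜] [NormedAddCommGroup H] [InnerProductSpace 𝕜 H]
  [CompleteSpace H] {e : HilbertBasis ℕ 𝕜 H} {P : ℕ → 𝕜[X]} {ι : 𝕜[X] →ₗ[𝕜] H}
  {J : H →L[𝕜] H} {a b : ℕ → 𝕜} {α : 𝕜}

local notation "V" => unilateralShift e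

theorem isCompactOperator_sub_smul_of_isJacobiRecurrence (hι : ∀ n, ι (P n) = e n)
    (hJ : ∀ p, J (ι p) = ι (X * p)) (hP : IsJacobiRecurrence P a b) (ha : Tendsto a atTop (𝓝 α))
    (hb : Tendsto b atTop (𝓝 0)) : IsCompactOperator (J - α • (V + star V)) := by
  have ha' : Tendsto (fun n => a (n + 1) - α) atTop (𝓝 0) :=
    sub_self α ▸ ((tendsto_add_atTop_iff_nat 1).mpr ha).sub_const α
  obtain ⟨D, hD, hDe⟩ := exists_isCompactOperator_diagonal e.orthonormal ha'
  obtain ⟨E, hE, hEe⟩ := exists_isCompactOperator_diagonal e.orthonormal hb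
  have hV_zero : star V (e 0) = 0 := by simpa using star_unilateralShift_pow_apply_basis e 1 0
  have hV_succ (k : ℕ) : star V (e (k + 1)) = e k := by
    simpa using star_unilateralShift_pow_apply_basis e 1 (k + 1)
  have hdecomp : J - α • (V + star V) = V * D + E + D * star V := by
    refine clm_ext_hilbertBasis e fun k => ?_
    rcases k with _ | k
    · have hJe : J (e 0) = a 1 • e 1 + b 0 • e 0 := by
        rw [← hι 0, hJ, hP.zero]
        simp [hι]
      simp only [smul_add, sub_apply, hJe, add_apply, smul_apply, unilateralShift_apply_basis,
        zero_add, hV_zero, smul_zero, add_zero, mul_apply_eq_comp, hDe, map_smul, hEe, map_zero]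
      module
    · have hJe : J (e (k + 1)) = a (k + 2) • e (k + 2) + b (k + 1) • e (k + 1) +
          a (k + 1) • e k := by
        rw [← hι (k + 1), hJ, hP.succ]
        simp [hι]
      simp only [smul_add, sub_apply, hJe, add_apply, smul_apply, unilateralShift_apply_basis,
        hV_succ, mul_apply_eq_comp, hDe, map_smul, hEe]
      module
  rw [hdecomp]
  exact ((hD.clm_comp V).add hE).add (hD.comp_clm (star V))

end JacobiOperator

section MulOperator

variable {α 𝕜 : Type*} [RCLike 𝕜] {mα : MeasurableSpace α} {μ : Measure α}

/-- `T` is multiplication by the function `m` on `L²(μ)`. -/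
def IsMulOperator (m : α → 𝕜) (T : Lp 𝕜 2 μ →L[𝕜] Lp 𝕜 2 μ) : Prop :=
  ∀ f : Lp 𝕜 2 μ, T f =ᵐ[μ] fun x => m x * f x

variable {m k : α → 𝕜} {S T : Lp 𝕜 2 μ →L[𝕜] Lp 𝕜 2 μ}

theorem exists_isMulOperator (hm : AEStronglyMeasurable m μ) {M : ℝ}
    (hM : ∀ᵐ x ∂μ, ‖m x‖ ≤ M) : ∃ T : Lp 𝕜 2 μ →L[𝕜] Lp 𝕜 2 μ, IsMulOperator m T := by
  have hm_top : MemLp m ⊤ μ := memLp_top_of_bound hm M hM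
  refine ⟨(ContinuousLinearMap.mul 𝕜 𝕜).holderL μ ⊤ 2 2 (hm_top.toLp m), fun f => ?_⟩
  filter_upwards [(ContinuousLinearMap.mul 𝕜 𝕜).coeFn_holder (r := 2) (hm_top.toLp m) f,
    hm_top.coeFn_toLp] with x hx hmx
  rw [hmx] at hx
  exact hx

namespace IsMulOperator

theorem eq_of_ae_eq (hS : IsMulOperator m S) (hT : IsMulOperator k T) (h : m =ᵐ[μ] k) :
    S = T := by
  ext1 f
  refine Lp.ext ?_
  filter_upwards [hS f, hT f, h] with x hSx hTx hx
  rw [hSx, hTx, hx]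

theorem one : IsMulOperator (μ := μ) (1 : α → 𝕜) 1 := by
  simp [IsMulOperator]

theorem mul (hS : IsMulOperator m S) (hT : IsMulOperator k T) :
    IsMulOperator (m * k) (S * T) := by
  intro f
  filter_upwards [hS (T f), hT f] with x hSx hTx
  rw [mul_apply_eq_comp, hSx, hTx, Pi.mul_apply, mul_assoc]

theorem sub_smul_one (hT : IsMulOperator m T) (c : 𝕜) :
    IsMulOperator (fun x => m x - c) (T - c • 1) := by
  intro f
  filter_upwards [hT f, Lp.coeFn_sub (T f) (c • f), Lp.coeFn_smul c f] with x hTx hsub hsmul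
  calc (T f - c • f : Lp 𝕜 2 μ) x = T f x - c * f x := by
        rw [hsub, Pi.sub_apply, hsmul, Pi.smul_apply, smul_eq_mul]
    _ = (m x - c) * f x := by rw [hTx, sub_mul]

theorem isUnit (hT : IsMulOperator m T) (hm : AEStronglyMeasurable m μ) {δ : ℝ} (hδ : 0 < δ)
    (hmδ : ∀ᵐ x ∂μ, δ ≤ ‖m x‖) : IsUnit T := by
  have hne : ∀ᵐ x ∂μ, m x ≠ 0 := hmδ.mono fun x hx => norm_pos_iff.mp (hδ.trans_le hx)
  have hbound : ∀ᵐ x ∂μ, ‖m⁻¹ x‖ ≤ δ⁻¹ := hmδ.mono fun x hx => by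
    rw [Pi.inv_apply, norm_inv]
    exact inv_anti₀ hδ hx
  obtain ⟨S, hS⟩ := exists_isMulOperator hm.aemeasurable.inv.aestronglyMeasurable hbound
  refine ⟨⟨T, S, (hT.mul hS).eq_of_ae_eq one ?_, (hS.mul hT).eq_of_ae_eq one ?_⟩, rfl⟩
  · exact hne.mono fun x hx => mul_inv_cancel₀ hx
  · exact hne.mono fun x hx => inv_mul_cancel₀ hx

variable {X : (Lp 𝕜 2 μ →L[𝕜] Lp 𝕜 2 μ)ˣ}

theorem apply_inv_apply (hX : IsMulOperator m X.val) (f : Lp 𝕜 2 μ) :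
    f =ᵐ[μ] fun x => m x * X⁻¹.val f x := by
  have h := hX (X⁻¹.val f)
  rwa [← mul_apply_eq_comp, X.mul_inv, one_apply_eq_self] at h

theorem ae_ne_zero [IsFiniteMeasure μ] (hX : IsMulOperator m X.val) : ∀ᵐ x ∂μ, m x ≠ 0 := by
  filter_upwards [hX.apply_inv_apply (Lp.const 2 μ 1), Lp.coeFn_const 2 μ (1 : 𝕜)]
    with x hx hconst hm
  rw [hconst, hm, zero_mul] at hx
  exact one_ne_zero hx

theorem inv [IsFiniteMeasure μ] (hX : IsMulOperator m X.val) : IsMulOperator m⁻¹ X⁻¹.val := by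
  intro f
  filter_upwards [hX.apply_inv_apply f, hX.ae_ne_zero] with x hx hm
  rw [hx, Pi.inv_apply, inv_mul_cancel_left₀ hm]

end IsMulOperator

/-- The functions `m` such that multiplication by `m` is an operator belonging to the group `G`. -/
def mulOperatorSymbols (G : Subgroup (Lp 𝕜 2 μ →L[𝕜] Lp 𝕜 2 μ)ˣ) : Submonoid (α → 𝕜) where
  carrier := {m | ∃ X ∈ G, IsMulOperator m X.val}
  one_mem' := ⟨1, G.one_mem, IsMulOperator.one⟩
  mul_mem' := fun ⟨X, hX, hmX⟩ ⟨Y, hY, hkY⟩ => ⟨X * Y, G.mul_mem hX hY, hmX.mul hkY⟩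

theorem inv_mem_mulOperatorSymbols [IsFiniteMeasure μ]
    {G : Subgroup (Lp 𝕜 2 μ →L[𝕜] Lp 𝕜 2 μ)ˣ} (hm : m ∈ mulOperatorSymbols G) :
    m⁻¹ ∈ mulOperatorSymbols G :=
  have ⟨X, hX, hmX⟩ := hm
  ⟨X⁻¹, G.inv_mem hX, hmX.inv⟩

end MulOperator

section PolynomialDensity

variable {μ : Measure ℝ} {F : Type*} [NormedAddCommGroup F] [NormedSpace ℝ F] {f : ℝ → F} {M : ℝ}

theorem integrable_smul_of_continuous (hf : Integrable f μ) (hM : ∀ᵐ x ∂μ, |x| ≤ M)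
    {g : ℝ → ℝ} (hg : Continuous g) : Integrable (fun x => g x • f x) μ := by
  obtain ⟨K, hK⟩ := (isCompact_Icc (a := -M) (b := M)).exists_bound_of_continuousOn hg.continuousOn
  exact hf.bdd_smul K hg.aestronglyMeasurable (hM.mono fun x hx => hK x (abs_le.mp hx))

theorem norm_integral_smul_le_of_forall_polynomial (hf : Integrable f μ) (hM : ∀ᵐ x ∂μ, |x| ≤ M)
    (hpoly : ∀ p : ℝ[X], ∫ x, p.eval x • f x ∂μ = 0) {g : ℝ → ℝ} (hg : Continuous g) {ε : ℝ}
    (hε : 0 < ε) : ‖∫ x, g x • f x ∂μ‖ ≤ ε * ∫ x, ‖f x‖ ∂μ := by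
  obtain ⟨p, hp⟩ := exists_polynomial_near_of_continuousOn (-M) M g hg.continuousOn ε hε
  have hsub : ∫ x, g x • f x ∂μ = ∫ x, (g x - p.eval x) • f x ∂μ := by
    simp_rw [sub_smul]
    rw [integral_sub (integrable_smul_of_continuous hf hM hg)
      (integrable_smul_of_continuous hf hM p.continuous), hpoly, sub_zero]
  rw [hsub, ← integral_const_mul]
  refine norm_integral_le_of_norm_le (hf.norm.const_mul ε) (hM.mono fun x hx => ?_)
  rw [norm_smul, Real.norm_eq_abs, abs_sub_comm]
  gcongr
  exact (hp x (abs_le.mp hx)).le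

theorem ae_eq_zero_of_forall_integral_polynomial_smul_eq_zero [CompleteSpace F]
    (hf : Integrable f μ) (hM : ∀ᵐ x ∂μ, |x| ≤ M)
    (hpoly : ∀ p : ℝ[X], ∫ x, p.eval x • f x ∂μ = 0) : f =ᵐ[μ] 0 := by
  refine ae_eq_zero_of_integral_contDiff_smul_eq_zero hf.locallyIntegrable fun g hg _ => ?_
  have hlim : Tendsto (fun ε : ℝ => ε * ∫ x, ‖f x‖ ∂μ) (𝓝[>] 0) (𝓝 0) := by
    refine tendsto_nhdsWithin_of_tendsto_nhds ?_
    simpa using (tendsto_id (x := 𝓝 (0 : ℝ))).mul_const (∫ x, ‖f x‖ ∂μ)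
  refine norm_le_zero_iff.mp (ge_of_tendsto hlim (eventually_mem_nhdsWithin.mono fun ε hε => ?_))
  exact norm_integral_smul_le_of_forall_polynomial hf hM hpoly hg.continuous hε

end PolynomialDensity

section PolynomialsInL2

theorem eval_map_complexOfRealHom (p : ℝ[X]) (x : ℝ) :
    (p.map Complex.ofRealHom).eval (x : ℂ) = ((p.eval x : ℝ) : ℂ) :=
  eval_map_apply (f := Complex.ofRealHom) x

variable {μ : Measure ℝ} [IsFiniteMeasure μ] {M : ℝ}

theorem memLp_polynomial (hM : ∀ᵐ x ∂μ, |x| ≤ M) (p : ℂ[X]) :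
    MemLp (fun x : ℝ => p.eval (x : ℂ)) 2 μ := by
  have hcont : Continuous fun x : ℝ => p.eval (x : ℂ) :=
    p.continuous.comp Complex.continuous_ofReal
  obtain ⟨K, hK⟩ := (isCompact_Icc (a := -M) (b := M)).exists_bound_of_continuousOn
    hcont.continuousOn
  exact MemLp.of_bound hcont.aestronglyMeasurable K (hM.mono fun x hx => hK x (abs_le.mp hx))

/-- Polynomials as elements of `L²(μ)`, for a finite measure `μ` supported in `[-M, M]`. -/
noncomputable def polynomialToL2 (hM : ∀ᵐ x ∂μ, |x| ≤ M) : ℂ[X] →ₗ[ℂ] Lp ℂ 2 μ where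
  toFun p := (memLp_polynomial hM p).toLp _
  map_add' p q := by
    rw [← MemLp.toLp_add]
    exact MemLp.toLp_congr _ _ (.of_forall fun _ => eval_add)
  map_smul' c p := by
    rw [RingHom.id_apply, ← MemLp.toLp_const_smul]
    exact MemLp.toLp_congr _ _ (.of_forall fun _ => eval_smul ..)

theorem coeFn_polynomialToL2 (hM : ∀ᵐ x ∂μ, |x| ≤ M) (p : ℂ[X]) :
    polynomialToL2 hM p =ᵐ[μ] fun x => p.eval (x : ℂ) :=
  (memLp_polynomial hM p).coeFn_toLp

theorem IsMulOperator.apply_polynomialToL2 {J : Lp ℂ 2 μ →L[ℂ] Lp ℂ 2 μ}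
    (hJ : IsMulOperator (fun x : ℝ => (x : ℂ)) J) (hM : ∀ᵐ x ∂μ, |x| ≤ M) (p : ℂ[X]) :
    J (polynomialToL2 hM p) = polynomialToL2 hM (X * p) := by
  refine Lp.ext ?_
  filter_upwards [hJ (polynomialToL2 hM p), coeFn_polynomialToL2 hM p,
    coeFn_polynomialToL2 hM (X * p)] with x hJx hp hXp
  rw [hJx, hp, hXp, eval_mul, eval_X]

theorem inner_polynomialToL2_map_ofReal (hM : ∀ᵐ x ∂μ, |x| ≤ M) (p : ℝ[X]) (f : Lp ℂ 2 μ) :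
    ⟪polynomialToL2 hM (p.map Complex.ofRealHom), f⟫_ℂ = ∫ x, p.eval x • f x ∂μ := by
  rw [L2.inner_def]
  refine integral_congr_ae ?_
  filter_upwards [coeFn_polynomialToL2 hM (p.map Complex.ofRealHom)] with x hx
  rw [hx, eval_map_complexOfRealHom, RCLike.inner_apply, Complex.conj_ofReal, Complex.real_smul,
    mul_comm]

theorem orthogonal_range_polynomialToL2 (hM : ∀ᵐ x ∂μ, |x| ≤ M) :
    (LinearMap.range (polynomialToL2 hM))ᗮ = ⊥ := by
  rw [Submodule.eq_bot_iff]
  intro f hf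
  have hf_int : Integrable f μ := (Lp.memLp f).integrable one_le_two
  rw [Lp.eq_zero_iff_ae_eq_zero]
  refine ae_eq_zero_of_forall_integral_polynomial_smul_eq_zero hf_int hM fun p => ?_
  rw [← inner_polynomialToL2_map_ofReal hM]
  exact (Submodule.mem_orthogonal _ f).mp hf _ ⟨_, rfl⟩

/-- The functional `p ↦ ⟪1, R p⟫`, which is `p ↦ ∫ p r dμ` when `R` is multiplication by `r`. -/
noncomputable def weightFunctional (hM : ∀ᵐ x ∂μ, |x| ≤ M) (R : Lp ℂ 2 μ →L[ℂ] Lp ℂ 2 μ) :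
    ℂ[X] →ₗ[ℂ] ℂ :=
  innerₛₗ ℂ (polynomialToL2 hM 1) ∘ₗ R ∘ₗ polynomialToL2 hM

variable {r : ℝ → ℂ} {R : Lp ℂ 2 μ →L[ℂ] Lp ℂ 2 μ}

theorem inner_mulOperator_polynomialToL2 (hM : ∀ᵐ x ∂μ, |x| ≤ M) (hR : IsMulOperator r R)
    (p : ℝ[X]) (q : ℂ[X]) :
    ⟪polynomialToL2 hM (p.map Complex.ofRealHom), R (polynomialToL2 hM q)⟫_ℂ =
      ∫ x, (p.map Complex.ofRealHom * q).eval (x : ℂ) * r x ∂μ := by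
  rw [inner_polynomialToL2_map_ofReal]
  refine integral_congr_ae ?_
  filter_upwards [hR (polynomialToL2 hM q), coeFn_polynomialToL2 hM q] with x hRx hq
  rw [hRx, hq, Complex.real_smul, eval_mul, eval_map_complexOfRealHom]
  ring

theorem weightFunctional_apply (hM : ∀ᵐ x ∂μ, |x| ≤ M) (hR : IsMulOperator r R) (p : ℂ[X]) :
    weightFunctional hM R p = ∫ x, p.eval (x : ℂ) * r x ∂μ := by
  simpa [weightFunctional] using inner_mulOperator_polynomialToL2 hM hR 1 p

end PolynomialsInL2

section OrthonormalPolynomials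

variable {μ : Measure ℝ} {l : ℕ → ℝ[X]}

namespace IsOrthonormalPolys

/-- The orthonormal polynomials `l n`, with complex coefficients, as a polynomial sequence. -/
noncomputable def sequence (hl : IsOrthonormalPolys μ l) : Polynomial.Sequence ℂ where
  elems' n := (l n).map Complex.ofRealHom
  degree_eq' n := by
    rw [degree_map, degree_eq_natDegree (leadingCoeff_ne_zero.mp (hl.leadingCoeff_pos n).ne'),
      hl.natDegree_eq]

theorem sequence_apply (hl : IsOrthonormalPolys μ l) (n : ℕ) :
    hl.sequence n = (l n).map Complex.ofRealHom :=
  rfl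

variable [IsFiniteMeasure μ] {M : ℝ}

theorem orthonormal_polynomialToL2 (hl : IsOrthonormalPolys μ l) (hM : ∀ᵐ x ∂μ, |x| ≤ M) :
    Orthonormal ℂ fun n => polynomialToL2 hM (hl.sequence n) := by
  rw [orthonormal_iff_ite]
  intro i j
  have hone : IsMulOperator (μ := μ) (1 : ℝ → ℂ) 1 := IsMulOperator.one
  have h := inner_mulOperator_polynomialToL2 hM hone (l i) ((l j).map Complex.ofRealHom)
  have heval (x : ℝ) : ((l i).map Complex.ofRealHom * (l j).map Complex.ofRealHom).eval (x : ℂ) *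
      (1 : ℝ → ℂ) x = ((l i).eval x * (l j).eval x : ℝ) := by
    rw [← Polynomial.map_mul, eval_map_complexOfRealHom, eval_mul, Pi.one_apply, mul_one]
  simp_rw [heval, integral_complex_ofReal, hl.orthonormal] at h
  exact_mod_cast h

theorem span_range_polynomialToL2 (hl : IsOrthonormalPolys μ l) (hM : ∀ᵐ x ∂μ, |x| ≤ M) :
    Submodule.span ℂ (Set.range fun n => polynomialToL2 hM (hl.sequence n)) =
      LinearMap.range (polynomialToL2 hM) := by
  rw [LinearMap.range_eq_map, ← hl.sequence.span fun n =>
    (leadingCoeff_ne_zero.mpr (hl.sequence.ne_zero n)).isUnit, Submodule.map_span,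
    ← Set.range_comp]
  rfl

/-- The orthonormal polynomials as a Hilbert basis of `L²(μ)`. -/
noncomputable def hilbertBasis (hl : IsOrthonormalPolys μ l) (hM : ∀ᵐ x ∂μ, |x| ≤ M) :
    HilbertBasis ℕ ℂ (Lp ℂ 2 μ) :=
  .mkOfOrthogonalEqBot (hl.orthonormal_polynomialToL2 hM) <| by
    rw [hl.span_range_polynomialToL2, orthogonal_range_polynomialToL2]

theorem hilbertBasis_apply (hl : IsOrthonormalPolys μ l) (hM : ∀ᵐ x ∂μ, |x| ≤ M) (n : ℕ) :
    hl.hilbertBasis hM n = polynomialToL2 hM (hl.sequence n) := by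
  rw [hilbertBasis, HilbertBasis.coe_mkOfOrthogonalEqBot]

theorem isPolynomialModel (hl : IsOrthonormalPolys μ l) (hM : ∀ᵐ x ∂μ, |x| ≤ M) {r : ℝ → ℂ}
    {R : (Lp ℂ 2 μ →L[ℂ] Lp ℂ 2 μ)ˣ} (hR : IsMulOperator r R.val) :
    IsPolynomialModel (hl.hilbertBasis hM) hl.sequence (polynomialToL2 hM) R
      (weightFunctional hM R) where
  map_eq_basis n := (hl.hilbertBasis_apply hM n).symm
  inner_apply n q := by
    rw [hl.hilbertBasis_apply, weightFunctional_apply hM hR, sequence_apply,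
      inner_mulOperator_polynomialToL2 hM hR]

end IsOrthonormalPolys

theorem IsM01.isJacobiRecurrence {a b : ℕ → ℝ} (h : IsM01 μ l a b) :
    IsJacobiRecurrence h.onp.sequence (fun n => (a n : ℂ)) (fun n => (b n : ℂ)) where
  zero := by
    simpa [IsOrthonormalPolys.sequence_apply, Polynomial.map_smul] using
      congrArg (Polynomial.map Complex.ofRealHom) h.recurrence_zero
  succ n := by
    simpa [IsOrthonormalPolys.sequence_apply, Polynomial.map_smul] using
      congrArg (Polynomial.map Complex.ofRealHom) (h.recurrence n)

end OrthonormalPolynomials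

section RationalWeight

variable {μ : Measure ℝ}

theorem ae_mem_msupp (μ : Measure ℝ) : ∀ᵐ x ∂μ, x ∈ msupp μ := by
  have hsupp : msupp μ = μ.support := by
    ext x
    rw [Measure.mem_support_iff_forall]
    simp [msupp, pos_iff_ne_zero]
  exact hsupp ▸ Measure.support_mem_ae

theorem exists_ae_abs_le (hμ : IsCompact (msupp μ)) : ∃ M : ℝ, ∀ᵐ x ∂μ, |x| ≤ M :=
  have ⟨M, hM⟩ := hμ.isBounded.exists_norm_le
  ⟨M, (ae_mem_msupp μ).mono hM⟩

theorem exists_pos_ae_le_norm_sub (hμ : IsCompact (msupp μ)) {c : ℂ} (hc : c ∉ msuppC μ) :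
    ∃ δ > 0, ∀ᵐ x : ℝ ∂μ, δ ≤ ‖(x : ℂ) - c‖ := by
  have hclosed : IsClosed (msuppC μ) := (hμ.image Complex.continuous_ofReal).isClosed
  obtain ⟨δ, hδ, hball⟩ := Metric.isOpen_iff.mp hclosed.isOpen_compl c hc
  refine ⟨δ, hδ, (ae_mem_msupp μ).mono fun x hx => ?_⟩
  rw [← dist_eq_norm]
  exact not_lt.mp fun hlt => hball hlt ⟨x, hx, rfl⟩

variable {l : ℕ → ℝ[X]} {a b : ℕ → ℝ}

theorem IsM01.tendsto_ofReal_a (h : IsM01 μ l a b) :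
    Tendsto (fun n => (a n : ℂ)) atTop (𝓝 2⁻¹) := by
  simpa using h.tendsto_a.ofReal

theorem IsM01.tendsto_ofReal_b (h : IsM01 μ l a b) : Tendsto (fun n => (b n : ℂ)) atTop (𝓝 0) := by
  simpa using h.tendsto_b.ofReal

variable [IsFiniteMeasure μ] {M : ℝ}

theorem IsM01.sub_const_mem_mulOperatorSymbols (h : IsM01 μ l a b) (hμ : IsCompact (msupp μ))
    (hM : ∀ᵐ x ∂μ, |x| ≤ M) {c : ℂ} (hc : c ∉ msuppC μ) :
    (fun x : ℝ => (x : ℂ) - c) ∈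
      mulOperatorSymbols (wienerHopfUnits (h.onp.hilbertBasis hM)) := by
  obtain ⟨J, hJ⟩ := exists_isMulOperator (μ := μ) (m := fun x : ℝ => (x : ℂ))
    Complex.continuous_ofReal.aestronglyMeasurable (by simpa using hM)
  obtain ⟨δ, hδ, hcδ⟩ := exists_pos_ae_le_norm_sub hμ hc
  have hJc := hJ.sub_smul_one c
  obtain ⟨X, hX⟩ := hJc.isUnit
    (Complex.continuous_ofReal.sub continuous_const).aestronglyMeasurable hδ hcδ
  refine ⟨X, mem_wienerHopfUnits_of_eq_sub_smul_one ?_ hX, hX ▸ hJc⟩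
  exact isCompactOperator_sub_smul_of_isJacobiRecurrence
    (fun n => (h.onp.hilbertBasis_apply hM n).symm) (hJ.apply_polynomialToL2 hM)
    h.isJacobiRecurrence h.tendsto_ofReal_a h.tendsto_ofReal_b

theorem IsM01.ratFn_mem_mulOperatorSymbols (h : IsM01 μ l a b) (hμ : IsCompact (msupp μ))
    (hM : ∀ᵐ x ∂μ, |x| ≤ M) {m k : ℕ} {c : Fin m → ℂ} {d : Fin k → ℂ} (A : Fin m → ℕ)
    (B : Fin k → ℕ) (hc : ∀ i, c i ∉ msuppC μ) (hd : ∀ j, d j ∉ msuppC μ) :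
    ratFn c d A B ∈ mulOperatorSymbols (wienerHopfUnits (h.onp.hilbertBasis hM)) := by
  have hprod {s : ℕ} {c : Fin s → ℂ} (A : Fin s → ℕ) (hc : ∀ i, c i ∉ msuppC μ) :=
    prod_mem (t := Finset.univ) fun i _ =>
      pow_mem (h.sub_const_mem_mulOperatorSymbols hμ hM (hc i)) (A i)
  have hratFn : ratFn c d A B = (∏ i, (fun x : ℝ => (x : ℂ) - c i) ^ A i) *
      (∏ j, (fun x : ℝ => (x : ℂ) - d j) ^ B j)⁻¹ := by
    ext x
    simp [ratFn, div_eq_mul_inv]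
  exact hratFn ▸ mul_mem (hprod A hc) (inv_mem_mulOperatorSymbols (hprod B hd))

end RationalWeight

theorem IsQPoly.isMinimalOrthogonal {μ : Measure ℝ} {r : ℝ → ℂ} {L : ℂ[X] →ₗ[ℂ] ℂ} {n : ℕ}
    {Q : ℂ[X]} (hQ : IsQPoly μ r n Q) (hL : ∀ p, L p = ∫ x, p.eval (x : ℂ) * r x ∂μ) :
    IsMinimalOrthogonal L n Q := by
  have hmem (q : ℂ[X]) : q ∈ orthogonalBelow L n ↔ ∀ p : ℂ[X], p.degree < n →
      ∫ x, p.eval (x : ℂ) * q.eval (x : ℂ) * r x ∂μ = 0 := by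
    simp only [mem_orthogonalBelow, hL, eval_mul]
  exact ⟨hQ.1, (hmem Q).mpr hQ.2.1, fun q hq hq₀ => hQ.2.2 q hq₀ ((hmem q).mp hq)⟩

/-- Theorem 2, formulas (3.16)-(3.19). For `μ ∈ M(0,1)`, for
all large `n` one has `1/κ_n² = ∫ Q_n² r dμ ≠ 0` and the three-term recurrence
`Q_{n+1} = (z-β_n) Q_n - α_n² Q_{n-1}` with `β_n → 0` and `α_n² → 1/4`. -/
theorem three_term_recurrence_Q
    (μ : Measure ℝ) [IsFiniteMeasure μ] (l : ℕ → Polynomial ℝ) (a b : ℕ → ℝ)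
    (hcompact : IsCompact (msupp μ)) (hinf : (msupp μ).Infinite)
    (hM01 : IsM01 μ l a b)
    (h ℓ : ℕ) (c : Fin h → ℂ) (d : Fin ℓ → ℂ) (A : Fin h → ℕ) (B : Fin ℓ → ℕ)
    (hA : ∀ i, 0 < A i) (hB : ∀ j, 0 < B j)
    (hc : ∀ i, c i ∉ msuppC μ) (hd : ∀ j, d j ∉ msuppC μ)
    (hcd : ∀ i j, c i ≠ d j)
    (Q : ℕ → Polynomial ℂ) (hQ : ∀ n, IsQPoly μ (ratFn c d A B) n (Q n))
    (IntQ β αsq : ℕ → ℂ)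
    (hIntQ : ∀ n, IntQ n =
      ∫ x, ((Q n).eval (x : ℂ)) ^ 2 * ratFn c d A B x ∂μ)
    (hβ : ∀ n, β n =
      (IntQ n)⁻¹ * ∫ x, (x : ℂ) * ((Q n).eval (x : ℂ)) ^ 2 * ratFn c d A B x ∂μ)
    (hαsq : ∀ n, 1 ≤ n → αsq n = IntQ n / IntQ (n - 1)) :
    (∀ᶠ n in atTop, IntQ n ≠ 0) ∧
    (∃ N : ℕ, ∀ n, N ≤ n →
      Q (n + 2) = (X - C (β (n + 1))) * Q (n + 1) - C (αsq (n + 1)) * Q n) ∧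
    Tendsto β atTop (nhds 0) ∧
    Tendsto αsq atTop (nhds (1 / 4)) := by
  obtain ⟨M, hM⟩ := exists_ae_abs_le hcompact
  obtain ⟨R, hRG, hR⟩ := hM01.ratFn_mem_mulOperatorSymbols hcompact hM A B hc hd
  obtain ⟨Y, hY, hY₀⟩ := tendsto_compression_of_mem_wienerHopfUnits (inv_mem hRG)
  set L := weightFunctional hM R.val
  have hL (p : ℂ[X]) : L p = ∫ x, p.eval (x : ℂ) * ratFn c d A B x ∂μ :=
    weightFunctional_apply hM hR p
  have hmodel := hM01.onp.isPolynomialModel hM hR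
  have hQL (n : ℕ) := (hQ n).isMinimalOrthogonal hL
  have hIntL (n : ℕ) : IntQ n = L (Q n * Q n) := by simp [hIntQ, hL, sq]
  have hβL (n : ℕ) : β n = L (X * (Q n * Q n)) / L (Q n * Q n) := by
    simp [hβ, hIntL, hL, sq, div_eq_inv_mul]
  have hαL (n : ℕ) : αsq (n + 1) = L (Q (n + 1) * Q (n + 1)) / L (Q n * Q n) := by
    simp [hαsq, hIntL]
  refine ⟨?_, eventually_atTop.mp ?_, ?_, (tendsto_add_atTop_iff_nat 1).mp ?_⟩
  · simpa only [hIntL] using hmodel.eventually_apply_mul_self_ne_zero hQL hY hY₀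
  · simpa only [hβL, hαL] using hmodel.eventually_three_term_recurrence hQL hY hY₀
  · exact (tendsto_congr hβL).mpr <| hmodel.tendsto_apply_X_mul_div hQL hY hY₀
      hM01.isJacobiRecurrence hM01.tendsto_ofReal_a hM01.tendsto_ofReal_b
  · rw [show (1 / 4 : ℂ) = 2⁻¹ ^ 2 by norm_num]
    exact (tendsto_congr hαL).mpr <| hmodel.tendsto_apply_mul_self_div hQL hY hY₀
      hM01.isJacobiRecurrence hM01.tendsto_ofReal_a
end

section
/- Let μ ∈ M(0,1), and for large n set κ_n² = (∫ Q_n²(x) r(x) dμ(x))^{−1} and let τ_n be the (positive) leading coefficient of the nth orthonormal polynomial l_n with respect to μ. Then lim_{n→∞} κ_n²/τ_n² = (−2)^{A−B} · ∏_{j=1}^{ℓ} φ(d_j)^{B_j} / ∏_{i=1}^{h} φ(c_i)^{A_i}. -/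
open MeasureTheory Polynomial Filter Topology Set
open scoped Classical

/-!
Work in the Banach algebra `C(S_μ, ℂ)` with its coordinate function `x` and the functional
`Λ f = ∫ f dμ`, and attach three asymptotic facts to a weight `w`: its monic orthogonal polynomials
satisfy `P_{n+1}/P_n → φ/2` off the spectrum of `x`, their functions of the second kind satisfy
`q_{n+1}/q_n → 1/(2φ)`, and `τ_n² ∫ P_n² w dμ → K`.

For `w = 1` these come from the resolvent `(x - z)⁻¹`: in the orthonormal basis its entries are
bounded and tend to zero away from the diagonal, so every limit along the diagonal solves the
free recurrence and is forced to decay geometrically with ratio `1/φ(z)`; as the entries factor as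
`l_n(z) q_m(z)` for `n ≤ m`, both ratio limits follow.

Multiplying the weight by `x - c` replaces `P_n` by `(P_{n+1} - ρ_n P_n)/(x - c)` (Christoffel) and
`K` by `-φ(c)/2 * K`; dividing it by `x - d` replaces `P_n` by `P_n - σ_n P_{n-1}` (Geronimus) and
`K` by `-2/φ(d) * K`. After finitely many such steps the weight is `r`. Since `K ≠ 0`, no degree is
lost for large `n`, so that `Q_n` has the same norm as `P_n`.
-/

section Joukowski

lemma sqrtB_sq {z : ℂ} (hz : z ≠ 0) : sqrtB z ^ 2 = z ^ 2 - 1 := by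
  have hsq : ((1 - 1 / z ^ 2 : ℂ) ^ ((1 : ℂ) / 2)) ^ 2 = 1 - 1 / z ^ 2 := by
    rw [one_div 2]
    exact Complex.cpow_nat_inv_pow _ two_ne_zero
  rw [sqrtB, mul_pow, hsq, mul_sub, mul_one, mul_one_div_cancel (pow_ne_zero 2 hz)]

lemma phi_mul_sub_sqrtB {z : ℂ} (hz : z ≠ 0) : phi z * (z - sqrtB z) = 1 := by
  rw [phi]
  linear_combination -sqrtB_sq hz

lemma phi_ne_zero {z : ℂ} (hz : z ≠ 0) : phi z ≠ 0 :=
  left_ne_zero_of_mul_eq_one (phi_mul_sub_sqrtB hz)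

lemma phi_inv {z : ℂ} (hz : z ≠ 0) : (phi z)⁻¹ = z - sqrtB z :=
  inv_eq_of_mul_eq_one_right (phi_mul_sub_sqrtB hz)

lemma phi_add_inv {z : ℂ} (hz : z ≠ 0) : phi z + (phi z)⁻¹ = 2 * z := by
  rw [phi_inv hz, phi]
  ring

lemma cpow_half_re (w : ℂ) : (w ^ ((1 : ℂ) / 2)).re = √((‖w‖ + w.re) / 2) := by
  rw [one_div, Complex.cpow_inv_two_re]

lemma norm_one_sub_le_norm_one_add {s : ℂ} (hs : 0 ≤ s.re) : ‖1 - s‖ ≤ ‖1 + s‖ := by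
  rw [← sq_le_sq₀ (norm_nonneg _) (norm_nonneg _), ← Complex.normSq_eq_norm_sq,
    ← Complex.normSq_eq_norm_sq, Complex.normSq_apply, Complex.normSq_apply]
  simp only [Complex.sub_re, Complex.one_re, Complex.sub_im, Complex.one_im, Complex.add_re,
    Complex.add_im]
  nlinarith

lemma norm_phi_inv_le_norm_phi {z : ℂ} (hz : z ≠ 0) : ‖(phi z)⁻¹‖ ≤ ‖phi z‖ := by
  have hre : 0 ≤ ((1 - 1 / z ^ 2) ^ ((1 : ℂ) / 2)).re := by
    rw [cpow_half_re]
    positivity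
  calc ‖(phi z)⁻¹‖ = ‖z‖ * ‖1 - (1 - 1 / z ^ 2) ^ ((1 : ℂ) / 2)‖ := by
        rw [phi_inv hz, ← norm_mul, sqrtB, mul_sub, mul_one]
    _ ≤ ‖z‖ * ‖1 + (1 - 1 / z ^ 2) ^ ((1 : ℂ) / 2)‖ := by
        gcongr
        exact norm_one_sub_le_norm_one_add hre
    _ = ‖phi z‖ := by rw [← norm_mul, phi, sqrtB, mul_add, mul_one]

lemma one_le_norm_phi {z : ℂ} (hz : z ≠ 0) : 1 ≤ ‖phi z‖ := by
  have hpos : 0 < ‖phi z‖ := norm_pos_iff.2 (phi_ne_zero hz)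
  by_contra! hlt
  refine (norm_phi_inv_le_norm_phi hz).not_gt (hlt.trans ?_)
  rwa [norm_inv, one_lt_inv₀ hpos]

lemma eq_re_of_norm_eq_one {p z : ℂ} (hp : ‖p‖ = 1) (hpz : p + p⁻¹ = 2 * z) : z = p.re := by
  rw [Complex.inv_eq_conj hp, Complex.add_conj, Complex.ofReal_mul, Complex.ofReal_ofNat] at hpz
  exact (mul_left_cancel₀ two_ne_zero hpz).symm

lemma exists_norm_eq_one_add_inv_eq {t : ℝ} (ht : t ∈ Icc (-1 : ℝ) 1) :
    ∃ p : ℂ, ‖p‖ = 1 ∧ p + p⁻¹ = 2 * t := by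
  have hnorm := Complex.norm_exp_ofReal_mul_I (Real.arccos t)
  refine ⟨Complex.exp (Real.arccos t * Complex.I), hnorm, ?_⟩
  rw [Complex.inv_eq_conj hnorm, Complex.add_conj, Complex.exp_ofReal_mul_I_re,
    Real.cos_arccos ht.1 ht.2, Complex.ofReal_mul, Complex.ofReal_ofNat]

lemma ne_zero_of_forall_mem_Icc_ne {z : ℂ} (hz : ∀ t ∈ Icc (-1 : ℝ) 1, z ≠ t) : z ≠ 0 := by
  simpa using hz 0 (by norm_num)

lemma one_lt_norm_phi {z : ℂ} (hz : ∀ t ∈ Icc (-1 : ℝ) 1, z ≠ t) : 1 < ‖phi z‖ := by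
  have hz₀ := ne_zero_of_forall_mem_Icc_ne hz
  refine lt_of_le_of_ne (one_le_norm_phi hz₀) fun h => ?_
  have hre : |(phi z).re| ≤ 1 := h ▸ Complex.abs_re_le_norm _
  exact hz _ (abs_le.1 hre) (eq_re_of_norm_eq_one h.symm (phi_add_inv hz₀))

lemma one_sub_one_div_sq_mem_slitPlane {z : ℂ} (hz : ∀ t ∈ Icc (-1 : ℝ) 1, z ≠ t) :
    1 - 1 / z ^ 2 ∈ Complex.slitPlane := by
  have hz₀ := ne_zero_of_forall_mem_Icc_ne hz
  set s : ℂ := (1 - 1 / z ^ 2) ^ ((1 : ℂ) / 2) with hs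
  by_contra hslit
  have hre : s.re = 0 := by
    obtain ⟨hre, him⟩ := not_or.1 (Complex.mem_slitPlane_iff.not.1 hslit)
    rw [hs, cpow_half_re, ← Complex.abs_re_eq_norm.2 (not_not.1 him), abs_of_nonpos (not_lt.1 hre),
      neg_add_cancel, zero_div, Real.sqrt_zero]
  -- a square root on the imaginary axis forces `‖φ(z)‖ = ‖φ(z)⁻¹‖ = 1`
  have hle : ‖phi z‖ ≤ ‖(phi z)⁻¹‖ := by
    have := norm_one_sub_le_norm_one_add (s := -s) (by simp [hre])
    rw [phi_inv hz₀, phi, sqrtB, ← hs, ← mul_one_add, ← mul_one_sub, norm_mul, norm_mul]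
    gcongr
    simpa only [sub_neg_eq_add, ← sub_eq_add_neg] using this
  have hlt : ‖(phi z)⁻¹‖ < 1 := by
    rw [norm_inv]
    exact inv_lt_one_of_one_lt₀ (one_lt_norm_phi hz)
  linarith [one_lt_norm_phi hz]

lemma continuousAt_phi {z : ℂ} (hz : ∀ t ∈ Icc (-1 : ℝ) 1, z ≠ t) : ContinuousAt phi z := by
  have hbase : ContinuousAt (fun w : ℂ => 1 - 1 / w ^ 2) z :=
    continuousAt_const.sub
      (continuousAt_const.div (by fun_prop) (pow_ne_zero _ (ne_zero_of_forall_mem_Icc_ne hz)))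
  exact continuousAt_id.add (continuousAt_id.mul
    (hbase.cpow continuousAt_const (one_sub_one_div_sq_mem_slitPlane hz)))

lemma phi_mul_phi_sub_one_ne_zero {y z : ℂ} (hy : ∀ t ∈ Icc (-1 : ℝ) 1, y ≠ t)
    (hz : ∀ t ∈ Icc (-1 : ℝ) 1, z ≠ t) : phi y * phi z - 1 ≠ 0 := by
  intro h
  have hmul := congrArg norm (sub_eq_zero.1 h)
  rw [norm_mul, norm_one] at hmul
  exact (one_lt_mul_of_lt_of_le (one_lt_norm_phi hy) (one_lt_norm_phi hz).le).ne' hmul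

lemma sub_mul_phi_quotient {y z : ℂ} (hy : ∀ t ∈ Icc (-1 : ℝ) 1, y ≠ t)
    (hz : ∀ t ∈ Icc (-1 : ℝ) 1, z ≠ t) :
    (y - z) * (phi y * phi z / (phi y * phi z - 1)) = phi y / 2 - phi z / 2 := by
  have hy₀ := ne_zero_of_forall_mem_Icc_ne hy
  have hz₀ := ne_zero_of_forall_mem_Icc_ne hz
  have hyφ := phi_ne_zero hy₀
  have hzφ := phi_ne_zero hz₀
  have hsub : y - z = (phi y + (phi y)⁻¹ - phi z - (phi z)⁻¹) / 2 := by
    linear_combination (phi_add_inv hz₀ - phi_add_inv hy₀) / 2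
  have := phi_mul_phi_sub_one_ne_zero hy hz
  rw [hsub]
  field_simp
  ring

lemma sub_mul_phi_quotient_inv {y z : ℂ} (hy : ∀ t ∈ Icc (-1 : ℝ) 1, y ≠ t)
    (hz : ∀ t ∈ Icc (-1 : ℝ) 1, z ≠ t) :
    (y - z) * -(phi y * phi z - 1)⁻¹ = (2 * phi y)⁻¹ - (2 * phi z)⁻¹ := by
  have hyφ := phi_ne_zero (ne_zero_of_forall_mem_Icc_ne hy)
  have hzφ := phi_ne_zero (ne_zero_of_forall_mem_Icc_ne hz)
  have := phi_mul_phi_sub_one_ne_zero hy hz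
  have hquot := sub_mul_phi_quotient hy hz
  field_simp at hquot ⊢
  linear_combination -hquot

end Joukowski

section OrthogonalPolynomials

variable {R : Type*} [CommRing R] {L L' : R[X] →ₗ[R] R} {n : ℕ} {P P₁ Q : R[X]} {c ρ : R}

/-- `P` is the monic orthogonal polynomial of degree `n` for the linear functional `L`. The pairing
`L (p * P)` is bilinear also over `ℂ`, so `L (P * P)` may vanish. -/
structure IsMonicOrthogonal (L : R[X] →ₗ[R] R) (n : ℕ) (P : R[X]) : Prop where
  monic : P.Monic
  natDegree_eq : P.natDegree = n
  orthogonal : ∀ p : R[X], p.degree < n → L (p * P) = 0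

lemma degree_sub_lt_of_monic (hP : P.Monic) (hQ : Q.Monic) (hPn : P.natDegree = n)
    (hQn : Q.natDegree = n) : (Q - P).degree < n := by
  nontriviality R
  have hdeg : Q.degree = n := by rw [degree_eq_natDegree hQ.ne_zero, hQn]
  rw [← hdeg]
  exact degree_sub_lt_left (by rw [hdeg, degree_eq_natDegree hP.ne_zero, hPn]) hQ.ne_zero
    (hQ.leadingCoeff.trans hP.leadingCoeff.symm)

lemma degree_divByMonic_X_sub_C_lt [Nontrivial R] {p : R[X]} (c : R)
    (hp : p.degree < (n + 1 : ℕ)) : (p /ₘ (X - C c)).degree < n := by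
  rcases eq_or_ne (p /ₘ (X - C c)) 0 with h | h
  · rw [h, degree_zero]
    exact WithBot.bot_lt_coe n
  · have hdeg : p.degree ≠ ⊥ := fun h₀ => h (by rw [degree_eq_bot.1 h₀, zero_divByMonic])
    have hone : ¬ p.degree < 1 := fun hlt =>
      h ((divByMonic_eq_zero_iff (monic_X_sub_C c)).2 (by rwa [degree_X_sub_C]))
    rw [degree_eq_natDegree (degree_ne_bot.1 hdeg)] at hp hone
    rw [degree_eq_natDegree h, natDegree_divByMonic p (monic_X_sub_C c), natDegree_X_sub_C]
    norm_cast at *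
    omega

namespace IsMonicOrthogonal

lemma apply_mul_of_monic (h : IsMonicOrthogonal L n P) (hQ : Q.Monic) (hQn : Q.natDegree = n) :
    L (Q * P) = L (P * P) := by
  have := h.orthogonal (Q - P) (degree_sub_lt_of_monic h.monic hQ h.natDegree_eq hQn)
  rwa [sub_mul, map_sub, sub_eq_zero] at this

lemma apply_mul_self_eq (hP : IsMonicOrthogonal L n P) (hQ : IsMonicOrthogonal L n Q) :
    L (Q * Q) = L (P * P) := by
  rw [← hQ.apply_mul_of_monic hP.monic hP.natDegree_eq, mul_comm,
    hP.apply_mul_of_monic hQ.monic hQ.natDegree_eq]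

lemma apply_mul_sub (h₁ : IsMonicOrthogonal L (n + 1) P₁) {p : R[X]}
    (hp : p.degree < (n + 1 : ℕ)) : L (p * (P₁ - C ρ * P)) = -ρ * L (p * P) := by
  rw [mul_sub, map_sub, h₁.orthogonal p hp, mul_left_comm, ← smul_eq_C_mul, map_smul, smul_eq_mul,
    zero_sub, neg_mul]

lemma apply_mul_sub_of_monic (h₁ : IsMonicOrthogonal L (n + 1) P₁) (h : IsMonicOrthogonal L n P)
    (hQ : Q.Monic) (hQn : Q.natDegree = n) : L (Q * (P₁ - C ρ * P)) = -ρ * L (P * P) := by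
  have hlt : Q.degree < (n + 1 : ℕ) :=
    degree_le_natDegree.trans_lt (by rw [hQn]; exact_mod_cast n.lt_succ_self)
  rw [h₁.apply_mul_sub hlt, h.apply_mul_of_monic hQ hQn]

lemma apply_mul_sub_eq_zero (h₁ : IsMonicOrthogonal L (n + 1) P₁) (h : IsMonicOrthogonal L n P)
    {p : R[X]} (hp : p.degree < n) : L (p * (P₁ - C ρ * P)) = 0 := by
  rw [h₁.apply_mul_sub (hp.trans (by exact_mod_cast n.lt_succ_self)), h.orthogonal p hp, mul_zero]

variable [Nontrivial R]

lemma degree_C_mul_lt (h₁ : IsMonicOrthogonal L (n + 1) P₁) (h : IsMonicOrthogonal L n P) :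
    (C ρ * P).degree < P₁.degree := by
  rw [degree_eq_natDegree h₁.monic.ne_zero, h₁.natDegree_eq]
  refine degree_le_natDegree.trans_lt ?_
  exact_mod_cast Nat.lt_succ_of_le ((natDegree_C_mul_le ρ P).trans h.natDegree_eq.le)

lemma monic_sub (h₁ : IsMonicOrthogonal L (n + 1) P₁) (h : IsMonicOrthogonal L n P) :
    (P₁ - C ρ * P).Monic :=
  h₁.monic.sub_of_left (degree_C_mul_lt h₁ h)

lemma natDegree_sub (h₁ : IsMonicOrthogonal L (n + 1) P₁) (h : IsMonicOrthogonal L n P) :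
    (P₁ - C ρ * P).natDegree = n + 1 := by
  rw [← h₁.natDegree_eq]
  exact natDegree_eq_of_degree_eq (degree_sub_eq_left_of_degree_lt (degree_C_mul_lt h₁ h))

lemma christoffel (h₁ : IsMonicOrthogonal L (n + 1) P₁) (h : IsMonicOrthogonal L n P)
    (hL : ∀ p, L' p = L ((X - C c) * p)) (hQ : (X - C c) * Q = P₁ - C ρ * P) :
    IsMonicOrthogonal L' n Q ∧ L' (Q * Q) = -ρ * L (P * P) := by
  have hmonic : Q.Monic := (monic_X_sub_C c).of_mul_monic_left (hQ ▸ h₁.monic_sub h)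
  have hdeg : Q.natDegree = n := by
    have := h₁.natDegree_sub h (ρ := ρ)
    rw [← hQ, (monic_X_sub_C c).natDegree_mul hmonic, natDegree_X_sub_C] at this
    omega
  have hmul (p : R[X]) : L' (p * Q) = L (p * (P₁ - C ρ * P)) := by
    rw [hL, mul_left_comm, hQ]
  exact ⟨⟨hmonic, hdeg, fun p hp => (hmul p).trans (h₁.apply_mul_sub_eq_zero h hp)⟩,
    (hmul Q).trans (h₁.apply_mul_sub_of_monic h hmonic hdeg)⟩

lemma geronimus (h₁ : IsMonicOrthogonal L (n + 1) P₁) (h : IsMonicOrthogonal L n P)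
    (hL : ∀ p, L p = L' ((X - C c) * p)) (hρ : L' (P₁ - C ρ * P) = 0) :
    IsMonicOrthogonal L' (n + 1) (P₁ - C ρ * P) ∧
      L' ((P₁ - C ρ * P) * (P₁ - C ρ * P)) = -ρ * L (P * P) := by
  have hmonic := h₁.monic_sub h (ρ := ρ)
  have hdeg := h₁.natDegree_sub h (ρ := ρ)
  have hdiv (p : R[X]) : L' (p * (P₁ - C ρ * P)) = L ((p /ₘ (X - C c)) * (P₁ - C ρ * P)) := by
    conv_lhs => rw [← modByMonic_add_div p (X - C c), modByMonic_X_sub_C_eq_C_eval]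
    rw [add_mul, map_add, ← smul_eq_C_mul, map_smul, hρ, smul_zero, zero_add, mul_assoc, ← hL]
  refine ⟨⟨hmonic, hdeg, fun p hp => ?_⟩, ?_⟩
  · rw [hdiv, h₁.apply_mul_sub_eq_zero h (degree_divByMonic_X_sub_C_lt c hp)]
  · rw [hdiv, h₁.apply_mul_sub_of_monic h]
    · rw [Monic, leadingCoeff_divByMonic_of_monic (monic_X_sub_C c), hmonic.leadingCoeff]
      rw [degree_X_sub_C, degree_eq_natDegree hmonic.ne_zero, hdeg]
      exact_mod_cast Nat.le_add_left 1 n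
    · rw [natDegree_divByMonic _ (monic_X_sub_C c), natDegree_X_sub_C, hdeg, Nat.add_sub_cancel]

lemma apply_mul_self_eq_zero {k : ℕ} (h : IsMonicOrthogonal L k P) (hQ : Q.Monic)
    (hQL : ∀ p : R[X], p.degree < n → L (p * Q) = 0) (hle : Q.natDegree ≤ k)
    (hlt : 2 * k < n + Q.natDegree) : L (P * P) = 0 := by
  have hX : (X ^ (k - Q.natDegree) : R[X]).Monic := monic_X_pow _
  have hdeg : (X ^ (k - Q.natDegree) * P : R[X]).degree < n := by
    rw [degree_eq_natDegree (hX.mul h.monic).ne_zero, hX.natDegree_mul h.monic, natDegree_X_pow,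
      h.natDegree_eq]
    norm_cast
    omega
  rw [← h.apply_mul_of_monic (hX.mul hQ), mul_right_comm, hQL _ hdeg]
  rw [hX.natDegree_mul hQ, natDegree_X_pow, Nat.sub_add_cancel hle]

end IsMonicOrthogonal

lemma eventually_isMonicOrthogonal_of_minimal [Nontrivial R] {P Q : ℕ → R[X]}
    (hP : ∀ᶠ n in atTop, IsMonicOrthogonal L n (P n)) (hPL : ∀ᶠ n in atTop, L (P n * P n) ≠ 0)
    (hQ : ∀ n, (Q n).Monic) (hQL : ∀ n : ℕ, ∀ p : R[X], p.degree < n → L (p * Q n) = 0)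
    (hmin : ∀ n : ℕ, ∀ q : R[X], q ≠ 0 → (∀ p : R[X], p.degree < n → L (p * q) = 0) →
      (Q n).degree ≤ q.degree) :
    ∀ᶠ n in atTop, IsMonicOrthogonal L n (Q n) := by
  obtain ⟨N, hN⟩ := eventually_atTop.1 (hP.and hPL)
  filter_upwards [eventually_gt_atTop (2 * N)] with n hn
  obtain ⟨hPn, -⟩ := hN n (by omega)
  have hle : (Q n).natDegree ≤ n :=
    (natDegree_le_natDegree (hmin n (P n) hPn.monic.ne_zero hPn.orthogonal)).trans
      hPn.natDegree_eq.le
  refine ⟨hQ n, hle.antisymm (not_lt.1 fun hlt => ?_), hQL n⟩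
  -- a drop of the degree below `n` would make some `P k` with `k ≥ N` isotropic
  obtain ⟨hPk, hne⟩ := hN (max (Q n).natDegree N) (le_max_right _ _)
  exact hne (hPk.apply_mul_self_eq_zero (hQ n) (hQL n) (le_max_left _ _) (by omega))

lemma apply_mul_eq_zero_of_orthogonal_sequence {p : ℕ → R[X]} (hdeg : ∀ n, (p n).degree = n)
    (hunit : ∀ n, IsUnit (p n).leadingCoeff)
    (horth : ∀ m n, m < n → L (p m * p n) = 0) {q : R[X]} (hq : q.degree < n) :
    L (q * p n) = 0 := by
  let S : Polynomial.Sequence R := ⟨p, hdeg⟩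
  have hmem : q ∈ Submodule.span R (S '' Iio n) := by
    rw [S.span_degreeLT fun i _ => hunit i]
    exact mem_degreeLT.2 hq
  have hle : Submodule.span R (S '' Iio n) ≤ LinearMap.ker (L ∘ₗ LinearMap.mulRight R (p n)) := by
    rw [Submodule.span_le]
    rintro - ⟨m, hm, rfl⟩
    exact horth m n hm
  exact hle hmem

end OrthogonalPolynomials

section RatioLimits

variable {X 𝕜 : Type*} [TopologicalSpace X] [NormedField 𝕜] {F G : ℕ → X → 𝕜} {s t : 𝕜} {z : X}

/-- The ratios `F (n + 1) / F n` converge continuously to `s` at `z`: in the limit `n → ∞` the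
argument is allowed to vary and tend to `z`. -/
def HasRatioLimitAt (F : ℕ → X → 𝕜) (s : 𝕜) (z : X) : Prop :=
  Tendsto (fun q : ℕ × X => F (q.1 + 1) q.2 / F q.1 q.2) (atTop ×ˢ 𝓝 z) (𝓝 s)

lemma tendsto_succ_prod {X : Type*} (l : Filter X) :
    Tendsto (fun q : ℕ × X => (q.1 + 1, q.2)) (atTop ×ˢ l) (atTop ×ˢ l) :=
  (tendsto_add_atTop_nat 1).prodMap tendsto_id

namespace HasRatioLimitAt

lemma tendsto (h : HasRatioLimitAt F s z) :
    Tendsto (fun n => F (n + 1) z / F n z) atTop (𝓝 s) :=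
  Tendsto.comp h (tendsto_id.prodMk tendsto_const_nhds)

lemma eventually_ne_zero (h : HasRatioLimitAt F s z) (hs : s ≠ 0) :
    ∀ᶠ q : ℕ × X in atTop ×ˢ 𝓝 z, F q.1 q.2 ≠ 0 :=
  (h.eventually_ne hs).mono fun q hq hF => hq (by rw [hF, div_zero])

lemma eventually_apply_ne_zero (h : HasRatioLimitAt F s z) (hs : s ≠ 0) :
    ∀ᶠ n in atTop, F n z ≠ 0 :=
  (h.tendsto.eventually_ne hs).mono fun n hn hF => hn (by rw [hF, div_zero])

lemma of_succ (h : HasRatioLimitAt (fun n => F (n + 1)) s z) : HasRatioLimitAt F s z := by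
  rw [HasRatioLimitAt, ← map_add_atTop_eq_nat 1, ← Filter.map_id (f := 𝓝 z), prod_map_map_eq]
  exact tendsto_map'_iff.2 h

lemma mul_seq (h : HasRatioLimitAt F s z) {c : ℕ → 𝕜}
    (hc : Tendsto (fun n => c (n + 1) / c n) atTop (𝓝 t)) :
    HasRatioLimitAt (fun n x => c n * F n x) (t * s) z :=
  ((hc.comp tendsto_fst).mul h).congr fun _ => div_mul_div_comm _ _ _ _

lemma of_tendsto_div (h : HasRatioLimitAt F s z) (hs : s ≠ 0) {k : 𝕜} (hk : k ≠ 0)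
    (hG : Tendsto (fun q : ℕ × X => G q.1 q.2 / F q.1 q.2) (atTop ×ˢ 𝓝 z) (𝓝 k)) :
    HasRatioLimitAt G s z := by
  have hratio := ((hG.comp (tendsto_succ_prod _)).div hG hk).mul h
  rw [div_self hk, one_mul] at hratio
  have hF := h.eventually_ne_zero hs
  refine hratio.congr' ?_
  filter_upwards [hF, (tendsto_succ_prod _).eventually hF] with q hq hq₁
  simp only [Function.comp_apply, Pi.div_apply]
  field_simp

lemma tendsto_sub_mul_div (h : HasRatioLimitAt F s z) (hs : s ≠ 0) {ρ : ℕ → 𝕜}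
    (hρ : Tendsto ρ atTop (𝓝 t)) :
    Tendsto (fun q : ℕ × X => (F (q.1 + 1) q.2 - ρ q.1 * F q.1 q.2) / F q.1 q.2)
      (atTop ×ˢ 𝓝 z) (𝓝 (s - t)) := by
  refine (Tendsto.sub h (hρ.comp tendsto_fst)).congr' ?_
  filter_upwards [h.eventually_ne_zero hs] with q hq
  rw [sub_div, mul_div_cancel_right₀ _ hq, Function.comp_apply]

lemma sub_mul (h : HasRatioLimitAt F s z) (hs : s ≠ 0) {ρ : ℕ → 𝕜} (hρ : Tendsto ρ atTop (𝓝 t))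
    (hst : s ≠ t) : HasRatioLimitAt (fun n x => F (n + 1) x - ρ n * F n x) s z :=
  h.of_tendsto_div hs (sub_ne_zero.2 hst) (h.tendsto_sub_mul_div hs hρ)

end HasRatioLimitAt

lemma eventually_forall_mem_of_isCompact {ι : Type*} {l : Filter ι} {K : Set X} (hK : IsCompact K)
    {p : ι × X → Prop} (h : ∀ y ∈ K, ∀ᶠ q in l ×ˢ 𝓝 y, p q) : ∀ᶠ i in l, ∀ y ∈ K, p (i, y) := by
  have hset : ∀ᶠ q in l ×ˢ 𝓝ˢ K, p q := hK.mem_prod_nhdsSet_of_forall h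
  exact hset.curry.mono fun i hi => hi.self_of_nhdsSet

lemma tendsto_prod_nhds_of_punctured {ι : Type*} {l : Filter ι} {f : ι → ℂ → ℂ} {g : ℂ → ℂ} {c : ℂ}
    (hf : ∀ᶠ q : ι × ℂ in l ×ˢ 𝓝 c, DifferentiableAt ℂ (f q.1) q.2) (hg : ContinuousAt g c)
    (hlim : ∀ᶠ y in 𝓝[≠] c, Tendsto (fun q : ι × ℂ => f q.1 q.2) (l ×ˢ 𝓝 y) (𝓝 (g y))) :
    Tendsto (fun q : ι × ℂ => f q.1 q.2) (l ×ˢ 𝓝 c) (𝓝 (g c)) := by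
  refine Metric.nhds_basis_closedBall.tendsto_right_iff.2 fun ε hε => ?_
  obtain ⟨p, hp, V, hV, hpV⟩ := eventually_prod_iff.1 hf
  have hnear := hg.eventually (Metric.ball_mem_nhds (g c) hε)
  obtain ⟨r, hr, hball⟩ := Metric.nhds_basis_closedBall.eventually_iff.1
    (hV.and (hnear.and (eventually_nhdsWithin_iff.1 hlim)))
  have hsphere : ∀ᶠ i in l, ∀ y ∈ Metric.sphere c r, f i y ∈ Metric.ball (g c) ε :=
    eventually_forall_mem_of_isCompact (isCompact_sphere c r)
      (p := fun q => f q.1 q.2 ∈ Metric.ball (g c) ε) fun y hy => by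
        obtain ⟨-, hgy, hfy⟩ := hball (Metric.sphere_subset_closedBall hy)
        exact (hfy (Metric.ne_of_mem_sphere hy hr.ne')).eventually (Metric.isOpen_ball.mem_nhds hgy)
  filter_upwards [(hp.and hsphere).prod_mk (Metric.closedBall_mem_nhds c hr)]
    with q ⟨⟨hpq, hq⟩, hqr⟩
  have hdiff : DifferentiableOn ℂ (fun y => f q.1 y - g c) (closure (Metric.ball c r)) :=
    fun y hy => ((hpV hpq (hball (Metric.closure_ball_subset_closedBall hy)).1).sub_const
      (g c)).differentiableWithinAt
  rw [mem_closedBall_iff_norm]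
  refine Complex.norm_le_of_forall_mem_frontier_norm_le Metric.isBounded_ball hdiff.diffContOnCl
    (fun y hy => ?_) (by rwa [closure_ball c hr.ne'])
  exact (mem_ball_iff_norm.1 (hq y (Metric.frontier_ball_subset_sphere hy))).le

variable {u v : ℕ → ℂ → ℂ} {S : Set ℂ} {c : ℂ} {s k : ℂ → ℂ}

lemma tendsto_div_of_dividedDifference (hS : IsOpen S)
    (hu : ∀ y ∈ S, HasRatioLimitAt u (s y) y) (hs : ∀ y ∈ S, s y ≠ 0) (hc : c ∈ S)
    (hv : ∀ᶠ n in atTop, ∀ y ∈ S, (y - c) * v n y = u (n + 1) y - u (n + 1) c / u n c * u n y)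
    (hk : ∀ y ∈ S, (y - c) * k y = s y - s c) {y : ℂ} (hy : y ∈ S) (hyc : y ≠ c) :
    Tendsto (fun q : ℕ × ℂ => v q.1 q.2 / u q.1 q.2) (atTop ×ˢ 𝓝 y) (𝓝 (k y)) := by
  have hnear : ∀ᶠ x in 𝓝 y, x ∈ S ∧ x ≠ c :=
    (hS.eventually_mem hy).and (isOpen_ne.eventually_mem hyc)
  have hsub : Tendsto (fun q : ℕ × ℂ => q.2 - c) (atTop ×ˢ 𝓝 y) (𝓝 (y - c)) :=
    (tendsto_id.sub_const c).comp tendsto_snd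
  have hlim := ((hu y hy).tendsto_sub_mul_div (hs y hy) (hu c hc).tendsto).div hsub
    (sub_ne_zero.2 hyc)
  rw [← hk y hy, mul_div_cancel_left₀ _ (sub_ne_zero.2 hyc)] at hlim
  refine hlim.congr' ?_
  filter_upwards [hv.prod_mk hnear] with q ⟨hq, hqS, hqc⟩
  rw [Pi.div_apply, ← hq _ hqS, mul_div_assoc, mul_div_cancel_left₀ _ (sub_ne_zero.2 hqc)]

lemma HasRatioLimitAt.of_dividedDifference (hS : IsOpen S)
    (hu : ∀ y ∈ S, HasRatioLimitAt u (s y) y) (hs : ∀ y ∈ S, s y ≠ 0)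
    (hud : ∀ n, DifferentiableOn ℂ (u n) S) (hvd : ∀ n, DifferentiableOn ℂ (v n) S) (hc : c ∈ S)
    (hv : ∀ᶠ n in atTop, ∀ y ∈ S, (y - c) * v n y = u (n + 1) y - u (n + 1) c / u n c * u n y)
    (hkc : ContinuousOn k S) (hk₀ : ∀ y ∈ S, k y ≠ 0)
    (hk : ∀ y ∈ S, (y - c) * k y = s y - s c) {z : ℂ} (hz : z ∈ S) :
    HasRatioLimitAt v (s z) z := by
  refine (hu z hz).of_tendsto_div (hs z hz) (hk₀ z hz) ?_
  rcases eq_or_ne z c with rfl | hzc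
  · have hSz := hS.mem_nhds hz
    refine tendsto_prod_nhds_of_punctured (f := fun n y => v n y / u n y) ?_
      (hkc.continuousAt hSz) ?_
    · have hmem : ∀ᶠ q : ℕ × ℂ in atTop ×ˢ 𝓝 z, q.2 ∈ S := tendsto_snd.eventually hSz
      filter_upwards [hmem, (hu z hz).eventually_ne_zero (hs z hz)] with q hqS hq
      have hqn := hS.mem_nhds hqS
      exact ((hvd q.1).differentiableAt hqn).div ((hud q.1).differentiableAt hqn) hq
    · filter_upwards [self_mem_nhdsWithin, mem_nhdsWithin_of_mem_nhds hSz] with y hyz hyS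
      exact tendsto_div_of_dividedDifference hS hu hs hc hv hk hyS hyz
  · exact tendsto_div_of_dividedDifference hS hu hs hc hv hk hz hzc

end RatioLimits

section BanachAlgebra

variable {𝒜 : Type*} [NormedCommRing 𝒜] [NormedAlgebra ℂ 𝒜] (Λ : 𝒜 →L[ℂ] ℂ) (x w : 𝒜)

/-- The linear functional `p ↦ Λ (w p(x))` on polynomials. For `𝒜 = C(S_μ, ℂ)`, `x` the coordinate
and `Λ` integration against `μ`, this is integration against `w dμ`. -/
noncomputable def momentFunctional : ℂ[X] →ₗ[ℂ] ℂ :=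
  Λ.toLinearMap ∘ₗ LinearMap.mulLeft ℂ w ∘ₗ (aeval x).toLinearMap

/-- The function of the second kind of a polynomial `p`, which for integration against a measure is
the Stieltjes transform `z ↦ ∫ p(t) w(t) / (z - t) dμ(t)`. -/
noncomputable def secondKind (p : ℂ[X]) (z : ℂ) : ℂ :=
  Λ (w * aeval x p * resolvent x z)

variable {Λ x w} {w' : 𝒜} {c z : ℂ}

lemma momentFunctional_apply (p : ℂ[X]) : momentFunctional Λ x w p = Λ (w * aeval x p) := rfl

lemma aeval_X_sub_C_mul (c : ℂ) (p : ℂ[X]) :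
    aeval x ((X - C c) * p) = (x - algebraMap ℂ 𝒜 c) * aeval x p := by
  rw [map_mul, map_sub, aeval_X, aeval_C]

lemma momentFunctional_X_sub_C_mul (hw : w' = w * (x - algebraMap ℂ 𝒜 c)) (p : ℂ[X]) :
    momentFunctional Λ x w' p = momentFunctional Λ x w ((X - C c) * p) := by
  rw [momentFunctional_apply, momentFunctional_apply, aeval_X_sub_C_mul, hw, mul_assoc]

lemma secondKind_X_sub_C_mul (hw : w' = w * (x - algebraMap ℂ 𝒜 c)) (p : ℂ[X]) :
    secondKind Λ x w' p z = secondKind Λ x w ((X - C c) * p) z := by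
  rw [secondKind, secondKind, aeval_X_sub_C_mul, hw, mul_assoc w]

lemma secondKind_C_mul (ρ : ℂ) (p : ℂ[X]) :
    secondKind Λ x w (C ρ * p) z = ρ * secondKind Λ x w p z := by
  rw [secondKind, ← smul_eq_C_mul, map_smul, mul_smul_comm, smul_mul_assoc, map_smul, smul_eq_mul,
    secondKind]

lemma secondKind_sub_C_mul (p q : ℂ[X]) (ρ : ℂ) :
    secondKind Λ x w (p - C ρ * q) z = secondKind Λ x w p z - ρ * secondKind Λ x w q z := by
  rw [← secondKind_C_mul]
  simp only [secondKind, map_sub, mul_sub, sub_mul]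

lemma sub_mul_resolvent (hz : z ∈ resolventSet ℂ x) :
    (algebraMap ℂ 𝒜 z - x) * resolvent x z = 1 :=
  Ring.mul_inverse_cancel _ hz

lemma sub_mul_secondKind (hw : w = w' * (x - algebraMap ℂ 𝒜 c)) (hz : z ∈ resolventSet ℂ x)
    (p : ℂ[X]) :
    (z - c) * secondKind Λ x w' p z = momentFunctional Λ x w' p + secondKind Λ x w p z := by
  have hsplit : algebraMap ℂ 𝒜 (z - c) * (w' * aeval x p * resolvent x z) =
      w' * aeval x p + w * aeval x p * resolvent x z := by
    rw [hw, map_sub]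
    linear_combination (w' * aeval x p) * sub_mul_resolvent hz
  rw [secondKind, ← smul_eq_mul, ← map_smul, Algebra.smul_def, hsplit, map_add,
    momentFunctional_apply, secondKind]

lemma momentFunctional_eq_neg_secondKind (hw : w = w' * (x - algebraMap ℂ 𝒜 c))
    (hc : c ∈ resolventSet ℂ x) (p : ℂ[X]) :
    momentFunctional Λ x w' p = -secondKind Λ x w p c := by
  have := sub_mul_secondKind (Λ := Λ) hw hc p
  rw [sub_self, zero_mul] at this
  exact eq_neg_of_add_eq_zero_left this.symm

lemma differentiableOn_secondKind [CompleteSpace 𝒜] (p : ℂ[X]) :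
    DifferentiableOn ℂ (secondKind Λ x w p) (resolventSet ℂ x) := fun z hz => by
  have hres := (spectrum.hasDerivAt_resolvent_const_left hz).differentiableAt
  exact (Λ.differentiableAt.comp z (hres.const_mul (w * aeval x p))).differentiableWithinAt

/-- The asymptotic data carried along when the weight is multiplied or divided by linear factors:
`P n` is eventually the `n`-th monic orthogonal polynomial for the weight `w`, and `K` is the limit
of its squared norm relative to `(τ n)⁻²`. -/
structure RatioAsymptotics (Λ : 𝒜 →L[ℂ] ℂ) (x : 𝒜) (τ : ℕ → ℂ) (w : 𝒜) (K : ℂ) (P : ℕ → ℂ[X]) :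
    Prop where
  mem_spectrum : ∀ t ∈ Icc (-1 : ℝ) 1, (t : ℂ) ∈ spectrum ℂ x
  isMonicOrthogonal : ∀ᶠ n in atTop, IsMonicOrthogonal (momentFunctional Λ x w) n (P n)
  hasRatioLimitAt_eval : ∀ z ∈ resolventSet ℂ x,
    HasRatioLimitAt (fun n y => (P n).eval y) (phi z / 2) z
  hasRatioLimitAt_secondKind : ∀ z ∈ resolventSet ℂ x,
    HasRatioLimitAt (fun n => secondKind Λ x w (P n)) (2 * phi z)⁻¹ z
  tendsto_apply_mul_self :
    Tendsto (fun n => momentFunctional Λ x w (P n * P n) * τ n ^ 2) atTop (𝓝 K)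

/-- The Christoffel transform `(P (n + 1) - ρ P n) / (X - c)`, with `ρ` cancelling the numerator
at `c`. -/
noncomputable def christoffelTransform (P : ℕ → ℂ[X]) (c : ℂ) (n : ℕ) : ℂ[X] :=
  (P (n + 1) - C ((P (n + 1)).eval c / (P n).eval c) * P n) /ₘ (X - C c)

/-- The Geronimus transform `P n - σ P (n - 1)`, with `σ` chosen so that `L` vanishes on it; the
index `n - 1` is meant for `0 < n`. -/
noncomputable def geronimusTransform (L : ℂ[X] →ₗ[ℂ] ℂ) (P : ℕ → ℂ[X]) (n : ℕ) : ℂ[X] :=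
  P n - C (L (P n) / L (P (n - 1))) * P (n - 1)

lemma X_sub_C_mul_christoffelTransform {P : ℕ → ℂ[X]} {n : ℕ} (h : (P n).eval c ≠ 0) :
    (X - C c) * christoffelTransform P c n =
      P (n + 1) - C ((P (n + 1)).eval c / (P n).eval c) * P n := by
  refine mul_divByMonic_eq_iff_isRoot.2 ?_
  rw [IsRoot.def, eval_sub, eval_C_mul, div_mul_cancel₀ _ h, sub_self]

lemma apply_geronimusTransform {L : ℂ[X] →ₗ[ℂ] ℂ} {P : ℕ → ℂ[X]} {n : ℕ} (h : L (P n) ≠ 0) :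
    L (geronimusTransform L P (n + 1)) = 0 := by
  rw [geronimusTransform, Nat.add_sub_cancel, map_sub, ← smul_eq_C_mul, map_smul, smul_eq_mul,
    div_mul_cancel₀ _ h, sub_self]

namespace RatioAsymptotics

variable {τ : ℕ → ℂ} {K : ℂ} {P : ℕ → ℂ[X]}

lemma forall_mem_Icc_ne (h : RatioAsymptotics Λ x τ w K P) (hz : z ∈ resolventSet ℂ x) :
    ∀ t ∈ Icc (-1 : ℝ) 1, z ≠ t :=
  fun t ht hzt => h.mem_spectrum t ht (hzt ▸ hz)

lemma phi_ne_zero (h : RatioAsymptotics Λ x τ w K P) (hz : z ∈ resolventSet ℂ x) : phi z ≠ 0 :=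
  _root_.phi_ne_zero (ne_zero_of_forall_mem_Icc_ne (h.forall_mem_Icc_ne hz))

lemma phi_mul_phi_sub_one_ne_zero (h : RatioAsymptotics Λ x τ w K P) (hz : z ∈ resolventSet ℂ x)
    (hc : c ∈ resolventSet ℂ x) : phi z * phi c - 1 ≠ 0 :=
  _root_.phi_mul_phi_sub_one_ne_zero (h.forall_mem_Icc_ne hz) (h.forall_mem_Icc_ne hc)

lemma phi_div_two_ne (h : RatioAsymptotics Λ x τ w K P) (hz : z ∈ resolventSet ℂ x)
    (hc : c ∈ resolventSet ℂ x) : phi z / 2 ≠ (2 * phi c)⁻¹ := by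
  intro heq
  refine h.phi_mul_phi_sub_one_ne_zero hz hc ?_
  have := h.phi_ne_zero hc
  field_simp at heq
  exact sub_eq_zero.2 heq

lemma continuousOn_phi (h : RatioAsymptotics Λ x τ w K P) : ContinuousOn phi (resolventSet ℂ x) :=
  fun _ hz => (continuousAt_phi (h.forall_mem_Icc_ne hz)).continuousWithinAt

lemma continuousOn_inv_phi_mul_phi_sub_one (h : RatioAsymptotics Λ x τ w K P)
    (hc : c ∈ resolventSet ℂ x) :
    ContinuousOn (fun y => (phi y * phi c - 1)⁻¹) (resolventSet ℂ x) :=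
  ((h.continuousOn_phi.mul_const _).sub continuousOn_const).inv₀ fun _ hy =>
    h.phi_mul_phi_sub_one_ne_zero hy hc

lemma eventually_eval_ne_zero (h : RatioAsymptotics Λ x τ w K P) (hc : c ∈ resolventSet ℂ x) :
    ∀ᶠ n in atTop, (P n).eval c ≠ 0 :=
  (h.hasRatioLimitAt_eval c hc).eventually_apply_ne_zero
    (div_ne_zero (h.phi_ne_zero hc) two_ne_zero)

lemma two_mul_phi_inv_ne_zero (h : RatioAsymptotics Λ x τ w K P) (hz : z ∈ resolventSet ℂ x) :
    (2 * phi z)⁻¹ ≠ 0 :=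
  inv_ne_zero (mul_ne_zero two_ne_zero (h.phi_ne_zero hz))

lemma hasRatioLimitAt_eval_christoffelTransform [CompleteSpace 𝒜]
    (h : RatioAsymptotics Λ x τ w K P) (hc : c ∈ resolventSet ℂ x) (hz : z ∈ resolventSet ℂ x) :
    HasRatioLimitAt (fun n y => (christoffelTransform P c n).eval y) (phi z / 2) z := by
  refine HasRatioLimitAt.of_dividedDifference (spectrum.isOpen_resolventSet x)
    h.hasRatioLimitAt_eval
    (k := fun y => phi y * phi c / (phi y * phi c - 1))
    (fun y hy => div_ne_zero (h.phi_ne_zero hy) two_ne_zero)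
    (fun n => (P n).differentiable.differentiableOn)
    (fun n => (christoffelTransform P c n).differentiable.differentiableOn) hc ?_
    ((h.continuousOn_phi.mul_const _).mul (h.continuousOn_inv_phi_mul_phi_sub_one hc))
    (fun y hy => div_ne_zero (mul_ne_zero (h.phi_ne_zero hy) (h.phi_ne_zero hc))
      (h.phi_mul_phi_sub_one_ne_zero hy hc))
    (fun y hy => sub_mul_phi_quotient (h.forall_mem_Icc_ne hy) (h.forall_mem_Icc_ne hc)) hz
  filter_upwards [h.eventually_eval_ne_zero hc] with n hn y _
  have := congrArg (eval y) (X_sub_C_mul_christoffelTransform hn)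
  rwa [eval_mul, eval_sub, eval_X, eval_C, eval_sub, eval_C_mul] at this

lemma hasRatioLimitAt_secondKind_christoffelTransform (h : RatioAsymptotics Λ x τ w K P)
    (hw : w' = w * (x - algebraMap ℂ 𝒜 c)) (hc : c ∈ resolventSet ℂ x)
    (hz : z ∈ resolventSet ℂ x) :
    HasRatioLimitAt (fun n => secondKind Λ x w' (christoffelTransform P c n)) (2 * phi z)⁻¹ z := by
  have hlim := (h.hasRatioLimitAt_secondKind z hz).sub_mul (h.two_mul_phi_inv_ne_zero hz)
    (h.hasRatioLimitAt_eval c hc).tendsto (h.phi_div_two_ne hc hz).symm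
  refine Tendsto.congr' ?_ hlim
  have hne := (h.eventually_eval_ne_zero hc).prod_inl (𝓝 z)
  filter_upwards [hne, (tendsto_succ_prod _).eventually hne] with q hq hq₁
  simp only [secondKind_X_sub_C_mul hw, X_sub_C_mul_christoffelTransform hq,
    X_sub_C_mul_christoffelTransform hq₁, secondKind_sub_C_mul]

theorem christoffel [CompleteSpace 𝒜] (h : RatioAsymptotics Λ x τ w K P)
    (hw : w' = w * (x - algebraMap ℂ 𝒜 c)) (hc : c ∈ resolventSet ℂ x) :
    RatioAsymptotics Λ x τ w' (-(phi c / 2) * K) (christoffelTransform P c) := by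
  have hstep : ∀ᶠ n in atTop,
      IsMonicOrthogonal (momentFunctional Λ x w') n (christoffelTransform P c n) ∧
        momentFunctional Λ x w' (christoffelTransform P c n * christoffelTransform P c n) =
          -((P (n + 1)).eval c / (P n).eval c) * momentFunctional Λ x w (P n * P n) := by
    filter_upwards [h.isMonicOrthogonal, (tendsto_add_atTop_nat 1).eventually h.isMonicOrthogonal,
      h.eventually_eval_ne_zero hc] with n hn hn₁ hne
    exact hn₁.christoffel hn (momentFunctional_X_sub_C_mul hw)
      (X_sub_C_mul_christoffelTransform hne)
  refine ⟨h.mem_spectrum, hstep.mono fun n hn => hn.1,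
    fun z hz => h.hasRatioLimitAt_eval_christoffelTransform hc hz,
    fun z hz => h.hasRatioLimitAt_secondKind_christoffelTransform hw hc hz,
    ((h.hasRatioLimitAt_eval c hc).tendsto.neg.mul h.tendsto_apply_mul_self).congr' ?_⟩
  filter_upwards [hstep] with n hn
  rw [hn.2, mul_assoc]

lemma eventually_apply_ne_zero (h : RatioAsymptotics Λ x τ w K P)
    (hw : w = w' * (x - algebraMap ℂ 𝒜 c)) (hc : c ∈ resolventSet ℂ x) :
    ∀ᶠ n in atTop, momentFunctional Λ x w' (P n) ≠ 0 := by
  simp only [momentFunctional_eq_neg_secondKind hw hc]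
  exact ((h.hasRatioLimitAt_secondKind c hc).eventually_apply_ne_zero
    (h.two_mul_phi_inv_ne_zero hc)).mono fun n hn => neg_ne_zero.2 hn

lemma apply_div_apply (hw : w = w' * (x - algebraMap ℂ 𝒜 c)) (hc : c ∈ resolventSet ℂ x) (n : ℕ) :
    momentFunctional Λ x w' (P (n + 1)) / momentFunctional Λ x w' (P n) =
      secondKind Λ x w (P (n + 1)) c / secondKind Λ x w (P n) c := by
  rw [momentFunctional_eq_neg_secondKind hw hc, momentFunctional_eq_neg_secondKind hw hc,
    neg_div_neg_eq]

lemma tendsto_apply_div_apply (h : RatioAsymptotics Λ x τ w K P)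
    (hw : w = w' * (x - algebraMap ℂ 𝒜 c)) (hc : c ∈ resolventSet ℂ x) :
    Tendsto (fun n => momentFunctional Λ x w' (P (n + 1)) / momentFunctional Λ x w' (P n)) atTop
      (𝓝 (2 * phi c)⁻¹) :=
  (h.hasRatioLimitAt_secondKind c hc).tendsto.congr fun n => (apply_div_apply hw hc n).symm

lemma hasRatioLimitAt_eval_geronimusTransform (h : RatioAsymptotics Λ x τ w K P)
    (hw : w = w' * (x - algebraMap ℂ 𝒜 c)) (hc : c ∈ resolventSet ℂ x)
    (hz : z ∈ resolventSet ℂ x) :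
    HasRatioLimitAt (fun n y => (geronimusTransform (momentFunctional Λ x w') P n).eval y)
      (phi z / 2) z := by
  refine HasRatioLimitAt.of_succ ?_
  simp only [geronimusTransform, Nat.add_sub_cancel, eval_sub, eval_C_mul]
  exact (h.hasRatioLimitAt_eval z hz).sub_mul (div_ne_zero (h.phi_ne_zero hz) two_ne_zero)
    (h.tendsto_apply_div_apply hw hc) (h.phi_div_two_ne hz hc)

lemma hasRatioLimitAt_secondKind_geronimusTransform [CompleteSpace 𝒜]
    (h : RatioAsymptotics Λ x τ w K P) (hw : w = w' * (x - algebraMap ℂ 𝒜 c))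
    (hc : c ∈ resolventSet ℂ x) (hz : z ∈ resolventSet ℂ x) :
    HasRatioLimitAt
      (fun n => secondKind Λ x w' (geronimusTransform (momentFunctional Λ x w') P n))
      (2 * phi z)⁻¹ z := by
  refine HasRatioLimitAt.of_succ (HasRatioLimitAt.of_dividedDifference
    (spectrum.isOpen_resolventSet x) h.hasRatioLimitAt_secondKind
    (k := fun y => -(phi y * phi c - 1)⁻¹) (fun y hy => h.two_mul_phi_inv_ne_zero hy)
    (fun n => differentiableOn_secondKind (P n)) (fun n => differentiableOn_secondKind _) hc ?_
    (h.continuousOn_inv_phi_mul_phi_sub_one hc).neg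
    (fun y hy => neg_ne_zero.2 (inv_ne_zero (h.phi_mul_phi_sub_one_ne_zero hy hc)))
    (fun y hy => sub_mul_phi_quotient_inv (h.forall_mem_Icc_ne hy) (h.forall_mem_Icc_ne hc)) hz)
  filter_upwards [h.eventually_apply_ne_zero hw hc] with n hn y hy
  rw [sub_mul_secondKind hw hy, apply_geronimusTransform hn, zero_add, geronimusTransform,
    Nat.add_sub_cancel, secondKind_sub_C_mul, apply_div_apply hw hc]

theorem geronimus [CompleteSpace 𝒜] (h : RatioAsymptotics Λ x τ w K P)
    (hτ : Tendsto (fun n => τ (n + 1) / τ n) atTop (𝓝 2))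
    (hw : w = w' * (x - algebraMap ℂ 𝒜 c)) (hc : c ∈ resolventSet ℂ x) :
    RatioAsymptotics Λ x τ w' (-(2 / phi c) * K)
      (geronimusTransform (momentFunctional Λ x w') P) := by
  set R := geronimusTransform (momentFunctional Λ x w') P
  have hstep : ∀ᶠ n in atTop, IsMonicOrthogonal (momentFunctional Λ x w') (n + 1) (R (n + 1)) ∧
      momentFunctional Λ x w' (R (n + 1) * R (n + 1)) =
        -(momentFunctional Λ x w' (P (n + 1)) / momentFunctional Λ x w' (P n)) *
          momentFunctional Λ x w (P n * P n) := by
    filter_upwards [h.isMonicOrthogonal, (tendsto_add_atTop_nat 1).eventually h.isMonicOrthogonal,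
      h.eventually_apply_ne_zero hw hc] with n hn hn₁ hne
    exact hn₁.geronimus hn (momentFunctional_X_sub_C_mul hw) (apply_geronimusTransform hne)
  have hτ₀ : ∀ᶠ n in atTop, τ n ≠ 0 :=
    (hτ.eventually_ne two_ne_zero).mono fun n hn h₀ => hn (by rw [h₀, div_zero])
  have hlim := ((h.tendsto_apply_div_apply hw hc).neg.mul h.tendsto_apply_mul_self).mul (hτ.pow 2)
  have hK : -(2 * phi c)⁻¹ * K * 2 ^ 2 = -(2 / phi c) * K := by
    have := h.phi_ne_zero hc
    field_simp
  refine ⟨h.mem_spectrum, map_add_atTop_eq_nat 1 ▸ eventually_map.2 (hstep.mono fun n hn => hn.1),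
    fun z hz => h.hasRatioLimitAt_eval_geronimusTransform hw hc hz,
    fun z hz => h.hasRatioLimitAt_secondKind_geronimusTransform hw hc hz,
    (tendsto_add_atTop_iff_nat 1).1 ((hK ▸ hlim).congr' ?_)⟩
  filter_upwards [hstep, hτ₀] with n hn hn₀
  rw [hn.2]
  field_simp

theorem exists_mul_prod [CompleteSpace 𝒜] (h : RatioAsymptotics Λ x τ w K P) (s : Multiset ℂ)
    (hs : ∀ c ∈ s, c ∈ resolventSet ℂ x) :
    ∃ P', RatioAsymptotics Λ x τ (w * (s.map fun c => x - algebraMap ℂ 𝒜 c).prod)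
      ((s.map fun c => -(phi c / 2)).prod * K) P' := by
  induction s using Multiset.induction with
  | empty => exact ⟨P, by simpa using h⟩
  | cons c s ih =>
    obtain ⟨P', h'⟩ := ih fun b hb => hs b (Multiset.mem_cons_of_mem hb)
    refine ⟨christoffelTransform P' c, ?_⟩
    rw [Multiset.map_cons, Multiset.prod_cons, Multiset.map_cons, Multiset.prod_cons, mul_assoc]
    exact h'.christoffel (by ring) (hs c (Multiset.mem_cons_self c s))

theorem exists_of_mul_prod_eq [CompleteSpace 𝒜]
    (hτ : Tendsto (fun n => τ (n + 1) / τ n) atTop (𝓝 2)) (s : Multiset ℂ)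
    (hs : ∀ c ∈ s, c ∈ resolventSet ℂ x)
    (h : RatioAsymptotics Λ x τ (w' * (s.map fun c => x - algebraMap ℂ 𝒜 c).prod) K P) :
    ∃ P', RatioAsymptotics Λ x τ w' ((s.map fun c => -(2 / phi c)).prod * K) P' := by
  induction s using Multiset.induction generalizing K P with
  | empty => exact ⟨P, by simpa using h⟩
  | cons c s ih =>
    have hstep := h.geronimus hτ (w' := w' * (s.map fun c => x - algebraMap ℂ 𝒜 c).prod) (c := c)
      (by rw [Multiset.map_cons, Multiset.prod_cons]; ring) (hs c (Multiset.mem_cons_self c s))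
    obtain ⟨P', h'⟩ := ih (fun b hb => hs b (Multiset.mem_cons_of_mem hb)) hstep
    exact ⟨P', by rwa [Multiset.map_cons, Multiset.prod_cons, mul_assoc, mul_left_comm]⟩

lemma exists_of_mul_prod_eq_mul_prod [CompleteSpace 𝒜] (h : RatioAsymptotics Λ x τ w K P)
    (hτ : Tendsto (fun n => τ (n + 1) / τ n) atTop (𝓝 2)) {s t : Multiset ℂ}
    (hs : ∀ c ∈ s, c ∈ resolventSet ℂ x) (ht : ∀ d ∈ t, d ∈ resolventSet ℂ x)
    (hst : w' * (t.map fun d => x - algebraMap ℂ 𝒜 d).prod =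
      w * (s.map fun c => x - algebraMap ℂ 𝒜 c).prod) :
    ∃ P', RatioAsymptotics Λ x τ w'
      ((t.map fun d => -(2 / phi d)).prod * ((s.map fun c => -(phi c / 2)).prod * K)) P' := by
  obtain ⟨P', h'⟩ := h.exists_mul_prod s hs
  exact exists_of_mul_prod_eq hτ t ht (hst ▸ h')

theorem tendsto_inv_apply_mul_self_div (h : RatioAsymptotics Λ x τ w K P) (hK : K ≠ 0)
    {Q : ℕ → ℂ[X]} (hQ : ∀ n, (Q n).Monic)
    (hQL : ∀ n : ℕ, ∀ p : ℂ[X], p.degree < n → momentFunctional Λ x w (p * Q n) = 0)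
    (hmin : ∀ n : ℕ, ∀ q : ℂ[X], q ≠ 0 →
      (∀ p : ℂ[X], p.degree < n → momentFunctional Λ x w (p * q) = 0) →
      (Q n).degree ≤ q.degree) :
    Tendsto (fun n => (momentFunctional Λ x w (Q n * Q n))⁻¹ / τ n ^ 2) atTop (𝓝 K⁻¹) := by
  have hne : ∀ᶠ n in atTop, momentFunctional Λ x w (P n * P n) ≠ 0 :=
    (h.tendsto_apply_mul_self.eventually_ne hK).mono fun n hn => left_ne_zero_of_mul hn
  refine (h.tendsto_apply_mul_self.inv₀ hK).congr' ?_
  filter_upwards [h.isMonicOrthogonal,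
    eventually_isMonicOrthogonal_of_minimal h.isMonicOrthogonal hne hQ hQL hmin] with n hP hQ'
  rw [hP.apply_mul_self_eq hQ', mul_inv, div_eq_mul_inv]

end RatioAsymptotics

end BanachAlgebra

section NevaiClass

lemma eq_div_of_recurrence_of_tendsto_zero {g : ℕ → ℂ} {z ζ : ℂ} (hζ : ζ + ζ⁻¹ = 2 * z)
    (hζ₁ : 1 ≤ ‖ζ‖) (hrec : ∀ k, g (k + 2) + g k = 2 * z * g (k + 1))
    (hg : Tendsto g atTop (𝓝 0)) : g 1 = g 0 / ζ := by
  have hζ₀ : ζ ≠ 0 := norm_pos_iff.1 (one_pos.trans_le hζ₁)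
  -- the component along the growing solution `k ↦ ζ ^ k`
  have hgrow (k : ℕ) : g (k + 1) - g k / ζ = ζ ^ k * (g 1 - g 0 / ζ) := by
    induction k with
    | zero => simp
    | succ k ih =>
      rw [pow_succ', mul_assoc, ← ih, mul_sub, mul_div_cancel₀ _ hζ₀]
      linear_combination hrec k - g (k + 1) * hζ
  have hlim : Tendsto (fun k => g (k + 1) - g k / ζ) atTop (𝓝 0) := by
    simpa using ((tendsto_add_atTop_iff_nat 1).2 hg).sub (hg.div_const ζ)
  have hle : ‖g 1 - g 0 / ζ‖ ≤ 0 := by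
    refine ge_of_tendsto' (tendsto_zero_iff_norm_tendsto_zero.1 hlim) fun k => ?_
    rw [hgrow k, norm_mul, norm_pow]
    exact le_mul_of_one_le_left (norm_nonneg (g 1 - g 0 / ζ)) (one_le_pow₀ hζ₁)
  exact sub_eq_zero.1 (norm_le_zero_iff.1 hle)

lemma exists_tendsto_of_norm_le {ι : Type*} (𝒰 : Ultrafilter ι) {f : ι → ℂ} {M : ℝ}
    (hf : ∀ i, ‖f i‖ ≤ M) : ∃ y, Tendsto f 𝒰 (𝓝 y) := by
  obtain ⟨y, -, hy⟩ := (isCompact_closedBall (0 : ℂ) M).ultrafilter_le_nhds (𝒰.map f)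
    (tendsto_principal.2 (.of_forall fun i => by simpa using hf i))
  exact ⟨y, hy⟩

variable {𝒜 : Type*} [NormedCommRing 𝒜] [NormedAlgebra ℂ 𝒜]

/-- The entry `(n, m)` of the matrix of multiplication by `f` in the basis `p n` of polynomials,
orthonormal for the bilinear pairing induced by `Λ`. -/
noncomputable def matrixEntry (Λ : 𝒜 →L[ℂ] ℂ) (x : 𝒜) (p : ℕ → ℂ[X]) (f : 𝒜) (n m : ℕ) : ℂ :=
  Λ (aeval x (p n) * aeval x (p m) * f)

/-- Orthonormal polynomials of the Nevai class `M(0,1)` in algebraic form: `x` plays the role of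
the coordinate on the support and `Λ` that of the integral. -/
structure IsNevaiSystem (Λ : 𝒜 →L[ℂ] ℂ) (x : 𝒜) (p : ℕ → ℂ[X]) (a b : ℕ → ℂ) : Prop where
  degree_eq : ∀ n, (p n).degree = n
  apply_mul : ∀ n m, Λ (aeval x (p n) * aeval x (p m)) = if n = m then 1 else 0
  recurrence : ∀ n,
    X * p (n + 1) = a (n + 2) • p (n + 2) + b (n + 1) • p (n + 1) + a (n + 1) • p n
  tendsto_a : Tendsto a atTop (𝓝 (1 / 2))
  tendsto_b : Tendsto b atTop (𝓝 0)
  norm_matrixEntry_le : ∀ f n m, ‖matrixEntry Λ x p f n m‖ ≤ ‖f‖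
  denseRange_aeval : DenseRange (aeval x : ℂ[X] → 𝒜)

variable {Λ : 𝒜 →L[ℂ] ℂ} {x f g : 𝒜} {p : ℕ → ℂ[X]} {a b : ℕ → ℂ} {n m : ℕ} {z ζ : ℂ}

lemma matrixEntry_comm : matrixEntry Λ x p f n m = matrixEntry Λ x p f m n := by
  rw [matrixEntry, mul_comm (aeval x (p n)), matrixEntry]

lemma matrixEntry_sub :
    matrixEntry Λ x p (f - g) n m = matrixEntry Λ x p f n m - matrixEntry Λ x p g n m := by
  rw [matrixEntry, mul_sub, map_sub, matrixEntry, matrixEntry]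

lemma matrixEntry_aeval (q : ℂ[X]) :
    matrixEntry Λ x p (aeval x q) n m = momentFunctional Λ x 1 (p n * q * p m) := by
  rw [matrixEntry, momentFunctional_apply, one_mul, map_mul (aeval x), map_mul (aeval x),
    mul_right_comm]

namespace IsNevaiSystem

lemma leadingCoeff_ne_zero (h : IsNevaiSystem Λ x p a b) (n : ℕ) : (p n).leadingCoeff ≠ 0 := by
  rw [Polynomial.leadingCoeff_ne_zero, ← degree_ne_bot, h.degree_eq]
  exact WithBot.coe_ne_bot

lemma apply_mul_eq_zero (h : IsNevaiSystem Λ x p a b) {q : ℂ[X]} (hq : q.degree < n) :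
    momentFunctional Λ x 1 (q * p n) = 0 := by
  refine apply_mul_eq_zero_of_orthogonal_sequence h.degree_eq
    (fun n => (h.leadingCoeff_ne_zero n).isUnit) (fun m n hmn => ?_) hq
  rw [momentFunctional_apply, one_mul, map_mul (aeval x), h.apply_mul, if_neg hmn.ne]

lemma leadingCoeff_succ (h : IsNevaiSystem Λ x p a b) (n : ℕ) :
    (p (n + 1)).leadingCoeff = a (n + 2) * (p (n + 2)).leadingCoeff := by
  have hlead (k : ℕ) : (p k).leadingCoeff = (p k).coeff k := by
    rw [leadingCoeff, natDegree_eq_of_degree_eq_some (h.degree_eq k)]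
  have hzero {j k : ℕ} (hjk : j < k) : (p j).coeff k = 0 :=
    coeff_eq_zero_of_degree_lt (by rw [h.degree_eq]; exact_mod_cast hjk)
  have hcoeff := congrArg (coeff · (n + 2)) (h.recurrence n)
  simp only [coeff_X_mul, coeff_add, coeff_smul, smul_eq_mul, hzero (Nat.lt_succ_self (n + 1)),
    hzero (Nat.lt_add_of_pos_right two_pos), mul_zero, add_zero] at hcoeff
  rw [hlead, hlead, hcoeff]

lemma tendsto_leadingCoeff_div (h : IsNevaiSystem Λ x p a b) :
    Tendsto (fun n => (p (n + 1)).leadingCoeff / (p n).leadingCoeff) atTop (𝓝 2) := by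
  refine (tendsto_add_atTop_iff_nat 1).1 ?_
  have hlim := ((tendsto_add_atTop_iff_nat 2).2 h.tendsto_a).inv₀ (by norm_num)
  rw [one_div, inv_inv] at hlim
  refine hlim.congr fun n => ?_
  rw [h.leadingCoeff_succ n, div_mul_cancel_right₀ (h.leadingCoeff_ne_zero (n + 2))]

lemma tendsto_inv_leadingCoeff_div (h : IsNevaiSystem Λ x p a b) :
    Tendsto (fun n => (p (n + 1)).leadingCoeff⁻¹ / (p n).leadingCoeff⁻¹) atTop (𝓝 2⁻¹) :=
  (h.tendsto_leadingCoeff_div.inv₀ two_ne_zero).congr fun n => by rw [inv_div_inv, inv_div]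

lemma exists_forall_norm_matrixEntry_le (h : IsNevaiSystem Λ x p a b) (f : 𝒜) {ε : ℝ}
    (hε : 0 < ε) : ∃ K, ∀ n m, n + K ≤ m → ‖matrixEntry Λ x p f n m‖ ≤ ε := by
  obtain ⟨q, hq⟩ := h.denseRange_aeval.exists_dist_lt f hε
  refine ⟨q.natDegree + 1, fun n m hnm => ?_⟩
  have hdeg : (p n * q).degree < m := by
    refine degree_le_natDegree.trans_lt (Nat.cast_lt.2 (natDegree_mul_le.trans_lt ?_))
    rw [natDegree_eq_of_degree_eq_some (h.degree_eq n)]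
    omega
  have hzero : matrixEntry Λ x p (aeval x q) n m = 0 := by
    rw [matrixEntry_aeval, h.apply_mul_eq_zero hdeg]
  calc ‖matrixEntry Λ x p f n m‖ = ‖matrixEntry Λ x p (f - aeval x q) n m‖ := by
        rw [matrixEntry_sub, hzero, sub_zero]
    _ ≤ ‖f - aeval x q‖ := h.norm_matrixEntry_le _ _ _
    _ ≤ ε := by rw [← dist_eq_norm]; exact hq.le

lemma matrixEntry_resolvent_recurrence (h : IsNevaiSystem Λ x p a b) (hz : z ∈ resolventSet ℂ x)
    (n m : ℕ) :
    a (n + 2) * matrixEntry Λ x p (resolvent x z) (n + 2) m +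
        b (n + 1) * matrixEntry Λ x p (resolvent x z) (n + 1) m +
        a (n + 1) * matrixEntry Λ x p (resolvent x z) n m =
      z * matrixEntry Λ x p (resolvent x z) (n + 1) m - if n + 1 = m then 1 else 0 := by
  have hx : x * aeval x (p (n + 1)) = a (n + 2) • aeval x (p (n + 2)) +
      b (n + 1) • aeval x (p (n + 1)) + a (n + 1) • aeval x (p n) := by
    simpa only [map_mul, aeval_X, map_add, map_smul] using congrArg (aeval x) (h.recurrence n)
  have hres : x * resolvent x z = z • resolvent x z - 1 := by
    rw [Algebra.smul_def]
    linear_combination -sub_mul_resolvent hz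
  have hΛ := congrArg (fun y => Λ (y * aeval x (p m) * resolvent x z)) hx
  have hleft : x * aeval x (p (n + 1)) * aeval x (p m) * resolvent x z =
      z • (aeval x (p (n + 1)) * aeval x (p m) * resolvent x z) -
        aeval x (p (n + 1)) * aeval x (p m) := by
    rw [← mul_smul_comm]
    linear_combination (aeval x (p (n + 1)) * aeval x (p m)) * hres
  simp only [hleft, map_sub, add_mul, smul_mul_assoc, map_add, map_smul, smul_eq_mul,
    h.apply_mul] at hΛ
  exact hΛ.symm

lemma tendsto_matrixEntry_resolvent_recurrence (h : IsNevaiSystem Λ x p a b)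
    (hz : z ∈ resolventSet ℂ x) {r : ℕ → ℕ} (hr : Tendsto r atTop atTop) :
    Tendsto (fun n => matrixEntry Λ x p (resolvent x z) (r n + 2) n +
      matrixEntry Λ x p (resolvent x z) (r n) n -
      2 * (z * matrixEntry Λ x p (resolvent x z) (r n + 1) n - if r n + 1 = n then 1 else 0))
      atTop (𝓝 0) := by
  have hzero {c : ℕ → ℂ} (hc : Tendsto c atTop (𝓝 0)) (j k : ℕ) :
      Tendsto (fun n => c (r n + j) * matrixEntry Λ x p (resolvent x z) (r n + k) n) atTop (𝓝 0) :=
    (hc.comp (tendsto_atTop_mono (fun n => Nat.le_add_right (r n) j) hr)).zero_mul_isBoundedUnder_le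
      (isBoundedUnder_of ⟨_, fun n => h.norm_matrixEntry_le _ _ _⟩)
  have ha : Tendsto (fun n => 1 - 2 * a n) atTop (𝓝 0) := by
    simpa using (h.tendsto_a.const_mul 2).const_sub 1
  have hb : Tendsto (fun n => -2 * b n) atTop (𝓝 0) := by simpa using h.tendsto_b.const_mul (-2)
  have hlim := ((hzero ha 2 2).add (hzero ha 1 0)).add (hzero hb 1 1)
  simp only [add_zero] at hlim
  refine hlim.congr fun n => ?_
  linear_combination -2 * h.matrixEntry_resolvent_recurrence hz (r n) n

lemma add_eq_of_tendsto_matrixEntry (h : IsNevaiSystem Λ x p a b) (hz : z ∈ resolventSet ℂ x)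
    {l : Filter ℕ} [NeBot l] (hl : l ≤ atTop) {G : ℤ → ℂ}
    (hG : ∀ k : ℤ,
      Tendsto (fun n : ℕ => matrixEntry Λ x p (resolvent x z) (n + k).toNat n) l (𝓝 (G k)))
    (k : ℤ) : G (k + 1) + G (k - 1) = 2 * (z * G k - if k = 0 then 1 else 0) := by
  have hr : Tendsto (fun n : ℕ => (n + (k - 1)).toNat) atTop atTop :=
    tendsto_atTop.2 fun m => (eventually_ge_atTop (m + (k - 1).natAbs)).mono fun n hn => by omega
  have hlim := ((hG (k + 1)).add (hG (k - 1))).sub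
    ((((hG k).const_mul z).sub_const (if k = 0 then 1 else 0)).const_mul 2)
  refine sub_eq_zero.1 (tendsto_nhds_unique hlim
    (((h.tendsto_matrixEntry_resolvent_recurrence hz hr).congr' ?_).mono_left hl))
  filter_upwards [eventually_gt_atTop k.natAbs] with n hn
  rw [show (n + (k - 1)).toNat + 2 = (n + (k + 1)).toNat by omega,
    show (n + (k - 1)).toNat + 1 = (n + k).toNat by omega,
    if_congr (show (n + k).toNat = n ↔ k = 0 by omega) rfl rfl]

lemma tendsto_zero_of_tendsto_matrixEntry (h : IsNevaiSystem Λ x p a b) {l : Filter ℕ} [NeBot l]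
    (hl : l ≤ atTop) {G : ℤ → ℂ}
    (hG : ∀ k : ℤ, Tendsto (fun n : ℕ => matrixEntry Λ x p f (n + k).toNat n) l (𝓝 (G k)))
    {e : ℕ → ℤ} (he : ∀ k, (e k).natAbs = k) : Tendsto (fun k => G (e k)) atTop (𝓝 0) := by
  refine Metric.nhds_basis_closedBall.tendsto_right_iff.2 fun ε hε => ?_
  obtain ⟨K, hK⟩ := h.exists_forall_norm_matrixEntry_le f hε
  filter_upwards [eventually_ge_atTop K] with k hk
  rw [mem_closedBall_zero_iff]
  refine le_of_tendsto (hG (e k)).norm (hl ?_)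
  filter_upwards [eventually_ge_atTop k] with n hn
  have := he k
  rcases le_total 0 (e k) with hpos | hneg
  · rw [matrixEntry_comm]
    exact hK _ _ (by omega)
  · exact hK _ _ (by omega)

lemma exists_tendsto_matrixEntry_resolvent (h : IsNevaiSystem Λ x p a b)
    (hz : z ∈ resolventSet ℂ x) (hζ : ζ + ζ⁻¹ = 2 * z) (hζ₁ : 1 ≤ ‖ζ‖) {𝒰 : Ultrafilter ℕ}
    (h𝒰 : (𝒰 : Filter ℕ) ≤ atTop) :
    ∃ y, (z - ζ⁻¹) * y = 1 ∧
      Tendsto (fun n => matrixEntry Λ x p (resolvent x z) n n) 𝒰 (𝓝 y) ∧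
      Tendsto (fun n => matrixEntry Λ x p (resolvent x z) (n + 1) n) 𝒰 (𝓝 (y / ζ)) := by
  choose G hG using fun k : ℤ => exists_tendsto_of_norm_le 𝒰 fun n : ℕ =>
    h.norm_matrixEntry_le (resolvent x z) (n + k).toNat n
  have hrec := h.add_eq_of_tendsto_matrixEntry hz h𝒰 hG
  have hright : G 1 = G 0 / ζ :=
    eq_div_of_recurrence_of_tendsto_zero (g := fun k : ℕ => G k) hζ hζ₁ (fun k => by
      have := hrec (k + 1)
      rw [if_neg (by omega), sub_zero, ← mul_assoc, add_sub_cancel_right, add_assoc] at this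
      exact_mod_cast this)
      (h.tendsto_zero_of_tendsto_matrixEntry h𝒰 hG fun k => by omega)
  have hleft : G (-1) = G 0 / ζ :=
    eq_div_of_recurrence_of_tendsto_zero (g := fun k : ℕ => G (-k)) hζ hζ₁ (fun k => by
      have := hrec (-(k + 1))
      rw [if_neg (by omega), sub_zero, ← mul_assoc, add_comm, neg_add, neg_add_cancel_right,
        ← neg_add, ← neg_add', add_assoc] at this
      exact_mod_cast this)
      (h.tendsto_zero_of_tendsto_matrixEntry h𝒰 hG fun k => by omega)
  refine ⟨G 0, ?_, by simpa using hG 0, by simpa [← hright] using hG 1⟩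
  have hmid := hrec 0
  rw [zero_add, zero_sub, hright, hleft, if_pos rfl] at hmid
  linear_combination -hmid / 2

lemma mem_spectrum (h : IsNevaiSystem Λ x p a b) {t : ℝ} (ht : t ∈ Icc (-1 : ℝ) 1) :
    (t : ℂ) ∈ spectrum ℂ x := by
  intro hres
  obtain ⟨ζ, hζ₁, hζ⟩ := exists_norm_eq_one_add_inv_eq ht
  have hle := Ultrafilter.of_le (atTop : Filter ℕ)
  obtain ⟨y, hy, hlim, -⟩ := h.exists_tendsto_matrixEntry_resolvent hres hζ hζ₁.ge hle
  obtain ⟨y', hy', hlim', -⟩ := h.exists_tendsto_matrixEntry_resolvent (ζ := ζ⁻¹) hres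
    (by rwa [inv_inv, add_comm]) (by rw [norm_inv, hζ₁, inv_one]) hle
  obtain rfl := tendsto_nhds_unique hlim hlim'
  rw [inv_inv] at hy'
  exact two_ne_zero (α := ℂ) (by linear_combination -hy - hy' - y * hζ)

lemma forall_mem_Icc_ne (h : IsNevaiSystem Λ x p a b) (hz : z ∈ resolventSet ℂ x) :
    ∀ t ∈ Icc (-1 : ℝ) 1, z ≠ t :=
  fun _ ht hzt => h.mem_spectrum ht (hzt ▸ hz)

lemma phi_ne_zero (h : IsNevaiSystem Λ x p a b) (hz : z ∈ resolventSet ℂ x) : phi z ≠ 0 :=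
  _root_.phi_ne_zero (ne_zero_of_forall_mem_Icc_ne (h.forall_mem_Icc_ne hz))

lemma exists_tendsto_matrixEntry_resolvent_atTop (h : IsNevaiSystem Λ x p a b)
    (hz : z ∈ resolventSet ℂ x) :
    ∃ y ≠ 0, Tendsto (fun n => matrixEntry Λ x p (resolvent x z) n n) atTop (𝓝 y) ∧
      Tendsto (fun n => matrixEntry Λ x p (resolvent x z) (n + 1) n) atTop (𝓝 (y / phi z)) := by
  have hz₀ := ne_zero_of_forall_mem_Icc_ne (h.forall_mem_Icc_ne hz)
  have hlim (𝒰 : Ultrafilter ℕ) (h𝒰 : (𝒰 : Filter ℕ) ≤ atTop) :=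
    h.exists_tendsto_matrixEntry_resolvent hz (phi_add_inv hz₀) (one_le_norm_phi hz₀) h𝒰
  obtain ⟨y, hy, -⟩ := hlim _ (Ultrafilter.of_le atTop)
  have hy' {y' : ℂ} (h' : (z - (phi z)⁻¹) * y' = 1) : y' = y :=
    mul_left_cancel₀ (left_ne_zero_of_mul_eq_one hy) (h'.trans hy.symm)
  refine ⟨y, right_ne_zero_of_mul_eq_one hy, (tendsto_iff_ultrafilter _ _ _).2 fun 𝒰 h𝒰 => ?_,
    (tendsto_iff_ultrafilter _ _ _).2 fun 𝒰 h𝒰 => ?_⟩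
  all_goals
    obtain ⟨y', h', hdiag, hoff⟩ := hlim 𝒰 h𝒰
    obtain rfl := hy' h'
    assumption

lemma eval_mul_secondKind (h : IsNevaiSystem Λ x p a b) (hz : z ∈ resolventSet ℂ x) (hnm : n ≤ m) :
    (p n).eval z * secondKind Λ x 1 (p m) z = matrixEntry Λ x p (resolvent x z) n m := by
  have hdeg : (p n /ₘ (X - C z)).degree < m := by
    refine degree_divByMonic_X_sub_C_lt z ?_
    rw [h.degree_eq]
    exact_mod_cast Nat.lt_succ_of_le hnm
  have hsplit : aeval x (p n) * aeval x (p m) * resolvent x z =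
      (p n).eval z • (1 * aeval x (p m) * resolvent x z) -
        1 * aeval x ((p n /ₘ (X - C z)) * p m) := by
    have hdiv := congrArg (aeval x) (modByMonic_add_div (p n) (X - C z))
    rw [modByMonic_X_sub_C_eq_C_eval, map_add, aeval_C, aeval_X_sub_C_mul] at hdiv
    rw [← hdiv, map_mul, Algebra.smul_def]
    linear_combination -(aeval x (p n /ₘ (X - C z)) * aeval x (p m)) * sub_mul_resolvent hz
  rw [matrixEntry, hsplit, map_sub, map_smul, ← momentFunctional_apply, h.apply_mul_eq_zero hdeg,
    sub_zero, smul_eq_mul, secondKind]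

variable [CompleteSpace 𝒜]

lemma tendsto_matrixEntry_resolvent_prod (h : IsNevaiSystem Λ x p a b) (hz : z ∈ resolventSet ℂ x)
    {r s : ℕ → ℕ} {y : ℂ}
    (hy : Tendsto (fun n => matrixEntry Λ x p (resolvent x z) (r n) (s n)) atTop (𝓝 y)) :
    Tendsto (fun q : ℕ × ℂ => matrixEntry Λ x p (resolvent x q.2) (r q.1) (s q.1))
      (atTop ×ˢ 𝓝 z) (𝓝 y) := by
  have hcont : Tendsto (fun q : ℕ × ℂ => ‖resolvent x q.2 - resolvent x z‖) (atTop ×ˢ 𝓝 z)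
      (𝓝 0) :=
    (tendsto_iff_norm_sub_tendsto_zero.1
      (spectrum.hasDerivAt_resolvent_const_left hz).continuousAt.tendsto).comp tendsto_snd
  have hdiff := squeeze_zero_norm (fun q : ℕ × ℂ =>
    h.norm_matrixEntry_le (resolvent x q.2 - resolvent x z) (r q.1) (s q.1)) hcont
  simpa [matrixEntry_sub] using hdiff.add (hy.comp tendsto_fst)

lemma hasRatioLimitAt_eval (h : IsNevaiSystem Λ x p a b) (hz : z ∈ resolventSet ℂ x) :
    HasRatioLimitAt (fun n y => (p n).eval y) (phi z) z := by
  obtain ⟨y, hy₀, hdiag, hoff⟩ := h.exists_tendsto_matrixEntry_resolvent_atTop hz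
  have hoff₀ : y / phi z ≠ 0 := div_ne_zero hy₀ (h.phi_ne_zero hz)
  have hden := h.tendsto_matrixEntry_resolvent_prod hz (s := id) hoff
  have hlim := (h.tendsto_matrixEntry_resolvent_prod hz (r := (· + 1)) (s := (· + 1))
    (hdiag.comp (tendsto_add_atTop_nat 1))).div hden hoff₀
  rw [div_div_cancel₀ hy₀] at hlim
  have hS : ∀ᶠ q : ℕ × ℂ in atTop ×ˢ 𝓝 z, q.2 ∈ resolventSet ℂ x :=
    tendsto_snd.eventually ((spectrum.isOpen_resolventSet x).mem_nhds hz)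
  refine hlim.congr' ?_
  filter_upwards [hS, hden.eventually_ne hoff₀] with q hq hne
  rw [matrixEntry_comm, id, ← h.eval_mul_secondKind hq (Nat.le_succ _)] at hne
  rw [Pi.div_apply, matrixEntry_comm (n := q.1 + 1) (m := id q.1), id,
    ← h.eval_mul_secondKind hq (Nat.le_succ _), ← h.eval_mul_secondKind hq le_rfl,
    mul_div_mul_right _ _ (right_ne_zero_of_mul hne)]

lemma hasRatioLimitAt_secondKind (h : IsNevaiSystem Λ x p a b) (hz : z ∈ resolventSet ℂ x) :
    HasRatioLimitAt (fun n => secondKind Λ x 1 (p n)) (phi z)⁻¹ z := by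
  obtain ⟨y, hy₀, hdiag, hoff⟩ := h.exists_tendsto_matrixEntry_resolvent_atTop hz
  have hden := h.tendsto_matrixEntry_resolvent_prod hz (r := id) (s := id) hdiag
  have hlim := (h.tendsto_matrixEntry_resolvent_prod hz (s := id) hoff).div hden hy₀
  rw [div_div_cancel_left' hy₀] at hlim
  have hS : ∀ᶠ q : ℕ × ℂ in atTop ×ˢ 𝓝 z, q.2 ∈ resolventSet ℂ x :=
    tendsto_snd.eventually ((spectrum.isOpen_resolventSet x).mem_nhds hz)
  refine hlim.congr' ?_
  filter_upwards [hS, hden.eventually_ne hy₀] with q hq hne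
  rw [id, ← h.eval_mul_secondKind hq le_rfl] at hne
  rw [Pi.div_apply, matrixEntry_comm (n := q.1 + 1) (m := id q.1), id,
    ← h.eval_mul_secondKind hq (Nat.le_succ _), ← h.eval_mul_secondKind hq le_rfl,
    mul_div_mul_left _ _ (left_ne_zero_of_mul hne)]

theorem ratioAsymptotics (h : IsNevaiSystem Λ x p a b) :
    RatioAsymptotics Λ x (fun n => (p n).leadingCoeff) 1 1
      (fun n => C (p n).leadingCoeff⁻¹ * p n) where
  mem_spectrum _ ht := h.mem_spectrum ht
  isMonicOrthogonal := Eventually.of_forall fun n => by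
    have hn := h.leadingCoeff_ne_zero n
    refine ⟨monic_C_mul_of_mul_leadingCoeff_eq_one (inv_mul_cancel₀ hn), ?_, fun q hq => ?_⟩
    · rw [natDegree_C_mul (inv_ne_zero hn), natDegree_eq_of_degree_eq_some (h.degree_eq n)]
    · rw [mul_left_comm, ← smul_eq_C_mul, map_smul, h.apply_mul_eq_zero hq, smul_zero]
  hasRatioLimitAt_eval z hz := by
    have hlim : HasRatioLimitAt (fun n y => (p n).leadingCoeff⁻¹ * (p n).eval y) (2⁻¹ * phi z) z :=
      (h.hasRatioLimitAt_eval hz).mul_seq h.tendsto_inv_leadingCoeff_div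
    simpa only [eval_C_mul, div_eq_inv_mul] using hlim
  hasRatioLimitAt_secondKind z hz := by
    have hlim : HasRatioLimitAt (fun n y => (p n).leadingCoeff⁻¹ * secondKind Λ x 1 (p n) y)
        (2⁻¹ * (phi z)⁻¹) z :=
      (h.hasRatioLimitAt_secondKind hz).mul_seq h.tendsto_inv_leadingCoeff_div
    simpa only [HasRatioLimitAt, secondKind_C_mul, mul_inv] using hlim
  tendsto_apply_mul_self := by
    refine tendsto_const_nhds.congr fun n => ?_
    have hn := h.leadingCoeff_ne_zero n
    rw [momentFunctional_apply, one_mul, mul_mul_mul_comm, ← C_mul, ← smul_eq_C_mul, map_smul,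
      map_smul, map_mul (aeval x), h.apply_mul, if_pos rfl, smul_eq_mul]
    field_simp

end IsNevaiSystem

end NevaiClass

section Support

lemma denseRange_aeval_of_isSelfAdjoint {X : Type*} [TopologicalSpace X] [CompactSpace X]
    {x : C(X, ℂ)} (hx : IsSelfAdjoint x) (hinj : Function.Injective x) :
    DenseRange (aeval x : ℂ[X] → C(X, ℂ)) := by
  have hrange : (StarAlgebra.adjoin ℂ {x}).toSubalgebra = (aeval x : ℂ[X] →ₐ[ℂ] C(X, ℂ)).range := by
    rw [StarAlgebra.adjoin_toSubalgebra, star_singleton, hx.star_eq, union_self,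
      Algebra.adjoin_singleton_eq_range_aeval]
  have hsep : (StarAlgebra.adjoin ℂ {x}).SeparatesPoints := fun s t hst =>
    ⟨x, ⟨x, StarAlgebra.self_mem_adjoin_singleton ℂ x, rfl⟩, hinj.ne hst⟩
  have hclosure := congrArg (SetLike.coe (B := C(X, ℂ)))
    (ContinuousMap.starSubalgebra_topologicalClosure_eq_top_of_separatesPoints _ hsep)
  rw [DenseRange, ← AlgHom.coe_range, ← hrange, dense_iff_closure_eq]
  exact hclosure

variable {μ : Measure ℝ} {l : ℕ → ℝ[X]} {a b : ℕ → ℝ}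

lemma msupp_eq_support : msupp μ = μ.support := by
  ext x
  rw [Measure.mem_support_iff_forall]
  exact forall₂_congr fun _ _ => pos_iff_ne_zero.symm

lemma integral_msupp {E : Type*} [NormedAddCommGroup E] [NormedSpace ℝ E] (g : ℝ → E) :
    ∫ t : msupp μ, g t ∂μ.comap (↑) = ∫ t, g t ∂μ := by
  rw [msupp_eq_support, integral_subtype_comap Measure.isClosed_support.measurableSet,
    Measure.restrict_eq_self_of_ae_mem (s := μ.support) Measure.support_mem_ae]

variable (μ) in
/-- The coordinate function of the support of `μ`, as an element of the Banach algebra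
`C(S_μ, ℂ)`. -/
def supportCoordinate : C(msupp μ, ℂ) := ⟨fun t => (t : ℝ), by fun_prop⟩

lemma supportCoordinate_apply (t : msupp μ) : supportCoordinate μ t = (t : ℝ) := rfl

lemma aeval_supportCoordinate_apply (p : ℂ[X]) (t : msupp μ) :
    aeval (supportCoordinate μ) p t = p.eval ((t : ℝ) : ℂ) := by
  rw [aeval_continuousMap_apply, supportCoordinate_apply]

lemma isSelfAdjoint_supportCoordinate : IsSelfAdjoint (supportCoordinate μ) := by
  ext t
  exact Complex.conj_ofReal t

lemma injective_supportCoordinate : Function.Injective (supportCoordinate μ) :=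
  Complex.ofReal_injective.comp Subtype.val_injective

lemma mem_resolventSet_supportCoordinate {z : ℂ} (hz : z ∉ msuppC μ) :
    z ∈ resolventSet ℂ (supportCoordinate μ) := by
  have hrange : spectrum ℂ (supportCoordinate μ) = msuppC μ := by
    rw [ContinuousMap.spectrum_eq_range, msuppC, image_eq_range]
    rfl
  rwa [← notMem_compl_iff, ← spectrum, hrange]

lemma aeval_map_supportCoordinate_apply (p : ℝ[X]) (t : msupp μ) :
    aeval (supportCoordinate μ) (p.map Complex.ofRealHom) t = (p.eval (t : ℝ) : ℝ) := by
  rw [aeval_supportCoordinate_apply, eval_map]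
  exact eval₂_at_apply Complex.ofRealHom (t : ℝ)

lemma IsOrthonormalPolys.integral_sq_comap (hl : IsOrthonormalPolys μ l) (n : ℕ) :
    ∫ t : msupp μ, (l n).eval (t : ℝ) ^ 2 ∂μ.comap (↑) = 1 := by
  rw [integral_msupp fun t => (l n).eval t ^ 2]
  simpa only [sq, if_true] using hl.orthonormal n n

variable [CompactSpace (msupp μ)] [IsFiniteMeasure μ]

lemma integrable_comap_msupp {E : Type*} [NormedAddCommGroup E] {g : msupp μ → E}
    (hg : Continuous g) : Integrable g (μ.comap (↑)) :=
  hg.integrable_of_hasCompactSupport (HasCompactSupport.of_compactSpace g)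

variable (μ) in
/-- Integration against `μ`, as a bounded functional on `C(S_μ, ℂ)`. -/
noncomputable def supportIntegral : C(msupp μ, ℂ) →L[ℂ] ℂ :=
  L1.integralCLM' ℂ ∘L ContinuousMap.toLp 1 (μ.comap (↑)) ℂ

lemma supportIntegral_apply (f : C(msupp μ, ℂ)) :
    supportIntegral μ f = ∫ t, f t ∂μ.comap (↑) := by
  rw [← integral_congr_ae (ContinuousMap.coeFn_toLp (p := 1) (𝕜 := ℂ) (μ.comap (↑)) f),
    ← L1.integral_eq_integral, L1.integral_eq' ℂ]
  rfl

lemma supportIntegral_eq_integral {f : C(msupp μ, ℂ)} {g : ℝ → ℂ} (hfg : ∀ t, f t = g t) :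
    supportIntegral μ f = ∫ t, g t ∂μ := by
  rw [supportIntegral_apply, ← integral_msupp]
  exact integral_congr_ae (.of_forall hfg)

lemma momentFunctional_supportIntegral {w : C(msupp μ, ℂ)} {r : ℝ → ℂ} (hw : ∀ t, w t = r t)
    (p : ℂ[X]) : momentFunctional (supportIntegral μ) (supportCoordinate μ) w p
      = ∫ t : ℝ, p.eval (t : ℂ) * r t ∂μ := by
  rw [momentFunctional_apply]
  refine supportIntegral_eq_integral fun t => ?_
  rw [ContinuousMap.mul_apply, aeval_supportCoordinate_apply, hw, mul_comm]

lemma IsOrthonormalPolys.supportIntegral_mul (hl : IsOrthonormalPolys μ l) (n m : ℕ) :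
    supportIntegral μ (aeval (supportCoordinate μ) ((l n).map Complex.ofRealHom) *
      aeval (supportCoordinate μ) ((l m).map Complex.ofRealHom)) = if n = m then 1 else 0 := by
  rw [supportIntegral_eq_integral (g := fun t => (((l n).eval t * (l m).eval t : ℝ) : ℂ)),
    integral_complex_ofReal, hl.orthonormal]
  · split_ifs <;> norm_cast
  · intro t
    rw [ContinuousMap.mul_apply, aeval_map_supportCoordinate_apply,
      aeval_map_supportCoordinate_apply, Complex.ofReal_mul]

lemma IsOrthonormalPolys.norm_matrixEntry_le (hl : IsOrthonormalPolys μ l) (f : C(msupp μ, ℂ))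
    (n m : ℕ) :
    ‖matrixEntry (supportIntegral μ) (supportCoordinate μ)
      (fun n => (l n).map Complex.ofRealHom) f n m‖ ≤ ‖f‖ := by
  have hint (k : ℕ) : Integrable (fun t : msupp μ => (l k).eval (t : ℝ) ^ 2) (μ.comap (↑)) :=
    integrable_comap_msupp (by fun_prop)
  have hbound (t : msupp μ) : ‖(((l n).eval (t : ℝ) : ℝ) : ℂ) * ((l m).eval (t : ℝ) : ℝ) * f t‖ ≤
      ((l n).eval (t : ℝ) ^ 2 + (l m).eval (t : ℝ) ^ 2) / 2 * ‖f‖ := by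
    have hamgm := two_mul_le_add_sq |(l n).eval (t : ℝ)| |(l m).eval (t : ℝ)|
    rw [sq_abs, sq_abs] at hamgm
    rw [norm_mul, norm_mul, Complex.norm_real, Complex.norm_real, Real.norm_eq_abs,
      Real.norm_eq_abs]
    gcongr
    · linarith
    · exact f.norm_coe_le_norm t
  rw [matrixEntry, supportIntegral_apply]
  calc _ ≤ ∫ t : msupp μ, ((l n).eval (t : ℝ) ^ 2 + (l m).eval (t : ℝ) ^ 2) / 2 * ‖f‖
        ∂μ.comap (↑) := by
        refine norm_integral_le_of_norm_le ((((hint n).add (hint m)).div_const 2).mul_const ‖f‖)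
          (.of_forall fun t => ?_)
        simp only [ContinuousMap.mul_apply, aeval_map_supportCoordinate_apply]
        exact hbound t
    _ = ‖f‖ := by
        rw [integral_mul_const, integral_div, integral_add (hint n) (hint m),
          hl.integral_sq_comap, hl.integral_sq_comap]
        ring

lemma IsM01.isNevaiSystem (h : IsM01 μ l a b) :
    IsNevaiSystem (supportIntegral μ) (supportCoordinate μ)
      (fun n => (l n).map Complex.ofRealHom) (fun n => a n) (fun n => b n) where
  degree_eq n := by
    rw [degree_map, degree_eq_natDegree (leadingCoeff_ne_zero.1 (h.onp.leadingCoeff_pos n).ne'),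
      h.onp.natDegree_eq]
  apply_mul := h.onp.supportIntegral_mul
  recurrence n := by
    have hrec := congrArg (Polynomial.map Complex.ofRealHom) (h.recurrence n)
    simpa only [Polynomial.map_mul, Polynomial.map_add, map_X, Polynomial.map_smul,
      Complex.ofRealHom_eq_coe] using hrec
  tendsto_a := by
    simpa using h.tendsto_a.ofReal
  tendsto_b := by
    simpa using h.tendsto_b.ofReal
  norm_matrixEntry_le := h.onp.norm_matrixEntry_le
  denseRange_aeval :=
    denseRange_aeval_of_isSelfAdjoint isSelfAdjoint_supportCoordinate injective_supportCoordinate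

end Support

section RationalWeight

/-- The multiset in which each point `c i` is repeated `A i` times. -/
def weightedPoints {h : ℕ} (c : Fin h → ℂ) (A : Fin h → ℕ) : Multiset ℂ :=
  Finset.univ.val.bind fun i => Multiset.replicate (A i) (c i)

variable {h ℓ : ℕ} {c : Fin h → ℂ} {d : Fin ℓ → ℂ} {A : Fin h → ℕ} {B : Fin ℓ → ℕ}

lemma forall_mem_weightedPoints {p : ℂ → Prop} (hp : ∀ i, p (c i)) :
    ∀ z ∈ weightedPoints c A, p z := by
  intro z hz
  obtain ⟨i, -, hi⟩ := Multiset.mem_bind.1 hz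
  exact Multiset.eq_of_mem_replicate hi ▸ hp i

lemma prod_map_weightedPoints {M : Type*} [CommMonoid M] (f : ℂ → M) :
    ((weightedPoints c A).map f).prod = ∏ i, f (c i) ^ A i := by
  rw [weightedPoints, Multiset.map_bind, Multiset.prod_bind]
  simp only [Multiset.map_replicate, Multiset.prod_replicate]
  rfl

lemma continuousOn_ratFn {s : Set ℝ} (hd : ∀ j, ∀ t ∈ s, (t : ℂ) ≠ d j) :
    ContinuousOn (ratFn c d A B) s := by
  refine ContinuousOn.div (by fun_prop) (by fun_prop) fun t ht => ?_
  exact Finset.prod_ne_zero_iff.2 fun j _ => pow_ne_zero _ (sub_ne_zero.2 (hd j t ht))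

lemma inv_prod_mul_prod_eq (u : Fin h → ℂ) (v : Fin ℓ → ℂ) :
    ((∏ j, (-(2 / v j)) ^ B j) * ∏ i, (-(u i / 2)) ^ A i)⁻¹ =
      (-2 : ℂ) ^ ((∑ i, (A i : ℤ)) - ∑ j, (B j : ℤ)) * (∏ j, v j ^ B j) / ∏ i, u i ^ A i := by
  have hu : ∏ i, (-(u i / 2)) ^ A i = (∏ i, u i ^ A i) / (-2 : ℂ) ^ (∑ i, A i) := by
    simp only [← div_neg, div_pow, Finset.prod_div_distrib, Finset.prod_pow_eq_pow_sum]
  have hv : ∏ j, (-(2 / v j)) ^ B j = (-2 : ℂ) ^ (∑ j, B j) / ∏ j, v j ^ B j := by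
    simp only [← neg_div, div_pow, Finset.prod_div_distrib, Finset.prod_pow_eq_pow_sum]
  rw [hu, hv, zpow_sub₀ (by norm_num), ← Nat.cast_sum, ← Nat.cast_sum, zpow_natCast, zpow_natCast,
    mul_inv, inv_div, inv_div]
  ring

variable {μ : Measure ℝ}

lemma exists_continuousMap_eq_ratFn (hd : ∀ j, d j ∉ msuppC μ) :
    ∃ r : C(msupp μ, ℂ), ∀ t, r t = ratFn c d A B t :=
  ⟨⟨_, (continuousOn_ratFn fun j t ht h => hd j ⟨t, ht, h⟩).domRestrict⟩, fun _ => rfl⟩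

lemma mul_prod_map_sub_eq_of_eq_ratFn (hd : ∀ j, d j ∉ msuppC μ) {r : C(msupp μ, ℂ)}
    (hr : ∀ t, r t = ratFn c d A B t) :
    r * ((weightedPoints d B).map fun z => supportCoordinate μ - algebraMap ℂ _ z).prod =
      1 * ((weightedPoints c A).map fun z => supportCoordinate μ - algebraMap ℂ _ z).prod := by
  rw [prod_map_weightedPoints, prod_map_weightedPoints, one_mul]
  ext t
  have hT : ∏ j, (((t : ℝ) : ℂ) - d j) ^ B j ≠ 0 := Finset.prod_ne_zero_iff.2 fun j _ =>
    pow_ne_zero _ (sub_ne_zero.2 fun h => hd j ⟨t, t.2, h⟩)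
  simpa [hr, ratFn, supportCoordinate_apply] using div_mul_cancel₀ _ hT

variable [CompactSpace (msupp μ)] [IsFiniteMeasure μ] {l : ℕ → ℝ[X]} {a b : ℕ → ℝ}

lemma IsM01.phi_ne_zero (hM : IsM01 μ l a b) {z : ℂ} (hz : z ∉ msuppC μ) : phi z ≠ 0 :=
  hM.isNevaiSystem.ratioAsymptotics.phi_ne_zero (mem_resolventSet_supportCoordinate hz)

theorem IsM01.exists_ratioAsymptotics_ratFn (hM : IsM01 μ l a b) (hc : ∀ i, c i ∉ msuppC μ)
    (hd : ∀ j, d j ∉ msuppC μ) {r : C(msupp μ, ℂ)} (hr : ∀ t, r t = ratFn c d A B t) :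
    ∃ P, RatioAsymptotics (supportIntegral μ) (supportCoordinate μ)
      (fun n => ((l n).map Complex.ofRealHom).leadingCoeff) r
      ((∏ j, (-(2 / phi (d j))) ^ B j) * ∏ i, (-(phi (c i) / 2)) ^ A i) P := by
  have hlim := hM.isNevaiSystem.ratioAsymptotics.exists_of_mul_prod_eq_mul_prod
    hM.isNevaiSystem.tendsto_leadingCoeff_div
    (forall_mem_weightedPoints fun i => mem_resolventSet_supportCoordinate (hc i))
    (forall_mem_weightedPoints fun j => mem_resolventSet_supportCoordinate (hd j))
    (mul_prod_map_sub_eq_of_eq_ratFn hd hr)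
  rwa [prod_map_weightedPoints, prod_map_weightedPoints, mul_one] at hlim

end RationalWeight

/-- Theorem 2, formula (3.20). For `μ ∈ M(0,1)`,
`κ_n²/τ_n² → (-2)^{A-B} ∏ φ(d_j)^{B_j} / ∏ φ(c_i)^{A_i}`, where
`κ_n² = (∫ Q_n² r dμ)⁻¹` and `τ_n` is the leading coefficient of `l_n`. -/
theorem leading_coefficient_asymptotics_Q
    (μ : Measure ℝ) [IsFiniteMeasure μ] (l : ℕ → Polynomial ℝ) (a b : ℕ → ℝ)
    (hcompact : IsCompact (msupp μ)) (hinf : (msupp μ).Infinite)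
    (hM01 : IsM01 μ l a b)
    (h ℓ : ℕ) (c : Fin h → ℂ) (d : Fin ℓ → ℂ) (A : Fin h → ℕ) (B : Fin ℓ → ℕ)
    (hA : ∀ i, 0 < A i) (hB : ∀ j, 0 < B j)
    (hc : ∀ i, c i ∉ msuppC μ) (hd : ∀ j, d j ∉ msuppC μ)
    (hcd : ∀ i j, c i ≠ d j)
    (Q : ℕ → Polynomial ℂ) (hQ : ∀ n, IsQPoly μ (ratFn c d A B) n (Q n))
    (κsq : ℕ → ℂ)
    (hκsq : ∀ n, κsq n =
      (∫ x, ((Q n).eval (x : ℂ)) ^ 2 * ratFn c d A B x ∂μ)⁻¹) :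
    Tendsto (fun n => κsq n / (((l n).leadingCoeff : ℂ)) ^ 2) atTop
      (nhds ((-2 : ℂ) ^ ((∑ i, (A i : ℤ)) - ∑ j, (B j : ℤ)) *
        (∏ j, phi (d j) ^ (B j)) / ∏ i, phi (c i) ^ (A i))) := by
  have : CompactSpace (msupp μ) := isCompact_iff_compactSpace.1 hcompact
  obtain ⟨r, hr⟩ := exists_continuousMap_eq_ratFn (c := c) (A := A) (B := B) hd
  obtain ⟨P, hP⟩ := hM01.exists_ratioAsymptotics_ratFn hc hd hr
  have horth (n : ℕ) (q : ℂ[X]) : (∀ p : ℂ[X], p.degree < n →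
      momentFunctional (supportIntegral μ) (supportCoordinate μ) r (p * q) = 0) ↔
      ∀ p : ℂ[X], p.degree < n →
        ∫ x, p.eval (x : ℂ) * q.eval (x : ℂ) * ratFn c d A B x ∂μ = 0 := by
    simp only [momentFunctional_supportIntegral hr, eval_mul]
  have hK : (∏ j, (-(2 / phi (d j))) ^ B j) * ∏ i, (-(phi (c i) / 2)) ^ A i ≠ 0 := by
    simp [Finset.prod_ne_zero_iff, hM01.phi_ne_zero (hc _), hM01.phi_ne_zero (hd _)]
  have hlim := hP.tendsto_inv_apply_mul_self_div hK (fun n => (hQ n).1)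
    (fun n => (horth n _).2 (hQ n).2.1) fun n q hq hpq => (hQ n).2.2 q hq ((horth n q).1 hpq)
  rw [inv_prod_mul_prod_eq] at hlim
  refine hlim.congr fun n => ?_
  rw [hκsq, momentFunctional_supportIntegral hr, leadingCoeff_map]
  simp only [eval_mul, sq, Complex.ofRealHom_eq_coe]
end
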